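/- arXiv:1606.08122 — 3 statements merged into one kernel-verified Lean document; each statement's English description precedes it below -/
import Mathlib

section
/- Let p be a prime, let k ≥ 1, let a_1, a_2, …, a_k ≥ 2 be integers, and let n be a nonnegative integer with n ≤ 1 + 2·∑_{i=1}^k (a_i − 1). Then there exists a spherical latin bitrade whose canonical group is isomorphic to (Z_p)^n ⊕ Z_{p·a_1} ⊕ Z_{p·a_2} ⊕ … ⊕ Z_{p·a_k}. -/
/-- A partial latin square on row set `R`, column set `C` and symbol set `S` (given as
pairwise disjoint types): a finite set of triples such that any two distinct triples agree
in at most one coordinate, and every row, column and symbol occurs in some triple. -/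
def IsPartialLatinSquare {R C S : Type} (P : Finset (R × C × S)) : Prop :=
  (∀ t₁ ∈ P, ∀ t₂ ∈ P, t₁ ≠ t₂ →
      ¬(t₁.1 = t₂.1 ∧ t₁.2.1 = t₂.2.1) ∧
      ¬(t₁.1 = t₂.1 ∧ t₁.2.2 = t₂.2.2) ∧
      ¬(t₁.2.1 = t₂.2.1 ∧ t₁.2.2 = t₂.2.2)) ∧
  (∀ r : R, ∃ t ∈ P, t.1 = r) ∧
  (∀ c : C, ∃ t ∈ P, t.2.1 = c) ∧
  (∀ s : S, ∃ t ∈ P, t.2.2 = s)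

/-- The latin bitrade condition: for each triple `(r,c,s) ∈ W` there are unique
`r' ≠ r`, `c' ≠ c`, `s' ≠ s` with `(r',c,s), (r,c',s), (r,c,s') ∈ B`. -/
def TradeCond {R C S : Type} (W B : Finset (R × C × S)) : Prop :=
  ∀ t ∈ W,
    (∃! r' : R, r' ≠ t.1 ∧ (r', t.2.1, t.2.2) ∈ B) ∧
    (∃! c' : C, c' ≠ t.2.1 ∧ (t.1, c', t.2.2) ∈ B) ∧
    (∃! s' : S, s' ≠ t.2.2 ∧ (t.1, t.2.1, s') ∈ B)

/-- A spherical latin bitrade: a connected latin bitrade `(W,B)` on finite row, column and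
symbol sets `R`, `C`, `S` with `|R| + |C| + |S| = |W| + 2`.  (Connectedness says there is no
latin bitrade `(W',B')` with `W' ⊊ W` and `B' ⊊ B`; for subsets of `W` and `B` the
"agree in at most one coordinate" condition is inherited, and the occurrence condition is
automatic on the sets of rows, columns and symbols actually occupied, so the substantive
conditions on a sub-bitrade are nonemptiness and the two trade conditions.) -/
structure SphericalLatinBitrade where
  R : Type
  C : Type
  S : Type
  instR : Fintype R
  instC : Fintype C
  instS : Fintype S
  W : Finset (R × C × S)
  B : Finset (R × C × S)
  W_nonempty : W.Nonempty
  B_nonempty : B.Nonempty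
  W_pls : IsPartialLatinSquare W
  B_pls : IsPartialLatinSquare B
  tradeWB : TradeCond W B
  tradeBW : TradeCond B W
  connected : ¬ ∃ (W' B' : Finset (R × C × S)), W' ⊂ W ∧ B' ⊂ B ∧
      W'.Nonempty ∧ B'.Nonempty ∧ TradeCond W' B' ∧ TradeCond B' W'
  spherical : @Fintype.card R instR + @Fintype.card C instC + @Fintype.card S instS
      = W.card + 2

/-- The subgroup of relations `r + c + s = 0`, for `(r,c,s) ∈ W`, in the free abelian group
on `R ⊔ C ⊔ S`. -/
def bitradeRelations (T : SphericalLatinBitrade) :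
    AddSubgroup (FreeAbelianGroup (T.R ⊕ T.C ⊕ T.S)) :=
  AddSubgroup.closure
    ((fun t : T.R × T.C × T.S =>
        FreeAbelianGroup.of (Sum.inl t.1) +
        FreeAbelianGroup.of (Sum.inr (Sum.inl t.2.1)) +
        FreeAbelianGroup.of (Sum.inr (Sum.inr t.2.2))) '' (T.W : Set (T.R × T.C × T.S)))

/-- The group `A_W`: the free abelian group on `R ⊔ C ⊔ S` modulo the relations
`r + c + s = 0` for `(r,c,s) ∈ W`. -/
abbrev groupAW (T : SphericalLatinBitrade) : Type :=
  FreeAbelianGroup (T.R ⊕ T.C ⊕ T.S) ⧸ bitradeRelations T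

/-- The canonical group of a spherical latin bitrade: the torsion subgroup of `A_W`. -/
abbrev CanonicalGroup (T : SphericalLatinBitrade) : Type :=
  AddCommGroup.torsion (groupAW T)

/-!
The building blocks are the trades on two columns `c`, `d` with rows `ρ j` and symbols `σ j`,
`j ∈ ℤ/N`: one side consists of the triples `(ρ j, c, σ j)` and `(ρ j, d, σ (j - 1))`, the other
side is obtained by exchanging the columns. Gluing such a strip to a spherical bitrade `(W, B)`
along a single triple gives a spherical bitrade again, and the effect on `A_W` is easy to follow,
because the relations of a strip express its labels through three of them and leave the single
condition `N • (d - c) = 0`, which becomes `N • (d - c) = ± x` if one triple is only required to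
have label sum `x`.

Suppose a triple `w ∈ B` has label sum `p • z` in `A_W`. Gluing a strip of length `p` along `w` and
leaving out one of its relations adds a factor `ℤ` to `A_W`, in which the omitted triple has label
sum `p` after a change of basis. Adding the omitted relation turns this factor into `ℤ/p`. Gluing a
strip of length `a` along the omitted triple instead turns the factor into `ℤ/(p * a)`, and leaves
`2 * a - 1` new triples on the side of `B` whose label sums are divisible by `p`, available for
later steps.
-/

namespace LatinBitrade

open Finset

section Trades

variable {α : Type*}

/-- A cell of a partial latin square together with its symbol: coordinates `0`, `1`, `2` are the
row, the column and the symbol. All three kinds of labels come from the same type, so that the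
symmetry between them is available. -/
abbrev Triple (α : Type*) : Type _ := Fin 3 → α

/-- Two triples agree in all coordinates except possibly the `i`-th. -/
def AgreeOff (i : Fin 3) (t t' : Triple α) : Prop :=
  ∀ j, j ≠ i → t j = t' j

lemma AgreeOff.symm {i : Fin 3} {t t' : Triple α} (h : AgreeOff i t t') : AgreeOff i t' t :=
  fun j hj => (h j hj).symm

lemma AgreeOff.trans {i : Fin 3} {t t' t'' : Triple α} (h : AgreeOff i t t')
    (h' : AgreeOff i t' t'') : AgreeOff i t t'' :=
  fun j hj => (h j hj).trans (h' j hj)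

lemma agreeOff_zero {t t' : Triple α} : AgreeOff 0 t t' ↔ t 1 = t' 1 ∧ t 2 = t' 2 := by
  simp [AgreeOff, Fin.forall_fin_succ]

lemma agreeOff_one {t t' : Triple α} : AgreeOff 1 t t' ↔ t 0 = t' 0 ∧ t 2 = t' 2 := by
  simp [AgreeOff, Fin.forall_fin_succ]

lemma agreeOff_two {t t' : Triple α} : AgreeOff 2 t t' ↔ t 0 = t' 0 ∧ t 1 = t' 1 := by
  simp [AgreeOff, Fin.forall_fin_succ]

/-- Distinct triples agree in at most one coordinate. This is `IsPartialLatinSquare` without the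
condition that every label occurs. -/
def IsPartialSquare (W : Finset (Triple α)) : Prop :=
  ∀ t ∈ W, ∀ t' ∈ W, ∀ i, AgreeOff i t t' → t = t'

/-- Every triple of `W` can be turned into a triple of `B` by changing any one prescribed
coordinate. This is `TradeCond` without uniqueness, which follows when `B` is a partial square. -/
def HasMates (W B : Finset (Triple α)) : Prop :=
  ∀ t ∈ W, ∀ i, ∃ t' ∈ B, AgreeOff i t t'

/-- Connectedness of the bipartite graph on `W ⊔ B` whose edges are the pairs of triples agreeing
in two coordinates, expressed through its locally constant predicates. -/
def IsConnectedPair (W B : Finset (Triple α)) : Prop :=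
  ∀ f g : Triple α → Prop, (∀ t ∈ W, ∀ t' ∈ B, ∀ i, AgreeOff i t t' → (f t ↔ g t')) →
    ∃ q : Prop, (∀ t ∈ W, f t ↔ q) ∧ ∀ t ∈ B, g t ↔ q

lemma IsConnectedPair.symm {W B : Finset (Triple α)} (h : IsConnectedPair W B) :
    IsConnectedPair B W := by
  intro f g hfg
  obtain ⟨q, hg, hf⟩ := h g f fun t ht t' ht' i hi => (hfg t' ht' t ht i hi.symm).symm
  exact ⟨q, hf, hg⟩

/-- The vertex families `V` and `V'` have no labels in common except those of `w`. -/
def MeetOnlyAt (w : Triple α) (V V' : Fin 3 → Finset α) : Prop :=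
  ∀ i, ∀ a ∈ V i, a ∈ V' i → a = w i

lemma MeetOnlyAt.symm {w : Triple α} {V V' : Fin 3 → Finset α} (h : MeetOnlyAt w V V') :
    MeetOnlyAt w V' V :=
  fun i a ha ha' => h i a ha' ha

variable [DecidableEq α]

/-- The set of rows (`i = 0`), columns (`i = 1`) or symbols (`i = 2`) occurring in `W`. -/
def vertices (W : Finset (Triple α)) (i : Fin 3) : Finset α :=
  W.image (· i)

lemma mem_vertices {W : Finset (Triple α)} {i : Fin 3} {a : α} :
    a ∈ vertices W i ↔ ∃ t ∈ W, t i = a :=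
  mem_image

lemma apply_mem_vertices {W : Finset (Triple α)} {t : Triple α} (ht : t ∈ W) (i : Fin 3) :
    t i ∈ vertices W i :=
  mem_image_of_mem _ ht

lemma HasMates.vertices_subset {W B : Finset (Triple α)} (h : HasMates W B) (i : Fin 3) :
    vertices W i ⊆ vertices B i := by
  intro a ha
  obtain ⟨t, ht, rfl⟩ := mem_vertices.1 ha
  obtain ⟨t', ht', hagree⟩ := h t ht (i + 1)
  exact mem_vertices.2 ⟨t', ht', (hagree i (by simp)).symm⟩

lemma IsConnectedPair.of_erase {W B : Finset (Triple α)} {w : Triple α}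
    (h : IsConnectedPair (W.erase w) B) (hw : w ∈ W) (hmates : HasMates W B) :
    IsConnectedPair W B := by
  intro f g hfg
  obtain ⟨q, hf, hg⟩ := h f g fun t ht => hfg t (mem_of_mem_erase ht)
  refine ⟨q, fun t ht => ?_, hg⟩
  obtain rfl | hne := eq_or_ne t w
  · obtain ⟨b, hb, hagree⟩ := hmates t hw 0
    exact (hfg t hw b hb 0 hagree).trans (hg b hb)
  · exact hf t (mem_erase.2 ⟨hne, ht⟩)

/-- A spherical latin bitrade, except that `W` and `B` need not be disjoint. Allowing overlap
makes the trivial pair `({t}, {t})` a starting point for gluing constructions. -/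
structure IsSphericalPair (W B : Finset (Triple α)) : Prop where
  left_square : IsPartialSquare W
  right_square : IsPartialSquare B
  left_mates : HasMates W B
  right_mates : HasMates B W
  connected : IsConnectedPair W B
  euler : ∑ i, #(vertices W i) = #W + 2

lemma IsSphericalPair.vertices_right {W B : Finset (Triple α)} (h : IsSphericalPair W B) :
    vertices B = vertices W :=
  funext fun i => (h.right_mates.vertices_subset i).antisymm (h.left_mates.vertices_subset i)

lemma isSphericalPair_singleton (t : Triple α) : IsSphericalPair {t} {t} where
  left_square := by simp [IsPartialSquare]
  right_square := by simp [IsPartialSquare]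
  left_mates := by simp [HasMates, AgreeOff]
  right_mates := by simp [HasMates, AgreeOff]
  connected f g h := ⟨f t, by simp,
    by simpa using (h t (mem_singleton_self t) t (mem_singleton_self t) 0 fun _ _ => rfl).symm⟩
  euler := by simp [vertices]

/-! ### Gluing along a common triple -/

section Glue

variable {W₁ B₁ W₂ B₂ : Finset (Triple α)} {w : Triple α}

lemma MeetOnlyAt.agreeOff (h : MeetOnlyAt w (vertices W₁) (vertices W₂)) {t t' : Triple α}
    (ht : t ∈ W₁) (ht' : t' ∈ W₂) {i : Fin 3} (hi : AgreeOff i t t') : AgreeOff i t w :=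
  fun j hj => h j (t j) (apply_mem_vertices ht j) (hi j hj ▸ apply_mem_vertices ht' j)

lemma MeetOnlyAt.eq (h : MeetOnlyAt w (vertices W₁) (vertices W₂)) {t : Triple α}
    (ht : t ∈ W₁) (ht' : t ∈ W₂) : t = w :=
  funext fun i => h i (t i) (apply_mem_vertices ht i) (apply_mem_vertices ht' i)

lemma MeetOnlyAt.disjoint_erase (h : MeetOnlyAt w (vertices W₁) (vertices W₂)) :
    Disjoint (W₁.erase w) W₂ :=
  disjoint_left.2 fun _ ht ht' => ne_of_mem_erase ht (h.eq (mem_of_mem_erase ht) ht')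

lemma IsPartialSquare.glue (h₁ : IsPartialSquare W₁) (h₂ : IsPartialSquare W₂) (hw : w ∈ W₁)
    (hmeet : MeetOnlyAt w (vertices W₁) (vertices W₂)) : IsPartialSquare (W₁.erase w ∪ W₂) := by
  have cross : ∀ t ∈ W₁.erase w, ∀ t' ∈ W₂, ∀ i, ¬ AgreeOff i t t' := fun t ht t' ht' i hi =>
    ne_of_mem_erase ht
      (h₁ t (mem_of_mem_erase ht) w hw i (hmeet.agreeOff (mem_of_mem_erase ht) ht' hi))
  intro t ht t' ht' i hi
  rcases mem_union.1 ht with ht | ht <;> rcases mem_union.1 ht' with ht' | ht'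
  · exact h₁ t (mem_of_mem_erase ht) t' (mem_of_mem_erase ht') i hi
  · exact absurd hi (cross t ht t' ht' i)
  · exact absurd hi.symm (cross t' ht' t ht i)
  · exact h₂ t ht t' ht' i hi

lemma HasMates.glue (h₁ : HasMates W₁ B₁) (h₂ : HasMates W₂ B₂) (hw : w ∈ W₁) :
    HasMates (W₁.erase w ∪ W₂) (B₁ ∪ B₂.erase w) := by
  intro t ht i
  rcases mem_union.1 ht with ht | ht
  · obtain ⟨b, hb, hi⟩ := h₁ t (mem_of_mem_erase ht) i
    exact ⟨b, mem_union_left _ hb, hi⟩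
  · obtain ⟨b, hb, hi⟩ := h₂ t ht i
    obtain rfl | hbw := eq_or_ne b w
    · obtain ⟨b', hb', hi'⟩ := h₁ b hw i
      exact ⟨b', mem_union_left _ hb', hi.trans hi'⟩
    · exact ⟨b, mem_union_right _ (mem_erase.2 ⟨hbw, hb⟩), hi⟩

lemma IsConnectedPair.glue (h₁ : IsConnectedPair (W₁.erase w) B₁) (h₂ : IsConnectedPair W₂ B₂)
    (hmates : HasMates W₁ B₁) (hwW : w ∈ W₁) (hwB : w ∈ B₂) :
    IsConnectedPair (W₁.erase w ∪ W₂) (B₁ ∪ B₂.erase w) := by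
  intro f g hfg
  obtain ⟨q, hf₁, hg₁⟩ := h₁ f g fun t ht t' ht' =>
    hfg t (mem_union_left _ ht) t' (mem_union_left _ ht')
  -- The triples of `W₂` next to the erased `w ∈ B₂` are adjacent to the mates of `w ∈ W₁` in `B₁`.
  have near : ∀ t ∈ W₂, ∀ i, AgreeOff i t w → (f t ↔ q) := fun t ht i hi => by
    obtain ⟨b, hb, hwb⟩ := hmates w hwW i
    exact (hfg t (mem_union_right _ ht) b (mem_union_left _ hb) i (hi.trans hwb)).trans (hg₁ b hb)
  obtain ⟨q', hf₂, hg₂⟩ := h₂ f (fun t => if t = w then q else g t) fun t ht t' ht' i hi => by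
    obtain rfl | hne := eq_or_ne t' w
    · simpa using near t ht i hi
    · simpa [hne] using
        hfg t (mem_union_right _ ht) t' (mem_union_right _ (mem_erase.2 ⟨hne, ht'⟩)) i hi
  have hq : q ↔ q' := by simpa using hg₂ w hwB
  refine ⟨q, fun t ht => ?_, fun t ht => ?_⟩ <;> rcases mem_union.1 ht with ht | ht
  · exact hf₁ t ht
  · exact (hf₂ t ht).trans hq.symm
  · exact hg₁ t ht
  · simpa [ne_of_mem_erase ht, hq] using hg₂ t (mem_of_mem_erase ht)

lemma vertices_glue (hw : w ∈ W₁) (hw' : ∀ i, w i ∈ vertices W₂ i) (i : Fin 3) :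
    vertices (W₁.erase w ∪ W₂) i = vertices W₁ i ∪ vertices W₂ i := by
  rw [vertices, image_union]
  refine (union_subset_union_left (image_subset_image (erase_subset _ _))).antisymm
    (union_subset (fun a ha => ?_) subset_union_right)
  obtain ⟨t, ht, rfl⟩ := mem_vertices.1 ha
  obtain rfl | hne := eq_or_ne t w
  · exact mem_union_right _ (hw' i)
  · exact mem_union_left _ (mem_image_of_mem _ (mem_erase.2 ⟨hne, ht⟩))

namespace IsSphericalPair

lemma vertices_glue (h₂ : IsSphericalPair W₂ B₂) (hwW : w ∈ W₁) (hwB : w ∈ B₂) (i : Fin 3) :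
    vertices (W₁.erase w ∪ W₂) i = vertices W₁ i ∪ vertices W₂ i :=
  LatinBitrade.vertices_glue hwW (fun i => h₂.vertices_right ▸ apply_mem_vertices hwB i) i

lemma euler_glue (h₁ : IsSphericalPair W₁ B₁) (h₂ : IsSphericalPair W₂ B₂)
    (hwW : w ∈ W₁) (hwB : w ∈ B₂) (hmeet : MeetOnlyAt w (vertices W₁) (vertices W₂)) :
    ∑ i, #(vertices (W₁.erase w ∪ W₂) i) = #(W₁.erase w ∪ W₂) + 2 := by
  have inter : ∀ i, vertices W₁ i ∩ vertices W₂ i = {w i} := fun i =>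
    eq_singleton_iff_unique_mem.2
      ⟨mem_inter.2 ⟨apply_mem_vertices hwW i, h₂.vertices_right ▸ apply_mem_vertices hwB i⟩,
        fun a ha => hmeet i a (mem_inter.1 ha).1 (mem_inter.1 ha).2⟩
  have card_vertices : ∀ i, #(vertices (W₁.erase w ∪ W₂) i) + 1 =
      #(vertices W₁ i) + #(vertices W₂ i) := fun i => by
    rw [h₂.vertices_glue hwW hwB, ← card_union_add_card_inter, inter, card_singleton]
  have total := Finset.sum_congr rfl fun i (_ : i ∈ univ) => card_vertices i
  have card_W₁ := card_erase_add_one hwW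
  rw [sum_add_distrib, sum_add_distrib, h₁.euler, h₂.euler] at total
  simp only [sum_const, card_univ, Fintype.card_fin, smul_eq_mul, mul_one] at total
  rw [card_union_of_disjoint hmeet.disjoint_erase]
  omega

lemma glue (h₁ : IsSphericalPair W₁ B₁) (h₂ : IsSphericalPair W₂ B₂) (hwW : w ∈ W₁) (hwB : w ∈ B₂)
    (hmeet : MeetOnlyAt w (vertices W₁) (vertices W₂))
    (hconn : IsConnectedPair (W₁.erase w) B₁ ∨ IsConnectedPair W₂ (B₂.erase w)) :
    IsSphericalPair (W₁.erase w ∪ W₂) (B₁ ∪ B₂.erase w) where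
  left_square := h₁.left_square.glue h₂.left_square hwW hmeet
  right_square := by
    rw [union_comm]
    refine h₂.right_square.glue h₁.right_square hwB ?_
    rw [h₁.vertices_right, h₂.vertices_right]
    exact hmeet.symm
  left_mates := h₁.left_mates.glue h₂.left_mates hwW
  right_mates := by
    rw [union_comm, union_comm (W₁.erase w)]
    exact h₂.right_mates.glue h₁.right_mates hwB
  connected := by
    rcases hconn with hconn | hconn
    · exact hconn.glue h₂.connected h₁.left_mates hwW hwB
    · have := hconn.symm.glue h₁.connected.symm h₂.right_mates hwB hwW
      rw [union_comm, union_comm W₂] at this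
      exact this.symm
  euler := h₁.euler_glue h₂ hwW hwB hmeet

lemma disjoint_glue (h₁ : IsSphericalPair W₁ B₁) (h₂ : IsSphericalPair W₂ B₂)
    (hmeet : MeetOnlyAt w (vertices W₁) (vertices W₂)) (hd₁ : Disjoint (W₁.erase w) B₁)
    (hd₂ : Disjoint W₂ (B₂.erase w)) (hw : w ∉ B₁ ∨ w ∉ W₂) :
    Disjoint (W₁.erase w ∪ W₂) (B₁ ∪ B₂.erase w) := by
  have hWB : Disjoint (W₁.erase w) (B₂.erase w) :=
    (h₂.vertices_right ▸ hmeet : MeetOnlyAt w (vertices W₁) (vertices B₂)).disjoint_erase.mono_right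
      (erase_subset _ _)
  have hBW : Disjoint W₂ B₁ := disjoint_left.2 fun t ht ht' => by
    obtain rfl := (h₁.vertices_right ▸ hmeet : MeetOnlyAt w (vertices B₁) (vertices W₂)).eq ht' ht
    exact hw.elim (· ht') (· ht)
  simp only [disjoint_union_left, disjoint_union_right]
  exact ⟨⟨hd₁, hBW⟩, hWB, hd₂⟩

end IsSphericalPair

end Glue

end Trades

/-! ### Strips -/

section Strip

variable {α : Type*} [DecidableEq α] {N : ℕ} [NeZero N] {ρ σ : ZMod N → α} {c d : α}

/-- The cyclic `N × 2` latin rectangle with rows `ρ`, columns `c`, `d` and symbols `σ`, column `d`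
being column `c` shifted by one. With its mate `strip ρ σ d c` it forms a spherical bitrade. -/
def strip (ρ σ : ZMod N → α) (c d : α) : Finset (Triple α) :=
  univ.image (fun j => ![ρ j, c, σ j]) ∪ univ.image fun j => ![ρ j, d, σ (j - 1)]

lemma mem_strip {t : Triple α} :
    t ∈ strip ρ σ c d ↔ (∃ j, ![ρ j, c, σ j] = t) ∨ ∃ j, ![ρ j, d, σ (j - 1)] = t := by
  simp [strip]

lemma straight_mem_strip (j : ZMod N) : ![ρ j, c, σ j] ∈ strip ρ σ c d :=
  mem_strip.2 (Or.inl ⟨j, rfl⟩)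

lemma shifted_mem_strip (j : ZMod N) : ![ρ j, d, σ (j - 1)] ∈ strip ρ σ c d :=
  mem_strip.2 (Or.inr ⟨j, rfl⟩)

lemma forall_mem_strip {P : Triple α → Prop} : (∀ t ∈ strip ρ σ c d, P t) ↔
    ∀ j, P ![ρ j, c, σ j] ∧ P ![ρ j, d, σ (j - 1)] := by
  simp [strip, or_imp, forall_and]

lemma vertices_strip : vertices (strip ρ σ c d) = ![univ.image ρ, {c, d}, univ.image σ] := by
  have exists_shift : ∀ a, (∃ j, σ (j - 1) = a) ↔ ∃ j, σ j = a := fun a =>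
    ((Equiv.subRight (1 : ZMod N)).surjective.exists (p := fun j => σ j = a)).symm
  ext i a
  fin_cases i
  · simp [mem_vertices, strip, or_and_right, exists_or]
  · simp [mem_vertices, strip, or_and_right, exists_or, eq_comm]
  · simp [mem_vertices, strip, or_and_right, exists_or, exists_shift]

lemma vertices_strip_comm : vertices (strip ρ σ c d) = vertices (strip ρ σ d c) := by
  rw [vertices_strip, vertices_strip, pair_comm]

lemma forall_mem_vertices_strip {P : Fin 3 → α → Prop} :
    (∀ i, ∀ a ∈ vertices (strip ρ σ c d) i, P i a) ↔
      (∀ j, P 0 (ρ j)) ∧ (P 1 c ∧ P 1 d) ∧ ∀ j, P 2 (σ j) := by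
  simp [vertices_strip, Fin.forall_fin_succ]

lemma hasMates_strip : HasMates (strip ρ σ c d) (strip ρ σ d c) := by
  intro t ht i
  obtain ⟨j, rfl⟩ | ⟨j, rfl⟩ := mem_strip.1 ht <;> fin_cases i
  · exact ⟨_, shifted_mem_strip (j + 1), agreeOff_zero.2 (by simp)⟩
  · exact ⟨_, straight_mem_strip j, agreeOff_one.2 (by simp)⟩
  · exact ⟨_, shifted_mem_strip j, agreeOff_two.2 (by simp)⟩
  · exact ⟨_, straight_mem_strip (j - 1), agreeOff_zero.2 (by simp)⟩
  · exact ⟨_, shifted_mem_strip j, agreeOff_one.2 (by simp)⟩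
  · exact ⟨_, straight_mem_strip j, agreeOff_two.2 (by simp)⟩

-- Running through the rows backwards: `(j, d, j - 1)` has mates `(j, d, j)`, `(j, c, j - 1)` and
-- `(j - 1, d, j - 1)`, so all of these are connected already without `(0, c, 0)`.
lemma isConnectedPair_strip_erase (hcd : c ≠ d) :
    IsConnectedPair ((strip ρ σ c d).erase ![ρ 0, c, σ 0]) (strip ρ σ d c) := by
  intro f g hfg
  have shifted_mem : ∀ j, ![ρ j, d, σ (j - 1)] ∈ (strip ρ σ c d).erase ![ρ 0, c, σ 0] := fun j =>
    mem_erase.2 ⟨fun h => hcd (congrFun h 1).symm, shifted_mem_strip j⟩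
  have f_shifted : ∀ j, f ![ρ j, d, σ (j - 1)] ↔ g ![ρ j, d, σ j] := fun j =>
    hfg _ (shifted_mem j) _ (straight_mem_strip j) 2 (agreeOff_two.2 (by simp))
  have g_shifted : ∀ j, f ![ρ j, d, σ (j - 1)] ↔ g ![ρ j, c, σ (j - 1)] := fun j =>
    hfg _ (shifted_mem j) _ (shifted_mem_strip j) 1 (agreeOff_one.2 (by simp))
  have g_pred : ∀ j, f ![ρ j, d, σ (j - 1)] ↔ g ![ρ (j - 1), d, σ (j - 1)] := fun j =>
    hfg _ (shifted_mem j) _ (straight_mem_strip (j - 1)) 0 (agreeOff_zero.2 (by simp))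
  have g_natCast : ∀ n : ℕ, g ![ρ n, d, σ n] ↔ g ![ρ 0, d, σ 0] := fun n => by
    induction n with
    | zero => rw [Nat.cast_zero]
    | succ n ih =>
      rw [← ih, ← f_shifted, g_pred, Nat.cast_succ, add_sub_cancel_right]
  have g_straight : ∀ j, g ![ρ j, d, σ j] ↔ g ![ρ 0, d, σ 0] := fun j => by
    simpa only [ZMod.natCast_zmod_val] using g_natCast j.val
  refine ⟨g ![ρ 0, d, σ 0], fun t ht => ?_, forall_mem_strip.2 fun j =>
    ⟨g_straight j, (g_shifted j).symm.trans ((f_shifted j).trans (g_straight j))⟩⟩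
  obtain ⟨j, rfl⟩ | ⟨j, rfl⟩ := mem_strip.1 (mem_of_mem_erase ht)
  · exact (hfg _ ht _ (straight_mem_strip j) 1 (agreeOff_one.2 (by simp))).trans (g_straight j)
  · exact (f_shifted j).trans (g_straight j)

/-- The triples of a strip outside its row `0`. -/
def openStrip (ρ σ : ZMod N → α) (c d : α) : Finset (Triple α) :=
  {t ∈ strip ρ σ c d | t 0 ≠ ρ 0}

lemma forall_mem_openStrip (hρ : ρ.Injective) {P : Triple α → Prop} :
    (∀ t ∈ openStrip ρ σ c d, P t) ↔
      ∀ j ≠ 0, P ![ρ j, c, σ j] ∧ P ![ρ j, d, σ (j - 1)] := by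
  simp only [openStrip, mem_filter, and_imp, forall_mem_strip, Matrix.cons_val_zero, ne_eq,
    hρ.eq_iff, ← imp_and]

lemma strip_erase_erase (hρ : ρ.Injective) :
    ((strip ρ σ c d).erase ![ρ 0, c, σ 0]).erase ![ρ 0, d, σ (-1)] = openStrip ρ σ c d := by
  ext t
  simp only [mem_erase, openStrip, mem_filter]
  refine ⟨fun ⟨hd, hc, ht⟩ => ⟨ht, fun h0 => ?_⟩, fun ⟨ht, h0⟩ =>
    ⟨fun h => h0 (congrFun h 0), fun h => h0 (congrFun h 0), ht⟩⟩
  obtain ⟨j, rfl⟩ | ⟨j, rfl⟩ := mem_strip.1 ht <;> obtain rfl := hρ h0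
  · exact hc rfl
  · exact hd (by rw [zero_sub])

variable (hρ : ρ.Injective) (hσ : σ.Injective) (hcd : c ≠ d)
include hρ hcd

lemma card_strip : #(strip ρ σ c d) = 2 * N := by
  have row_injective : ∀ (e : α) (τ : ZMod N → α),
      (fun j => ![ρ j, e, τ j] : ZMod N → Triple α).Injective :=
    fun e τ j j' h => hρ (congrFun h 0)
  rw [strip, card_union_of_disjoint, card_image_of_injective _ (row_injective c σ),
    card_image_of_injective _ (row_injective d fun j => σ (j - 1)), card_univ, ZMod.card, two_mul]
  refine disjoint_left.2 fun t ht ht' => ?_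
  obtain ⟨j, -, rfl⟩ := mem_image.1 ht
  obtain ⟨j', -, h⟩ := mem_image.1 ht'
  exact hcd (congrFun h 1).symm

include hσ

lemma euler_strip : ∑ i, #(vertices (strip ρ σ c d) i) = #(strip ρ σ c d) + 2 := by
  rw [card_strip hρ hcd, vertices_strip, Fin.sum_univ_three]
  simp only [Matrix.cons_val, card_image_of_injective _ hρ, card_image_of_injective _ hσ,
    card_pair hcd, card_univ, ZMod.card]
  ring

variable [Nontrivial (ZMod N)]

lemma isPartialSquare_strip : IsPartialSquare (strip ρ σ c d) := by
  have mixed : ∀ i j j', ¬ AgreeOff i ![ρ j, c, σ j] ![ρ j', d, σ (j' - 1)] := fun i j j' hi => by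
    fin_cases i
    · exact hcd (agreeOff_zero.1 hi).1
    · obtain ⟨h, h'⟩ := agreeOff_one.1 hi
      obtain rfl := hρ h
      exact one_ne_zero (sub_eq_self.1 (hσ h').symm)
    · exact hcd (agreeOff_two.1 hi).2
  intro t ht t' ht' i hi
  obtain ⟨j, rfl⟩ | ⟨j, rfl⟩ := mem_strip.1 ht <;>
    obtain ⟨j', rfl⟩ | ⟨j', rfl⟩ := mem_strip.1 ht'
  · obtain rfl : j = j' := by
      fin_cases i <;>
        simpa [agreeOff_zero, agreeOff_one, agreeOff_two, hρ.eq_iff, hσ.eq_iff] using hi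
    rfl
  · exact absurd hi (mixed i j j')
  · exact absurd hi.symm (mixed i j' j)
  · obtain rfl : j = j' := by
      fin_cases i <;>
        simpa [agreeOff_zero, agreeOff_one, agreeOff_two, hρ.eq_iff, hσ.eq_iff] using hi
    rfl

lemma disjoint_strip : Disjoint (strip ρ σ c d) (strip ρ σ d c) := by
  have apply_ne : ∀ j, σ j ≠ σ (j - 1) := fun j h => one_ne_zero (sub_eq_self.1 (hσ h).symm)
  refine disjoint_left.2 fun t ht ht' => ?_
  obtain ⟨j, rfl⟩ | ⟨j, rfl⟩ := mem_strip.1 ht <;>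
    obtain ⟨j', h⟩ | ⟨j', h⟩ := mem_strip.1 ht'
  · exact hcd (congrFun h 1).symm
  · obtain rfl := hρ (congrFun h 0)
    exact apply_ne _ (congrFun h 2).symm
  · obtain rfl := hρ (congrFun h 0)
    exact apply_ne _ (congrFun h 2)
  · exact hcd (congrFun h 1)

lemma isSphericalPair_strip : IsSphericalPair (strip ρ σ c d) (strip ρ σ d c) where
  left_square := isPartialSquare_strip hρ hσ hcd
  right_square := isPartialSquare_strip hρ hσ hcd.symm
  left_mates := hasMates_strip
  right_mates := hasMates_strip
  connected := (isConnectedPair_strip_erase hcd).of_erase (straight_mem_strip 0) hasMates_strip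
  euler := euler_strip hρ hσ hcd

end Strip

section Fresh

variable {N : ℕ} {M x : ℕ}

/-- The label `x` at `0` and a label above `M` elsewhere. -/
def fresh (M x : ℕ) (j : ZMod N) : ℕ :=
  if j = 0 then x else M + j.val

lemma fresh_zero : fresh M x (0 : ZMod N) = x :=
  if_pos rfl

lemma fresh_of_ne {j : ZMod N} (hj : j ≠ 0) : fresh M x j = M + j.val :=
  if_neg hj

lemma fresh_eq_of_lt {j : ZMod N} (h : fresh M x j < M) : fresh M x j = x := by
  by_cases hj : j = 0
  · rw [hj, fresh_zero]
  · rw [fresh_of_ne hj] at h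
    omega

variable {w : Triple ℕ}

lemma fresh_triple (w : Triple ℕ) :
    ![fresh M (w 0) (0 : ZMod N), w 1, fresh M (w 2) (0 : ZMod N)] = w := by
  ext i
  fin_cases i <;> simp [fresh_zero]

variable [NeZero N]

lemma fresh_injective (hx : x < M) : (fresh M x : ZMod N → ℕ).Injective := by
  intro i j h
  by_cases hi : i = 0 <;> by_cases hj : j = 0
  · rw [hi, hj]
  · rw [hi, fresh_zero, fresh_of_ne hj] at h
    omega
  · rw [hj, fresh_zero, fresh_of_ne hi] at h
    omega
  · rw [fresh_of_ne hi, fresh_of_ne hj] at h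
    exact ZMod.val_injective N (Nat.add_left_cancel h)

/-- The strip of length `N` with columns `c` and `d` whose rows and symbols are those of `w` and
fresh ones above `M`. -/
abbrev freshStrip (N : ℕ) [NeZero N] (M : ℕ) (w : Triple ℕ) (c d : ℕ) : Finset (Triple ℕ) :=
  strip (N := N) (fresh M (w 0)) (fresh M (w 2)) c d

lemma mem_freshStrip (d : ℕ) : w ∈ freshStrip N M w (w 1) d := by
  have := straight_mem_strip (ρ := fresh M (w 0)) (σ := fresh M (w 2)) (c := w 1) (d := d)
    (0 : ZMod N)
  rwa [fresh_triple] at this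

/-- The triple of `freshStrip N M w c M` other than `w` whose row is that of `w`. Removing this
relation from a strip frees one generator. -/
def seam (N M : ℕ) (w : Triple ℕ) : Triple ℕ :=
  ![w 0, M, fresh M (w 2) (-1 : ZMod N)]

lemma seam_mem_freshStrip_erase (hw : w 1 < M) :
    seam N M w ∈ (freshStrip N M w (w 1) M).erase w := by
  have := shifted_mem_strip (ρ := fresh M (w 0)) (σ := fresh M (w 2)) (c := w 1) (d := M)
    (0 : ZMod N)
  rw [fresh_zero, zero_sub] at this
  exact mem_erase.2 ⟨fun h => hw.ne (congrFun h 1).symm, this⟩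

lemma freshStrip_erase_erase_seam (hw : w 0 < M) :
    ((freshStrip N M w (w 1) M).erase w).erase (seam N M w) =
      openStrip (N := N) (fresh M (w 0)) (fresh M (w 2)) (w 1) M := by
  have := strip_erase_erase (c := w 1) (d := M) (σ := fresh M (w 2)) (fresh_injective (N := N) hw)
  rwa [fresh_triple, fresh_zero] at this

lemma meetOnlyAt_freshStrip {V : Fin 3 → Finset ℕ} (hV : ∀ i, ∀ a ∈ V i, a < M) :
    MeetOnlyAt w (vertices (freshStrip N M w (w 1) M)) V := by
  have eq_of_lt : ∀ i, ∀ a ∈ vertices (freshStrip N M w (w 1) M) i, a < M → a = w i :=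
    (forall_mem_vertices_strip (P := fun i a => a < M → a = w i)).2
      ⟨fun _ => fresh_eq_of_lt, ⟨fun _ => rfl, fun h => absurd h (lt_irrefl M)⟩,
        fun _ => fresh_eq_of_lt⟩
  exact fun i a ha ha' => eq_of_lt i a ha (hV i a ha')

lemma isSphericalPair_freshStrip [Nontrivial (ZMod N)] (hw : ∀ i, w i < M) {c d : ℕ}
    (hcd : c ≠ d) :
    IsSphericalPair (freshStrip N M w c d) (freshStrip N M w d c) :=
  isSphericalPair_strip (fresh_injective (hw 0)) (fresh_injective (hw 2)) hcd

lemma disjoint_freshStrip [Nontrivial (ZMod N)] (hw : ∀ i, w i < M) {c d : ℕ} (hcd : c ≠ d) :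
    Disjoint (freshStrip N M w c d) (freshStrip N M w d c) :=
  disjoint_strip (fresh_injective (hw 0)) (fresh_injective (hw 2)) hcd

lemma isConnectedPair_freshStrip_erase (hw : w 1 < M) :
    IsConnectedPair ((freshStrip N M w (w 1) M).erase w) (freshStrip N M w M (w 1)) := by
  have := isConnectedPair_strip_erase (N := N) (ρ := fresh M (w 0)) (σ := fresh M (w 2)) hw.ne
  rwa [fresh_triple] at this

namespace IsSphericalPair

variable [Nontrivial (ZMod N)] {W B : Finset (Triple ℕ)}

lemma glue_freshStrip_right (h : IsSphericalPair W B) (hdisj : Disjoint W (B.erase w)) (hw : w ∈ B)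
    (hM : ∀ i, ∀ a ∈ vertices W i, a < M) :
    IsSphericalPair ((freshStrip N M w (w 1) M).erase w ∪ W)
        (freshStrip N M w M (w 1) ∪ B.erase w) ∧
      Disjoint ((freshStrip N M w (w 1) M).erase w ∪ W)
        (freshStrip N M w M (w 1) ∪ B.erase w) ∧
      vertices ((freshStrip N M w (w 1) M).erase w ∪ W) =
        fun i => vertices W i ∪ vertices (freshStrip N M w (w 1) M) i := by
  have hwM : ∀ i, w i < M := fun i => hM i _ (h.vertices_right ▸ apply_mem_vertices hw i)
  have hwS : w ∈ freshStrip N M w (w 1) M := mem_freshStrip M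
  have hmeet := meetOnlyAt_freshStrip (N := N) (w := w) hM
  have hstrip := isSphericalPair_freshStrip (N := N) hwM (hwM 1).ne
  have hdisj' := disjoint_freshStrip (N := N) hwM (hwM 1).ne
  exact ⟨hstrip.glue h hwS hw hmeet (Or.inl (isConnectedPair_freshStrip_erase (hwM 1))),
    hstrip.disjoint_glue h hmeet (hdisj'.mono_left (erase_subset _ _)) hdisj
      (Or.inl (disjoint_left.1 hdisj' hwS)),
    funext fun i => (h.vertices_glue hwS hw i).trans (union_comm _ _)⟩

lemma glue_freshStrip_left (h : IsSphericalPair W B) (hdisj : Disjoint W B) (hw : w ∈ W)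
    (hM : ∀ i, ∀ a ∈ vertices W i, a < M) :
    IsSphericalPair (W.erase w ∪ freshStrip N M w M (w 1))
        (B ∪ (freshStrip N M w (w 1) M).erase w) ∧
      Disjoint (W.erase w ∪ freshStrip N M w M (w 1))
        (B ∪ (freshStrip N M w (w 1) M).erase w) ∧
      vertices (W.erase w ∪ freshStrip N M w M (w 1)) =
        fun i => vertices W i ∪ vertices (freshStrip N M w (w 1) M) i := by
  have hwM : ∀ i, w i < M := fun i => hM i _ (apply_mem_vertices hw i)
  have hwS : w ∈ freshStrip N M w (w 1) M := mem_freshStrip M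
  have hmeet : MeetOnlyAt w (vertices W) (vertices (freshStrip N M w M (w 1))) := by
    rw [vertices_strip_comm]
    exact (meetOnlyAt_freshStrip hM).symm
  have hstrip := isSphericalPair_freshStrip (N := N) hwM (hwM 1).ne'
  have hdisj' := disjoint_freshStrip (N := N) hwM (hwM 1).ne'
  refine ⟨h.glue hstrip hw hwS hmeet (Or.inr (isConnectedPair_freshStrip_erase (hwM 1)).symm),
    h.disjoint_glue hstrip hmeet (hdisj.mono_left (erase_subset _ _))
      (hdisj'.mono_right (erase_subset _ _)) (Or.inl (disjoint_left.1 hdisj hw)), ?_⟩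
  rw [funext (hstrip.vertices_glue hw hwS), vertices_strip_comm]

end IsSphericalPair

end Fresh

/-! ### Universal labellings -/

section Universal

universe u

variable {α : Type*} {U U' H : Type u} [AddCommGroup U] [AddCommGroup U'] [AddCommGroup H]

/-- The sum of the labels of a row, a column and a symbol under a labelling `φ`. -/
def tripleSum (φ : Fin 3 → α → U) (t : Triple α) : U :=
  ∑ i, φ i (t i)

lemma tripleSum_mk (φ : Fin 3 → α → U) (r c s : α) :
    tripleSum φ ![r, c, s] = φ 0 r + φ 1 c + φ 2 s :=
  Fin.sum_univ_three _

lemma tripleSum_eq (φ : Fin 3 → α → U) (t : Triple α) :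
    tripleSum φ t = φ 0 (t 0) + φ 1 (t 1) + φ 2 (t 2) :=
  Fin.sum_univ_three _

lemma tripleSum_of_eq_map {φ : Fin 3 → α → U} {ψ : Fin 3 → α → H} {t : Triple α} (θ : U →+ H)
    (h : ∀ i, ψ i (t i) = θ (φ i (t i))) : tripleSum ψ t = θ (tripleSum φ t) := by
  simp only [tripleSum, h, map_sum]

/-- `φ` presents `U` as the abelian group generated by the vertices `V` subject to the relations
`r + c + s = 0` for `(r, c, s) ∈ W`; the labels of non-vertices are irrelevant. -/
structure IsUniversal (V : Fin 3 → Finset α) (W : Finset (Triple α)) (φ : Fin 3 → α → U) :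
    Prop where
  mem : ∀ t ∈ W, ∀ i, t i ∈ V i
  sum_eq_zero : ∀ t ∈ W, tripleSum φ t = 0
  exists_hom : ∀ {H : Type u} [AddCommGroup H] (ψ : Fin 3 → α → H), (∀ t ∈ W, tripleSum ψ t = 0) →
    ∃ θ : U →+ H, ∀ i, ∀ a ∈ V i, θ (φ i a) = ψ i a
  hom_ext : ∀ {H : Type u} [AddCommGroup H] (θ₁ θ₂ : U →+ H),
    (∀ i, ∀ a ∈ V i, θ₁ (φ i a) = θ₂ (φ i a)) → θ₁ = θ₂

namespace IsUniversal

variable {V V' : Fin 3 → Finset α} {W W' : Finset (Triple α)} {φ : Fin 3 → α → U}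
  {φ' : Fin 3 → α → U'}

lemma nonempty_addEquiv (h : IsUniversal V W φ) (h' : IsUniversal V W φ') :
    Nonempty (U ≃+ U') := by
  obtain ⟨θ, hθ⟩ := h.exists_hom φ' h'.sum_eq_zero
  obtain ⟨θ', hθ'⟩ := h'.exists_hom φ h.sum_eq_zero
  exact ⟨θ.toAddEquiv θ'
    (h.hom_ext _ _ fun i a ha => by simp [hθ i a ha, hθ' i a ha])
    (h'.hom_ext _ _ fun i a ha => by simp [hθ i a ha, hθ' i a ha])⟩

lemma extend (h : IsUniversal V W φ) (π : U →+ U') (hmem : ∀ t ∈ W', ∀ i, t i ∈ V' i)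
    (hV : ∀ i, V i ⊆ V' i) (hW : W ⊆ W') (hφ' : ∀ i, ∀ a ∈ V i, φ' i a = π (φ i a))
    (hsum : ∀ t ∈ W', t ∉ W → tripleSum φ' t = 0)
    (hexists : ∀ {H : Type u} [AddCommGroup H] (ψ : Fin 3 → α → H) (θ : U →+ H),
      (∀ t ∈ W', tripleSum ψ t = 0) → (∀ i, ∀ a ∈ V i, θ (φ i a) = ψ i a) →
        ∃ θ' : U' →+ H, ∀ i, ∀ a ∈ V' i, θ' (φ' i a) = ψ i a)
    (hext : ∀ {H : Type u} [AddCommGroup H] (θ₁ θ₂ : U' →+ H), θ₁.comp π = θ₂.comp π →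
      (∀ i, ∀ a ∈ V' i, θ₁ (φ' i a) = θ₂ (φ' i a)) → θ₁ = θ₂) :
    IsUniversal V' W' φ' where
  mem := hmem
  sum_eq_zero t ht := by
    by_cases htW : t ∈ W
    · rw [tripleSum_of_eq_map π fun i => hφ' i (t i) (h.mem t htW i), h.sum_eq_zero t htW, map_zero]
    · exact hsum t ht htW
  exists_hom ψ hψ := by
    obtain ⟨θ, hθ⟩ := h.exists_hom ψ fun t ht => hψ t (hW ht)
    exact hexists ψ θ hψ hθ
  hom_ext θ₁ θ₂ heq := hext θ₁ θ₂ (h.hom_ext _ _ fun i a ha => by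
    simpa [hφ' i a ha] using heq i a (hV i ha)) heq

lemma map_addEquiv (h : IsUniversal V W φ) (e : U ≃+ U') :
    IsUniversal V W fun i a => e (φ i a) := by
  refine h.extend e.toAddMonoidHom h.mem (fun _ => Subset.rfl) Subset.rfl (fun _ _ _ => rfl)
    (fun t ht ht' => absurd ht ht') (fun ψ θ _ hθ => ⟨θ.comp e.symm.toAddMonoidHom, ?_⟩) ?_
  · simpa using hθ
  · exact fun θ₁ θ₂ hcomp _ => AddMonoidHom.ext fun x => by
      simpa using DFunLike.congr_fun hcomp (e.symm x)

lemma insert_relation [DecidableEq α] (h : IsUniversal V W φ) {w : Triple α} (hw : ∀ i, w i ∈ V i)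
    {π : U →+ U'} (hπ : Function.Surjective π)
    (hker : π.ker = AddSubgroup.zmultiples (tripleSum φ w)) :
    IsUniversal V (insert w W) fun i a => π (φ i a) := by
  have hmem : ∀ t ∈ insert w W, ∀ i, t i ∈ V i := (forall_mem_insert _ _ _).2 ⟨hw, h.mem⟩
  refine h.extend π hmem (fun _ => Subset.rfl) (subset_insert w W) (fun _ _ _ => rfl) ?_
    (fun ψ θ hψ hθ => ?_) fun θ₁ θ₂ hcomp _ => (AddMonoidHom.cancel_right hπ).1 hcomp
  · intro t ht htW
    obtain rfl := (mem_insert.1 ht).resolve_right htW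
    rw [tripleSum_of_eq_map π fun _ => rfl, ← AddMonoidHom.mem_ker, hker]
    exact AddSubgroup.mem_zmultiples _
  · have hle : π.ker ≤ θ.ker := by
      rw [hker, AddSubgroup.zmultiples_le, AddMonoidHom.mem_ker,
        ← tripleSum_of_eq_map θ fun i => (hθ i (w i) (hw i)).symm]
      exact hψ w (mem_insert_self w W)
    exact ⟨π.liftOfSurjective hπ ⟨θ, hle⟩, fun i a ha => by
      simpa using hθ i a ha⟩

end IsUniversal

end Universal

section StripRelations

lemma val_sub_one_add_one {N : ℕ} [NeZero N] {j : ZMod N} (hj : j ≠ 0) :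
    (j - 1).val + 1 = j.val := by
  obtain ⟨n, hn⟩ := Nat.exists_eq_succ_of_ne_zero ((ZMod.val_ne_zero j).2 hj)
  have hlt : n < N := by
    have := j.val_lt
    omega
  have hj' : j - 1 = n := by
    rw [← ZMod.natCast_zmod_val j, hn, Nat.cast_succ, add_sub_cancel_right]
  rw [hj', ZMod.val_cast_of_lt hlt, hn]

lemma val_neg_one_add_one (N : ℕ) [NeZero N] : (-1 : ZMod N).val + 1 = N := by
  obtain ⟨n, rfl⟩ := Nat.exists_eq_succ_of_ne_zero (NeZero.ne N)
  rw [ZMod.val_neg_one]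

variable {U : Type*} [AddCommGroup U] {N : ℕ} [NeZero N] {v : U}

lemma val_sub_one_smul_add (hv : N • v = 0) (j : ZMod N) :
    (j - 1).val • v + v = j.val • v := by
  rw [← succ_nsmul]
  by_cases hj : j = 0
  · rw [hj, zero_sub, val_neg_one_add_one, hv, ZMod.val_zero, zero_nsmul]
  · rw [val_sub_one_add_one hj]

variable {r s : ZMod N → U} {c d : U}

lemma openStrip_relations_iff :
    (∀ j ≠ 0, r j + c + s j = 0 ∧ r j + d + s (j - 1) = 0) ↔
      (∀ j, s j = s 0 + j.val • (d - c)) ∧ ∀ j ≠ 0, r j = -c - s 0 - j.val • (d - c) := by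
  constructor
  · intro h
    have s_natCast : ∀ n < N, s n = s 0 + n • (d - c) := fun n hn => by
      induction n with
      | zero => simp
      | succ n ih =>
        have hne : ((n + 1 : ℕ) : ZMod N) ≠ 0 := fun h0 => by
          have := ZMod.val_cast_of_lt hn
          rw [h0, ZMod.val_zero] at this
          omega
        obtain ⟨hc, hd⟩ := h _ hne
        have hstep : s (n + 1 : ℕ) = s n + (d - c) := by
          rw [Nat.cast_succ, add_sub_cancel_right] at hd
          rw [Nat.cast_succ] at hc ⊢
          linear_combination (norm := abel) hc - hd
        rw [hstep, ih (by omega), succ_nsmul, add_assoc]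
    have hs : ∀ j, s j = s 0 + j.val • (d - c) := fun j => by
      simpa only [ZMod.natCast_zmod_val] using s_natCast j.val j.val_lt
    refine ⟨hs, fun j hj => ?_⟩
    have := (h j hj).1
    rw [hs j] at this
    linear_combination (norm := abel) this
  · rintro ⟨hs, hr⟩ j hj
    rw [hr j hj, hs j, hs (j - 1), ← val_sub_one_add_one hj, succ_nsmul]
    constructor <;> abel

lemma strip_relations_iff :
    (∀ j, r j + c + s j = 0 ∧ r j + d + s (j - 1) = 0) ↔ N • (d - c) = 0 ∧
      ∀ j, s j = s 0 + j.val • (d - c) ∧ r j = -c - s 0 - j.val • (d - c) := by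
  constructor
  · intro h
    obtain ⟨hs, hr⟩ := openStrip_relations_iff.1 fun j (_ : j ≠ 0) => h j
    obtain ⟨hc, hd⟩ := h 0
    refine ⟨?_, fun j => ⟨hs j, ?_⟩⟩
    · rw [zero_sub, hs (-1)] at hd
      calc N • (d - c) = (-1 : ZMod N).val • (d - c) + (d - c) := by
            rw [← succ_nsmul, val_neg_one_add_one]
        _ = 0 := by linear_combination (norm := abel) hd - hc
    · obtain rfl | hj := eq_or_ne j 0
      · rw [ZMod.val_zero, zero_nsmul]
        linear_combination (norm := abel) hc
      · exact hr j hj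
  · rintro ⟨hv, h⟩ j
    obtain ⟨hs, hr⟩ := h j
    rw [hr, hs, (h (j - 1)).1, ← val_sub_one_smul_add hv]
    constructor <;> abel

variable {α : Type*} [DecidableEq α] {ρ σ : ZMod N → α} {a b : α} {ψ : Fin 3 → α → U}

lemma openStrip_tripleSum_eq_zero_iff (hρ : ρ.Injective) :
    (∀ t ∈ openStrip ρ σ a b, tripleSum ψ t = 0) ↔
      (∀ j, ψ 2 (σ j) = ψ 2 (σ 0) + j.val • (ψ 1 b - ψ 1 a)) ∧
        ∀ j ≠ 0, ψ 0 (ρ j) = -ψ 1 a - ψ 2 (σ 0) - j.val • (ψ 1 b - ψ 1 a) := by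
  simp only [forall_mem_openStrip hρ, tripleSum_mk]
  exact openStrip_relations_iff (r := fun j => ψ 0 (ρ j)) (s := fun j => ψ 2 (σ j))

lemma strip_tripleSum_eq_zero_iff :
    (∀ t ∈ strip ρ σ a b, tripleSum ψ t = 0) ↔ N • (ψ 1 b - ψ 1 a) = 0 ∧
      ∀ j, ψ 2 (σ j) = ψ 2 (σ 0) + j.val • (ψ 1 b - ψ 1 a) ∧
        ψ 0 (ρ j) = -ψ 1 a - ψ 2 (σ 0) - j.val • (ψ 1 b - ψ 1 a) := by
  simp only [forall_mem_strip, tripleSum_mk]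
  exact strip_relations_iff (r := fun j => ψ 0 (ρ j)) (s := fun j => ψ 2 (σ j))

lemma tripleSum_straight (hψ : ∀ t ∈ strip ρ σ a b, tripleSum ψ t = 0) (j : ZMod N) :
    tripleSum ψ ![ρ j, b, σ j] = ψ 1 b - ψ 1 a := by
  have hj := (forall_mem_strip.1 hψ j).1
  rw [tripleSum_mk] at hj ⊢
  linear_combination (norm := abel) hj

lemma tripleSum_shifted (hψ : ∀ t ∈ strip ρ σ a b, tripleSum ψ t = 0) (j : ZMod N) :
    tripleSum ψ ![ρ j, a, σ (j - 1)] = -(ψ 1 b - ψ 1 a) := by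
  have hj := (forall_mem_strip.1 hψ j).2
  rw [tripleSum_mk] at hj ⊢
  linear_combination (norm := abel) hj

lemma tripleSum_strip_comm (hψ : ∀ t ∈ strip ρ σ a b, tripleSum ψ t = 0) :
    ∀ t ∈ strip ρ σ b a,
      tripleSum ψ t = ψ 1 b - ψ 1 a ∨ tripleSum ψ t = -(ψ 1 b - ψ 1 a) :=
  forall_mem_strip.2 fun j => ⟨Or.inl (tripleSum_straight hψ j), Or.inr (tripleSum_shifted hψ j)⟩

end StripRelations

section StripLabels

universe u

variable {U U' H : Type u} [AddCommGroup U] [AddCommGroup U'] [AddCommGroup H]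
  {φ : Fin 3 → ℕ → U} {ψ : Fin 3 → ℕ → H} {V : Fin 3 → Finset ℕ} {W : Finset (Triple ℕ)}
  {w : Triple ℕ} {N M : ℕ}

/-- The labelling `φ` of the vertices below `M`, continued to a fresh strip through `w`: the new
column `M` gets the label `e`, and the new rows and symbols are labelled as in
`openStrip_relations_iff`, where `c` is the label of the first column of the strip and `v` the
difference of its column labels. -/
def stripLabels (φ : Fin 3 → ℕ → U) (M : ℕ) (w : Triple ℕ) (c e v : U) : Fin 3 → ℕ → U :=
  fun i a => if a < M then φ i a
    else ![-c - φ 2 (w 2) - (a - M) • v, e, φ 2 (w 2) + (a - M) • v] i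

variable {c e v : U}

lemma stripLabels_of_lt {i : Fin 3} {a : ℕ} (ha : a < M) :
    stripLabels φ M w c e v i a = φ i a :=
  if_pos ha

lemma stripLabels_column : stripLabels φ M w c e v 1 M = e :=
  if_neg (lt_irrefl M)

lemma stripLabels_row {j : ZMod N} (hj : j ≠ 0) :
    stripLabels φ M w c e v 0 (fresh M (w 0) j) = -c - φ 2 (w 2) - j.val • v := by
  simp [stripLabels, fresh_of_ne hj]

lemma stripLabels_symbol (hw : w 2 < M) (j : ZMod N) :
    stripLabels φ M w c e v 2 (fresh M (w 2) j) = φ 2 (w 2) + j.val • v := by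
  by_cases hj : j = 0
  · simp [stripLabels, hj, fresh_zero, hw]
  · simp [stripLabels, fresh_of_ne hj]

variable [NeZero N]

lemma tripleSum_stripLabels_seam (hw : ∀ i, w i < M) :
    tripleSum (stripLabels φ M w (φ 1 (w 1)) (φ 1 (w 1) + v) v) (seam N M w) =
      tripleSum φ w + N • v := by
  have smul_eq : N • v = (-1 : ZMod N).val • v + v := by
    rw [← succ_nsmul, val_neg_one_add_one]
  rw [seam, tripleSum_mk, stripLabels_of_lt (hw 0), stripLabels_column, stripLabels_symbol (hw 2),
    tripleSum_eq, smul_eq]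
  abel

lemma map_stripLabels (hV : ∀ i, ∀ a ∈ V i, a < M) (hw : ∀ i, w i ∈ V i) {θ : U →+ H}
    (hold : ∀ i, ∀ a ∈ V i, θ (φ i a) = ψ i a) (hM : θ e = ψ 1 M)
    (hs : ∀ j : ZMod N, ψ 2 (fresh M (w 2) j) = ψ 2 (w 2) + j.val • θ v)
    (hr : ∀ j : ZMod N, j ≠ 0 →
      ψ 0 (fresh M (w 0) j) = -θ c - ψ 2 (w 2) - j.val • θ v) :
    ∀ i, ∀ a ∈ V i ∪ vertices (freshStrip N M w (w 1) M) i,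
      θ (stripLabels φ M w c e v i a) = ψ i a := by
  have hV' : ∀ i, ∀ a ∈ V i, θ (stripLabels φ M w c e v i a) = ψ i a := fun i a ha => by
    rw [stripLabels_of_lt (hV i a ha), hold i a ha]
  simp only [mem_union, or_imp, forall_and]
  refine ⟨hV', forall_mem_vertices_strip.2 ⟨fun j => ?_, ⟨hV' 1 _ (hw 1), ?_⟩, fun j => ?_⟩⟩
  · obtain rfl | hj := eq_or_ne j 0
    · exact hV' 0 _ (fresh_zero.symm ▸ hw 0)
    · rw [stripLabels_row hj, hr j hj, ← hold 2 _ (hw 2)]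
      simp only [map_sub, map_neg, map_nsmul]
  · rw [stripLabels_column, hM]
  · rw [stripLabels_symbol (hV 2 _ (hw 2)), hs j, ← hold 2 _ (hw 2), map_add, map_nsmul]

lemma tripleSum_of_freshStrip (hψ : ∀ t ∈ freshStrip N M w M (w 1), tripleSum ψ t = 0) :
    tripleSum ψ w = ψ 1 (w 1) - ψ 1 M := by
  simpa only [fresh_triple] using tripleSum_straight hψ 0

lemma forall_mem_union_vertices {V' : Fin 3 → Finset ℕ} {S : Finset (Triple ℕ)}
    (hW : ∀ t ∈ W, ∀ i, t i ∈ V i) (hS : ∀ i, vertices S i ⊆ V' i) :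
    ∀ t ∈ W ∪ S, ∀ i, t i ∈ V i ∪ V' i := fun t ht i =>
  (mem_union.1 ht).elim (fun ht => mem_union_left _ (hW t ht i))
    fun ht => mem_union_right _ (hS i (apply_mem_vertices ht i))

lemma prod_int_hom_ext {θ₁ θ₂ : U × ℤ →+ H}
    (hcomp : θ₁.comp (AddMonoidHom.inl U ℤ) = θ₂.comp (AddMonoidHom.inl U ℤ)) {x : U}
    (hx : θ₁ (x, 1) = θ₂ (x, 1)) : θ₁ = θ₂ := by
  have hinl : ∀ y, θ₁ (y, 0) = θ₂ (y, 0) := fun y => DFunLike.congr_fun hcomp y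
  ext ⟨y, n⟩
  have hsplit : (y, n) = (y - n • x, 0) + n • (x, (1 : ℤ)) := by simp
  rw [hsplit, map_add, map_add, map_zsmul, map_zsmul, hinl, hx]

namespace IsUniversal

lemma attach_openStrip (h : IsUniversal V W φ) (hV : ∀ i, ∀ a ∈ V i, a < M) (hw : ∀ i, w i ∈ V i)
    (z : U) :
    IsUniversal (fun i => V i ∪ vertices (freshStrip N M w (w 1) M) i)
      (W ∪ openStrip (N := N) (fresh M (w 0)) (fresh M (w 2)) (w 1) M)
      (stripLabels (fun i a => (φ i a, (0 : ℤ))) M w (φ 1 (w 1), 0)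
        ((φ 1 (w 1), 0) + (-z, 1)) (-z, 1)) := by
  have hwM : ∀ i, w i < M := fun i => hV i _ (hw i)
  refine h.extend (AddMonoidHom.inl U ℤ)
    (forall_mem_union_vertices h.mem fun i => image_subset_image (filter_subset _ _))
    (fun i => subset_union_left) subset_union_left
    (fun i a ha => stripLabels_of_lt (hV i a ha)) ?_ (fun {H _} ψ θ hψ hθ => ?_)
    fun θ₁ θ₂ hcomp heq => ?_
  · refine fun t ht htW => (openStrip_tripleSum_eq_zero_iff (fresh_injective (hwM 0))).2
      ⟨fun j => ?_, fun j hj => ?_⟩ t ((mem_union.1 ht).resolve_left htW)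
    · simp [fresh_zero, stripLabels_symbol (hwM 2), stripLabels_column, stripLabels_of_lt, hwM]
    · simp [fresh_zero, stripLabels_row hj, stripLabels_column, stripLabels_of_lt, hwM]
  · obtain ⟨hs, hr⟩ := (openStrip_tripleSum_eq_zero_iff (fresh_injective (hwM 0))).1
      fun t ht => hψ t (mem_union_right _ ht)
    rw [fresh_zero] at hs hr
    let θ' : U × ℤ →+ H := θ.coprod (zmultiplesHom H (ψ 1 M - ψ 1 (w 1) + θ z))
    have map_v : θ' (-z, 1) = ψ 1 M - ψ 1 (w 1) := by simp [θ']
    refine ⟨θ', map_stripLabels hV hw (fun i a ha => ?_) ?_ ?_ ?_⟩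
    · simpa [θ'] using hθ i a ha
    · rw [map_add, map_v]
      simp [θ', hθ 1 _ (hw 1)]
    · rwa [map_v]
    · simpa [map_v, θ', hθ 1 _ (hw 1)] using hr
  · have heqM := heq 1 M (mem_union_right _ (by simp [vertices_strip]))
    rw [stripLabels_column] at heqM
    exact prod_int_hom_ext hcomp heqM

lemma attach_strip (h : IsUniversal V W φ) (hV : ∀ i, ∀ a ∈ V i, a < M) (hw : ∀ i, w i ∈ V i)
    {π : U →+ U'} (hπ : Function.Surjective π)
    (hker : π.ker = AddSubgroup.zmultiples (N • tripleSum φ w)) :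
    IsUniversal (fun i => V i ∪ vertices (freshStrip N M w (w 1) M) i)
      (W ∪ freshStrip N M w M (w 1))
      (stripLabels (fun i a => π (φ i a)) M w (π (φ 1 (w 1)) - π (tripleSum φ w))
        (π (φ 1 (w 1)) - π (tripleSum φ w)) (π (tripleSum φ w))) := by
  have hwM : ∀ i, w i < M := fun i => hV i _ (hw i)
  have hv : N • π (tripleSum φ w) = 0 := by
    rw [← map_nsmul, ← AddMonoidHom.mem_ker, hker]
    exact AddSubgroup.mem_zmultiples _
  refine h.extend π
    (forall_mem_union_vertices h.mem fun i => (congrFun vertices_strip_comm i).subset)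
    (fun i => subset_union_left) subset_union_left
    (fun i a ha => stripLabels_of_lt (hV i a ha)) ?_ (fun {H _} ψ θ hψ hθ => ?_)
    fun θ₁ θ₂ hcomp _ => (AddMonoidHom.cancel_right hπ).1 hcomp
  · refine fun t ht htW => strip_tripleSum_eq_zero_iff.2 ⟨?_, fun j => ⟨?_, ?_⟩⟩ t
      ((mem_union.1 ht).resolve_left htW)
    · simp [stripLabels_column, stripLabels_of_lt, hwM, hv]
    · simp [fresh_zero, stripLabels_symbol (hwM 2), stripLabels_column, stripLabels_of_lt, hwM]
    · obtain rfl | hj := eq_or_ne j 0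
      · simp only [fresh_zero, stripLabels_column, stripLabels_of_lt, hwM, tripleSum_eq, map_add,
          ZMod.val_zero, zero_nsmul]
        abel
      · simp [fresh_zero, stripLabels_row hj, stripLabels_column, stripLabels_of_lt, hwM]
  · have hψS : ∀ t ∈ freshStrip N M w M (w 1), tripleSum ψ t = 0 :=
      fun t ht => hψ t (mem_union_right _ ht)
    obtain ⟨hvψ, hsr⟩ := strip_tripleSum_eq_zero_iff.1 hψS
    simp only [fresh_zero] at hsr
    have hsum : ψ 1 (w 1) - ψ 1 M = θ (tripleSum φ w) := by
      rw [← tripleSum_of_freshStrip hψS, tripleSum_of_eq_map θ fun i => (hθ i _ (hw i)).symm]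
    rw [hsum] at hvψ hsr
    have hle : π.ker ≤ θ.ker := by
      rwa [hker, AddSubgroup.zmultiples_le, AddMonoidHom.mem_ker, map_nsmul]
    let θ' := π.liftOfSurjective hπ ⟨θ, hle⟩
    have lift_apply : ∀ x, θ' (π x) = θ x := fun x => by simp [θ']
    have map_e : θ' (π (φ 1 (w 1)) - π (tripleSum φ w)) = ψ 1 M := by
      rw [map_sub, lift_apply, lift_apply, hθ 1 _ (hw 1), ← hsum, sub_sub_cancel]
    refine ⟨θ', map_stripLabels hV hw (fun i a ha => ?_) map_e (fun j => ?_) fun j _ => ?_⟩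
    · rw [lift_apply, hθ i a ha]
    · rw [lift_apply, (hsr j).1]
    · rw [lift_apply, map_e, (hsr j).2]

end IsUniversal

end StripLabels

/-! ### Realizable groups -/

section Divisible

universe u

variable {α : Type*} {U U' : Type u} [AddCommGroup U] [AddCommGroup U']
  {B B' : Finset (Triple α)} {φ : Fin 3 → α → U} {φ' : Fin 3 → α → U'} {p D D' : ℕ}

/-- At least `D` triples of `B` have a label sum divisible by `p`. -/
def HasDivisibleTriples (p D : ℕ) (B : Finset (Triple α)) (φ : Fin 3 → α → U) : Prop :=
  ∃ S ⊆ B, #S = D ∧ ∀ b ∈ S, ∃ z, tripleSum φ b = p • z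

namespace HasDivisibleTriples

lemma map (h : HasDivisibleTriples p D B φ) (θ : U →+ U') (hB : B ⊆ B')
    (hφ : ∀ b ∈ B, ∀ i, φ' i (b i) = θ (φ i (b i))) : HasDivisibleTriples p D B' φ' := by
  obtain ⟨S, hS, hcard, hdvd⟩ := h
  refine ⟨S, hS.trans hB, hcard, fun b hb => ?_⟩
  obtain ⟨z, hz⟩ := hdvd b hb
  exact ⟨θ z, by rw [tripleSum_of_eq_map θ (hφ b (hS hb)), hz, map_nsmul]⟩

variable [DecidableEq α]

lemma union (h : HasDivisibleTriples p D B φ) (h' : HasDivisibleTriples p D' B' φ)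
    (hB : Disjoint B B') : HasDivisibleTriples p (D + D') (B ∪ B') φ := by
  obtain ⟨S, hS, rfl, hdvd⟩ := h
  obtain ⟨S', hS', rfl, hdvd'⟩ := h'
  refine ⟨S ∪ S', union_subset_union hS hS', card_union_of_disjoint (hB.mono hS hS'),
    fun b hb => ?_⟩
  exact (mem_union.1 hb).elim (hdvd b) (hdvd' b)

lemma exists_erase (h : HasDivisibleTriples p (D + 1) B φ) :
    ∃ b ∈ B, (∃ z, tripleSum φ b = p • z) ∧ HasDivisibleTriples p D (B.erase b) φ := by
  obtain ⟨S, hS, hcard, hdvd⟩ := h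
  obtain ⟨b, hb⟩ : S.Nonempty := card_pos.1 (by omega)
  refine ⟨b, hS hb, hdvd b hb, S.erase b, erase_subset_erase b hS, ?_,
    fun c hc => hdvd c (mem_of_mem_erase hc)⟩
  rw [card_erase_of_mem hb, hcard, Nat.add_sub_cancel]

end HasDivisibleTriples

lemma hasDivisibleTriples_strip_erase [DecidableEq α] {N : ℕ} [NeZero N] {ρ σ : ZMod N → α}
    {c d : α} {t : Triple α} {z : U} (hρ : ρ.Injective) (hcd : c ≠ d)
    (hφ : ∀ t ∈ strip ρ σ c d, tripleSum φ t = 0) (hz : φ 1 d - φ 1 c = p • z)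
    (ht : t ∈ strip ρ σ d c) :
    HasDivisibleTriples p (2 * N - 1) ((strip ρ σ d c).erase t) φ := by
  refine ⟨_, Subset.rfl, by rw [card_erase_of_mem ht, card_strip hρ hcd.symm], fun b hb => ?_⟩
  rcases tripleSum_strip_comm hφ b (mem_of_mem_erase hb) with hb | hb
  · exact ⟨z, hb.trans hz⟩
  · exact ⟨-z, by rw [hb, hz, smul_neg]⟩

end Divisible

section Realizable

universe u

variable {U U' : Type u} [AddCommGroup U] [AddCommGroup U'] {p D : ℕ}

/-- `U` is isomorphic to the group `A_W` of a spherical bitrade `(W, B)` in which at least `D`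
triples of `B` have a label sum divisible by `p`. -/
def IsRealizable (p D : ℕ) (U : Type u) [AddCommGroup U] : Prop :=
  ∃ (W B : Finset (Triple ℕ)) (φ : Fin 3 → ℕ → U), IsSphericalPair W B ∧ Disjoint W B ∧
    IsUniversal (vertices W) W φ ∧ HasDivisibleTriples p D B φ

/-- Omitting one relation from the presentation of `A_W` for some spherical bitrade `(W, B)` yields
`U × ℤ`, in which the label sum of the omitted triple is `p` times the generator of `ℤ`, and at
least `D` triples of `B` have a label sum divisible by `p`. -/
def IsPuncturedRealizable (p D : ℕ) (U : Type u) [AddCommGroup U] : Prop :=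
  ∃ (W B : Finset (Triple ℕ)) (φ : Fin 3 → ℕ → U × ℤ), ∃ w ∈ W, IsSphericalPair W B ∧
    Disjoint W B ∧ IsUniversal (vertices W) (W.erase w) φ ∧ tripleSum φ w = p • (0, 1) ∧
      HasDivisibleTriples p D B φ

lemma IsRealizable.congr (h : IsRealizable p D U) (e : U ≃+ U') : IsRealizable p D U' := by
  obtain ⟨W, B, φ, hWB, hdisj, hφ, hdvd⟩ := h
  exact ⟨W, B, _, hWB, hdisj, hφ.map_addEquiv e,
    hdvd.map e.toAddMonoidHom Subset.rfl fun _ _ _ => rfl⟩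

lemma exists_forall_mem_lt (V : Fin 3 → Finset ℕ) : ∃ M, ∀ i, ∀ a ∈ V i, a < M :=
  ⟨univ.sup (fun i => (V i).sup id) + 1, fun i _ ha => Nat.lt_succ_of_le
    ((le_sup (f := id) ha).trans (le_sup (f := fun i => (V i).sup id) (mem_univ i)))⟩

section Reduction

variable (U) (N : ℕ)

/-- The reduction of the second factor of `U × ℤ` modulo `N`. -/
def reduction : U × ℤ →+ U × ZMod N :=
  (AddMonoidHom.id U).prodMap (Int.castAddHom (ZMod N))

lemma reduction_surjective : Function.Surjective (reduction U N) :=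
  Function.surjective_id.prodMap ZMod.intCast_surjective

lemma ker_reduction : (reduction U N).ker = AddSubgroup.zmultiples (N • (0, 1)) := by
  ext ⟨x, n⟩
  simp [reduction, AddMonoidHom.mem_ker, AddSubgroup.mem_zmultiples_iff, Prod.ext_iff,
    CharP.intCast_eq_zero_iff (ZMod N) N, dvd_iff_exists_eq_mul_left, eq_comm]

end Reduction

lemma IsPuncturedRealizable.close (h : IsPuncturedRealizable p D U) :
    IsRealizable p D (U × ZMod p) := by
  obtain ⟨W, B, φ, w, hw, hWB, hdisj, hφ, hsum, hdvd⟩ := h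
  refine ⟨W, B, fun i a => reduction U p (φ i a), hWB, hdisj, ?_,
    hdvd.map (reduction U p) Subset.rfl fun _ _ _ => rfl⟩
  have := hφ.insert_relation (apply_mem_vertices hw) (reduction_surjective U p)
    (by rw [ker_reduction, hsum])
  rwa [insert_erase hw] at this

lemma isPuncturedRealizable_of_mem (hp : 2 ≤ p) {W B : Finset (Triple ℕ)} {φ : Fin 3 → ℕ → U}
    {b : Triple ℕ} {z : U} (hWB : IsSphericalPair W B) (hφ : IsUniversal (vertices W) W φ)
    (hb : b ∈ B) (hdisj : Disjoint W (B.erase b)) (hz : tripleSum φ b = p • z)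
    (hdvd : HasDivisibleTriples p D (B.erase b) φ) : IsPuncturedRealizable p D U := by
  have : NeZero p := ⟨by omega⟩
  have : Fact (1 < p) := ⟨hp⟩
  obtain ⟨M, hM⟩ := exists_forall_mem_lt (vertices W)
  have hbV : ∀ i, b i ∈ vertices W i := fun i => hWB.vertices_right ▸ apply_mem_vertices hb i
  have hbM : ∀ i, b i < M := fun i => hM i _ (hbV i)
  have hseam : seam p M b ∉ W := fun h => lt_irrefl M (hM 1 _ (apply_mem_vertices h 1))
  obtain ⟨hsph, hdisj, hvert⟩ := hWB.glue_freshStrip_right (N := p) hdisj hb hM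
  refine ⟨_, _, stripLabels (fun i a => (φ i a, 0)) M b (φ 1 (b 1), 0)
      ((φ 1 (b 1), 0) + (-z, 1)) (-z, 1), seam p M b,
    mem_union_left _ (seam_mem_freshStrip_erase (hbM 1)), hsph, hdisj, ?_, ?_, ?_⟩
  · rw [hvert, erase_union_distrib, freshStrip_erase_erase_seam (hbM 0),
      erase_eq_of_notMem hseam, union_comm]
    exact hφ.attach_openStrip hM hbV z
  · have hinl : tripleSum (fun i a => (φ i a, (0 : ℤ))) b = (tripleSum φ b, 0) :=
      tripleSum_of_eq_map (AddMonoidHom.inl U ℤ) fun _ => rfl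
    rw [tripleSum_stripLabels_seam hbM, hinl, hz]
    simp
  · refine hdvd.map (AddMonoidHom.inl U ℤ) subset_union_right fun c hc i => stripLabels_of_lt ?_
    exact hM i _ (hWB.vertices_right ▸ apply_mem_vertices (mem_of_mem_erase hc) i)

lemma IsRealizable.puncture (hp : 2 ≤ p) (h : IsRealizable p (D + 1) U) :
    IsPuncturedRealizable p D U := by
  obtain ⟨W, B, φ, hWB, hdisj, hφ, hdvd⟩ := h
  obtain ⟨b, hb, ⟨z, hz⟩, hdvd⟩ := hdvd.exists_erase
  exact isPuncturedRealizable_of_mem hp hWB hφ hb (hdisj.mono_right (erase_subset b B)) hz hdvd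

lemma isUniversal_singleton {α : Type*} [DecidableEq α] (t : Triple α) :
    IsUniversal (vertices {t}) {t} fun i _ => (![(1, 0), (0, 1), (-1, -1)] i : ℤ × ℤ) where
  mem := by simp [vertices]
  sum_eq_zero := by simp [tripleSum_eq]
  exists_hom ψ hψ := by
    have hsum := hψ t (mem_singleton_self t)
    rw [tripleSum_eq] at hsum
    refine ⟨(zmultiplesHom _ (ψ 0 (t 0))).coprod (zmultiplesHom _ (ψ 1 (t 1))), ?_⟩
    have hsymbol : -ψ 0 (t 0) + -ψ 1 (t 1) = ψ 2 (t 2) := by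
      linear_combination (norm := abel) -hsum
    simp [vertices, Fin.forall_fin_succ, hsymbol]
  hom_ext θ₁ θ₂ h := by
    have hrow := h 0 _ (apply_mem_vertices (mem_singleton_self t) 0)
    have hcolumn := h 1 _ (apply_mem_vertices (mem_singleton_self t) 1)
    exact prod_int_hom_ext (AddMonoidHom.ext_int hrow) hcolumn

lemma isPuncturedRealizable_int_prod_int (hp : 2 ≤ p) : IsPuncturedRealizable p 0 (ℤ × ℤ) :=
  isPuncturedRealizable_of_mem hp (z := 0) (isSphericalPair_singleton 0) (isUniversal_singleton 0)
    (mem_singleton_self 0) (by simp) (by simp [tripleSum_eq]) ⟨∅, by simp, rfl, by simp⟩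

lemma IsPuncturedRealizable.attach {N : ℕ} (hN : 2 ≤ N) (h : IsPuncturedRealizable p D U) :
    IsRealizable p (D + (2 * N - 1)) (U × ZMod (p * N)) := by
  have : NeZero N := ⟨by omega⟩
  have : Fact (1 < N) := ⟨hN⟩
  obtain ⟨W, B, φ, w, hw, hWB, hdisj, hφ, hsum, hdvd⟩ := h
  obtain ⟨M, hM⟩ := exists_forall_mem_lt (vertices W)
  have hwV : ∀ i, w i ∈ vertices W i := apply_mem_vertices hw
  have hwM : ∀ i, w i < M := fun i => hM i _ (hwV i)
  obtain ⟨hsph, hdisj, hvert⟩ := hWB.glue_freshStrip_left (N := N) hdisj hw hM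
  let π := reduction U (p * N)
  have hker : π.ker = AddSubgroup.zmultiples (N • tripleSum φ w) := by
    rw [ker_reduction, hsum, mul_comm, mul_smul]
  have huniv := hφ.attach_strip hM hwV (reduction_surjective U (p * N)) hker
  rw [← hvert] at huniv
  refine ⟨_, _, _, hsph, hdisj, huniv, HasDivisibleTriples.union
    (hdvd.map π Subset.rfl fun b hb i => stripLabels_of_lt ?_)
    (hasDivisibleTriples_strip_erase (z := π (0, 1)) (fresh_injective (hwM 0)) (hwM 1).ne'
      (fun t ht => huniv.sum_eq_zero t (mem_union_right _ ht)) ?_ (mem_freshStrip M)) ?_⟩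
  · exact hM i _ (hWB.vertices_right ▸ apply_mem_vertices hb i)
  · rw [stripLabels_column, stripLabels_of_lt (hwM 1), sub_sub_cancel, hsum, map_nsmul]
  · exact (meetOnlyAt_freshStrip (hWB.vertices_right ▸ hM)).disjoint_erase.symm

/-- Splitting off the first factor of a product indexed by `Fin (k + 1)`. -/
def prodFinSucc (U : Type u) [AddCommGroup U] {k : ℕ} (F : Fin (k + 1) → Type u)
    [∀ i, AddCommGroup (F i)] : (U × F 0) × (∀ i : Fin k, F i.succ) ≃+ U × ∀ i, F i :=
  AddEquiv.prodAssoc.trans ((AddEquiv.refl U).prodCongr (Fin.consLinearEquiv ℤ F).toAddEquiv)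

lemma IsRealizable.close_pow {U : Type} [AddCommGroup U] (hp : 2 ≤ p) (n : ℕ)
    (h : IsRealizable p (D + n) U) : IsRealizable p D (U × (Fin n → ZMod p)) := by
  induction n generalizing U with
  | zero => exact h.congr AddEquiv.prodUnique.symm
  | succ n ih => exact (ih (h.puncture hp).close).congr (prodFinSucc U fun _ => ZMod p)

lemma IsRealizable.attach_pi {U : Type} [AddCommGroup U] (hp : 2 ≤ p) {k : ℕ} {a : Fin k → ℕ}
    (ha : ∀ i, 2 ≤ a i) (h : IsRealizable p (D + 1) U) :
    IsRealizable p (D + 1 + 2 * ∑ i, (a i - 1)) (U × ∀ i, ZMod (p * a i)) := by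
  induction k generalizing D U with
  | zero => exact h.congr AddEquiv.prodUnique.symm
  | succ k ih =>
    have hattach := (h.puncture hp).attach (ha 0)
    rw [show D + (2 * a 0 - 1) = D + 2 * (a 0 - 1) + 1 by have := ha 0; omega] at hattach
    have htail := (ih (fun i => ha i.succ) hattach).congr (prodFinSucc U fun i => ZMod (p * a i))
    rw [Fin.sum_univ_succ]
    convert htail using 1
    ring

lemma isRealizable_prod_pi (hp : 2 ≤ p) {k n : ℕ} {a : Fin (k + 1) → ℕ} (ha : ∀ i, 2 ≤ a i)
    (hn : n ≤ 1 + 2 * ∑ i, (a i - 1)) :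
    IsRealizable p (1 + 2 * ∑ i, (a i - 1) - n)
      (((ℤ × ℤ) × ∀ i, ZMod (p * a i)) × (Fin n → ZMod p)) := by
  have hattach := (isPuncturedRealizable_int_prod_int hp).attach (ha 0)
  rw [show 0 + (2 * a 0 - 1) = 2 * (a 0 - 1) + 1 by have := ha 0; omega] at hattach
  have htail := (hattach.attach_pi hp fun i => ha i.succ).congr
    (prodFinSucc (ℤ × ℤ) fun i => ZMod (p * a i))
  refine IsRealizable.close_pow hp n ?_
  convert htail using 1
  rw [Nat.sub_add_cancel hn, Fin.sum_univ_succ]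
  ring

end Realizable

/-! ### The spherical latin bitrade of a disjoint spherical pair -/

section Typed

variable {α : Type} {V : Fin 3 → Finset α}

/-- The triples with coordinates in `V`, as elements of a product of three different types. -/
abbrev TypedTriple (V : Fin 3 → Finset α) : Type :=
  V 0 × V 1 × V 2

namespace TypedTriple

/-- The underlying triple of labels. -/
def untyped (t : TypedTriple V) : Triple α :=
  ![t.1, t.2.1, t.2.2]

lemma untyped_injective : (untyped : TypedTriple V → Triple α).Injective := fun _ _ h =>
  Prod.ext (Subtype.ext (congrFun h 0))
    (Prod.ext (Subtype.ext (congrFun h 1)) (Subtype.ext (congrFun h 2)))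

lemma exists_untyped_eq {t : Triple α} (ht : ∀ i, t i ∈ V i) :
    ∃ t' : TypedTriple V, t'.untyped = t :=
  ⟨(⟨t 0, ht 0⟩, ⟨t 1, ht 1⟩, ⟨t 2, ht 2⟩), by ext i; fin_cases i <;> rfl⟩

variable {t t' : TypedTriple V}

lemma agreeOff_zero_iff : AgreeOff 0 t.untyped t'.untyped ↔ t.2.1 = t'.2.1 ∧ t.2.2 = t'.2.2 := by
  rw [agreeOff_zero, Subtype.ext_iff, Subtype.ext_iff]
  rfl

lemma agreeOff_one_iff : AgreeOff 1 t.untyped t'.untyped ↔ t.1 = t'.1 ∧ t.2.2 = t'.2.2 := by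
  rw [agreeOff_one, Subtype.ext_iff, Subtype.ext_iff]
  rfl

lemma agreeOff_two_iff : AgreeOff 2 t.untyped t'.untyped ↔ t.1 = t'.1 ∧ t.2.1 = t'.2.1 := by
  rw [agreeOff_two, Subtype.ext_iff, Subtype.ext_iff]
  rfl

end TypedTriple

open TypedTriple

/-- The triples of `X` with coordinates in `V`. -/
noncomputable def typed (V : Fin 3 → Finset α) (X : Finset (Triple α)) : Finset (TypedTriple V) :=
  X.preimage untyped untyped_injective.injOn

lemma mem_typed {X : Finset (Triple α)} {t : TypedTriple V} : t ∈ typed V X ↔ untyped t ∈ X :=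
  mem_preimage

variable {W B X Y : Finset (Triple α)}

lemma mem_of_agreeOff_of_tradeCond (hY : IsPartialSquare Y) {X' Y' : Finset (TypedTriple V)}
    (hY' : Y' ⊆ typed V Y) (h : TradeCond X' Y') {t t' : TypedTriple V} (ht : t ∈ X')
    (ht' : t' ∈ typed V Y) {i : Fin 3} (hi : AgreeOff i (untyped t) (untyped t')) : t' ∈ Y' := by
  obtain ⟨s, hs, his⟩ : ∃ s ∈ Y', AgreeOff i (untyped t) (untyped s) := by
    obtain ⟨⟨_, hr, -⟩, ⟨_, hc, -⟩, ⟨_, hs, -⟩⟩ := h t ht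
    fin_cases i
    · exact ⟨_, hr.2, agreeOff_zero_iff.2 ⟨rfl, rfl⟩⟩
    · exact ⟨_, hc.2, agreeOff_one_iff.2 ⟨rfl, rfl⟩⟩
    · exact ⟨_, hs.2, agreeOff_two_iff.2 ⟨rfl, rfl⟩⟩
  obtain rfl : t' = s := untyped_injective
    (hY _ (mem_typed.1 ht') _ (mem_typed.1 (hY' hs)) i (hi.symm.trans his))
  exact hs

variable [DecidableEq α]

lemma exists_mem_typed (hX : ∀ i, vertices X i ⊆ V i) {t : Triple α} (ht : t ∈ X) :
    ∃ t' ∈ typed V X, untyped t' = t := by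
  obtain ⟨t', rfl⟩ := exists_untyped_eq fun i => hX i (apply_mem_vertices ht i)
  exact ⟨t', mem_typed.2 ht, rfl⟩

lemma card_typed (hX : ∀ i, vertices X i ⊆ V i) : #(typed V X) = #X :=
  card_bij (fun t _ => untyped t) (fun _ => mem_typed.1) (fun _ _ _ _ h => untyped_injective h)
    fun _ ht => by simpa using exists_mem_typed hX ht

lemma IsPartialSquare.isPartialLatinSquare_typed (hX : IsPartialSquare X) :
    IsPartialLatinSquare (typed (vertices X) X) := by
  have occurs : ∀ i, ∀ a ∈ vertices X i, ∃ t ∈ typed (vertices X) X, untyped t i = a := by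
    intro i a ha
    obtain ⟨t, ht, rfl⟩ := mem_vertices.1 ha
    obtain ⟨t', ht', rfl⟩ := exists_mem_typed (fun _ => Subset.rfl) ht
    exact ⟨t', ht', rfl⟩
  refine ⟨fun t ht t' ht' hne => ?_, fun a => ?_, fun a => ?_, fun a => ?_⟩
  · have disagree : ∀ i, ¬ AgreeOff i (untyped t) (untyped t') := fun i h =>
      hne (untyped_injective (hX _ (mem_typed.1 ht) _ (mem_typed.1 ht') i h))
    exact ⟨mt agreeOff_two_iff.2 (disagree 2), mt agreeOff_one_iff.2 (disagree 1),
      mt agreeOff_zero_iff.2 (disagree 0)⟩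
  · obtain ⟨t, ht, h⟩ := occurs 0 a a.2
    exact ⟨t, ht, Subtype.ext h⟩
  · obtain ⟨t, ht, h⟩ := occurs 1 a a.2
    exact ⟨t, ht, Subtype.ext h⟩
  · obtain ⟨t, ht, h⟩ := occurs 2 a a.2
    exact ⟨t, ht, Subtype.ext h⟩

lemma HasMates.tradeCond_typed (h : HasMates X Y) (hY : IsPartialSquare Y) (hXY : Disjoint X Y)
    (hV : ∀ i, vertices Y i ⊆ V i) : TradeCond (typed V X) (typed V Y) := by
  intro t ht
  have ne : ∀ {t' : TypedTriple V}, t' ∈ typed V Y → t' ≠ t := fun ht' h =>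
    disjoint_left.1 hXY (mem_typed.1 ht) (h ▸ mem_typed.1 ht')
  have unique : ∀ i, ∀ t' ∈ typed V Y, ∀ t'' ∈ typed V Y,
      AgreeOff i (untyped t') (untyped t'') → t' = t'' := fun i t' ht' t'' ht'' hi =>
    untyped_injective (hY _ (mem_typed.1 ht') _ (mem_typed.1 ht'') i hi)
  have mate : ∀ i, ∃ t' ∈ typed V Y, AgreeOff i (untyped t) (untyped t') := fun i => by
    obtain ⟨_, hmem, hi⟩ := h _ (mem_typed.1 ht) i
    obtain ⟨t', ht', rfl⟩ := exists_mem_typed hV hmem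
    exact ⟨t', ht', hi⟩
  obtain ⟨r, c, s⟩ := t
  refine ⟨?_, ?_, ?_⟩
  · obtain ⟨⟨r', c', s'⟩, ht', hi⟩ := mate 0
    obtain ⟨rfl, rfl⟩ : c = c' ∧ s = s' := agreeOff_zero_iff.1 hi
    exact ⟨r', ⟨fun h => ne ht' (h ▸ rfl), ht'⟩, fun _ hr =>
      congrArg Prod.fst (unique 0 _ hr.2 _ ht' (agreeOff_zero_iff.2 ⟨rfl, rfl⟩))⟩
  · obtain ⟨⟨r', c', s'⟩, ht', hi⟩ := mate 1
    obtain ⟨rfl, rfl⟩ : r = r' ∧ s = s' := agreeOff_one_iff.1 hi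
    exact ⟨c', ⟨fun h => ne ht' (h ▸ rfl), ht'⟩, fun _ hc =>
      congrArg (·.2.1) (unique 1 _ hc.2 _ ht' (agreeOff_one_iff.2 ⟨rfl, rfl⟩))⟩
  · obtain ⟨⟨r', c', s'⟩, ht', hi⟩ := mate 2
    obtain ⟨rfl, rfl⟩ : r = r' ∧ c = c' := agreeOff_two_iff.1 hi
    exact ⟨s', ⟨fun h => ne ht' (h ▸ rfl), ht'⟩, fun _ hs =>
      congrArg (·.2.2) (unique 2 _ hs.2 _ ht' (agreeOff_two_iff.2 ⟨rfl, rfl⟩))⟩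

namespace IsSphericalPair

lemma eq_typed_of_tradeCond (h : IsSphericalPair W B)
    {W' B' : Finset (TypedTriple (vertices W))} (hW' : W' ⊆ typed (vertices W) W)
    (hB' : B' ⊆ typed (vertices W) B) (hne : W'.Nonempty) (hWB : TradeCond W' B')
    (hBW : TradeCond B' W') : W' = typed (vertices W) W := by
  obtain ⟨w, hw⟩ := hne
  obtain ⟨q, hq, -⟩ := h.connected (fun t => ∃ t' ∈ W', untyped t' = t)
    (fun t => ∃ t' ∈ B', untyped t' = t) fun t ht t' ht' i hi => by
      obtain ⟨s, hs, rfl⟩ := exists_mem_typed (V := vertices W) (fun _ => Subset.rfl) ht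
      obtain ⟨s', hs', rfl⟩ :=
        exists_mem_typed (V := vertices W) h.right_mates.vertices_subset ht'
      simp only [untyped_injective.eq_iff, exists_eq_right]
      exact ⟨fun hsW => mem_of_agreeOff_of_tradeCond h.right_square hB' hWB hsW hs' hi,
        fun hsB => mem_of_agreeOff_of_tradeCond h.left_square hW' hBW hsB hs hi.symm⟩
  refine hW'.antisymm fun t ht => ?_
  have hwq := (hq _ (mem_typed.1 (hW' hw))).1 ⟨w, hw, rfl⟩
  obtain ⟨t', ht', heq⟩ := (hq _ (mem_typed.1 ht)).2 hwq
  exact untyped_injective heq ▸ ht'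

lemma nonempty_left (h : IsSphericalPair W B) : W.Nonempty := by
  refine nonempty_iff_ne_empty.2 fun hW => ?_
  have := h.euler
  simp [hW, vertices] at this

/-- The spherical latin bitrade whose rows, columns and symbols are those occurring in `W`. -/
noncomputable def toSphericalLatinBitrade (h : IsSphericalPair W B) (hdisj : Disjoint W B) :
    SphericalLatinBitrade where
  R := vertices W 0
  C := vertices W 1
  S := vertices W 2
  instR := inferInstance
  instC := inferInstance
  instS := inferInstance
  W := typed (vertices W) W
  B := typed (vertices W) B
  W_nonempty := by
    obtain ⟨t, ht⟩ := h.nonempty_left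
    obtain ⟨t', ht', -⟩ := exists_mem_typed (fun _ => Subset.rfl) ht
    exact ⟨t', ht'⟩
  B_nonempty := by
    obtain ⟨t, ht⟩ := h.nonempty_left
    obtain ⟨b, hb, -⟩ := h.left_mates t ht 0
    obtain ⟨b', hb', -⟩ := exists_mem_typed h.right_mates.vertices_subset hb
    exact ⟨b', hb'⟩
  W_pls := h.left_square.isPartialLatinSquare_typed
  B_pls := h.vertices_right ▸ h.right_square.isPartialLatinSquare_typed
  tradeWB := h.left_mates.tradeCond_typed h.right_square hdisj h.right_mates.vertices_subset
  tradeBW := h.right_mates.tradeCond_typed h.left_square hdisj.symm fun _ => Subset.rfl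
  connected := fun ⟨_, _, hW', hB', hne, _, hWB, hBW⟩ =>
    hW'.ne (h.eq_typed_of_tradeCond hW'.1 hB'.1 hne hWB hBW)
  spherical := by
    rw [card_typed fun _ => Subset.rfl, ← h.euler, Fin.sum_univ_three]
    simp only [Fintype.card_coe]

end IsSphericalPair

end Typed

/-! ### The canonical group -/

section CanonicalGroup

/-- The class of a row, column or symbol in `A_W`. -/
def generator (T : SphericalLatinBitrade) (x : T.R ⊕ T.C ⊕ T.S) : groupAW T :=
  QuotientAddGroup.mk (FreeAbelianGroup.of x)

lemma generator_add_add_eq_zero {T : SphericalLatinBitrade} {t : T.R × T.C × T.S} (ht : t ∈ T.W) :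
    generator T (.inl t.1) + generator T (.inr (.inl t.2.1)) +
      generator T (.inr (.inr t.2.2)) = 0 :=
  (QuotientAddGroup.eq_zero_iff _).2 (AddSubgroup.subset_closure ⟨t, ht, rfl⟩)

lemma exists_hom_generator {T : SphericalLatinBitrade} {H : Type*} [AddCommGroup H]
    (f : T.R ⊕ T.C ⊕ T.S → H)
    (hf : ∀ t ∈ T.W, f (.inl t.1) + f (.inr (.inl t.2.1)) + f (.inr (.inr t.2.2)) = 0) :
    ∃ θ : groupAW T →+ H, ∀ x, θ (generator T x) = f x := by
  have hle : bitradeRelations T ≤ (FreeAbelianGroup.lift f).ker := by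
    rw [bitradeRelations, AddSubgroup.closure_le]
    rintro _ ⟨t, ht, rfl⟩
    simpa using hf t ht
  exact ⟨QuotientAddGroup.lift _ _ hle, fun x => FreeAbelianGroup.lift_apply_of f x⟩

lemma generator_hom_ext {T : SphericalLatinBitrade} {H : Type*} [AddCommGroup H]
    {θ₁ θ₂ : groupAW T →+ H} (h : ∀ x, θ₁ (generator T x) = θ₂ (generator T x)) : θ₁ = θ₂ :=
  QuotientAddGroup.addMonoidHom_ext _ (FreeAbelianGroup.lift_ext _ _ h)

namespace IsSphericalPair

variable {α : Type} [DecidableEq α] {W B : Finset (Triple α)}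

/-- The labelling of the vertices of `W` by their classes in `A_W`. -/
noncomputable def generatorLabels (h : IsSphericalPair W B) (hdisj : Disjoint W B) :
    Fin 3 → α → groupAW (h.toSphericalLatinBitrade hdisj) :=
  ![fun a => if ha : a ∈ vertices W 0 then generator _ (.inl ⟨a, ha⟩) else 0,
    fun a => if ha : a ∈ vertices W 1 then generator _ (.inr (.inl ⟨a, ha⟩)) else 0,
    fun a => if ha : a ∈ vertices W 2 then generator _ (.inr (.inr ⟨a, ha⟩)) else 0]

section

variable (h : IsSphericalPair W B) (hdisj : Disjoint W B)

lemma generatorLabels_row (r : vertices W 0) :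
    h.generatorLabels hdisj 0 r = generator (h.toSphericalLatinBitrade hdisj) (.inl r) :=
  dif_pos r.2

lemma generatorLabels_column (c : vertices W 1) :
    h.generatorLabels hdisj 1 c = generator (h.toSphericalLatinBitrade hdisj) (.inr (.inl c)) :=
  dif_pos c.2

lemma generatorLabels_symbol (s : vertices W 2) :
    h.generatorLabels hdisj 2 s = generator (h.toSphericalLatinBitrade hdisj) (.inr (.inr s)) :=
  dif_pos s.2

lemma isUniversal_generatorLabels :
    IsUniversal (vertices W) W (h.generatorLabels hdisj) where
  mem _ ht _ := apply_mem_vertices ht _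
  sum_eq_zero t ht := by
    obtain ⟨t', ht', rfl⟩ := exists_mem_typed (fun _ => Subset.rfl) ht
    rw [TypedTriple.untyped, tripleSum_mk, generatorLabels_row, generatorLabels_column,
      generatorLabels_symbol]
    exact generator_add_add_eq_zero ht'
  exists_hom ψ hψ := by
    obtain ⟨θ, hθ⟩ := exists_hom_generator (T := h.toSphericalLatinBitrade hdisj)
      (Sum.elim (fun r : vertices W 0 => ψ 0 r)
        (Sum.elim (fun c : vertices W 1 => ψ 1 c) fun s : vertices W 2 => ψ 2 s))
      fun t ht => (tripleSum_mk ψ _ _ _).symm.trans (hψ _ (mem_typed.1 ht))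
    refine ⟨θ, Fin.forall_fin_succ.2 ⟨?_, Fin.forall_fin_two.2 ⟨?_, ?_⟩⟩⟩
    · exact fun a ha => (congrArg θ (h.generatorLabels_row hdisj ⟨a, ha⟩)).trans (hθ _)
    · exact fun a ha => (congrArg θ (h.generatorLabels_column hdisj ⟨a, ha⟩)).trans (hθ _)
    · exact fun a ha => (congrArg θ (h.generatorLabels_symbol hdisj ⟨a, ha⟩)).trans (hθ _)
  hom_ext θ₁ θ₂ heq := by
    refine generator_hom_ext fun x => ?_
    rcases x with (r : vertices W 0) | (c : vertices W 1) | (s : vertices W 2)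
    · simpa only [generatorLabels_row] using heq 0 r r.2
    · simpa only [generatorLabels_column] using heq 1 c c.2
    · simpa only [generatorLabels_symbol] using heq 2 s s.2

end

end IsSphericalPair

lemma nonempty_torsion_addEquiv_of_prod {A F G : Type*} [AddCommGroup A] [AddCommGroup F]
    [AddCommGroup G] [IsAddTorsionFree F] [Finite G] (e : A ≃+ F × G) :
    Nonempty (AddCommGroup.torsion A ≃+ G) := by
  have mem_iff : ∀ x, x ∈ AddCommGroup.torsion A ↔ (e x).1 = 0 := fun x => by
    rw [AddCommGroup.mem_torsion,
      ← Function.Injective.isOfFinAddOrder_iff (f := e.toAddMonoidHom) e.injective]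
    simp [IsOfFinAddOrder.prod_iff, isOfFinAddOrder_iff_eq_zero, isOfFinAddOrder_of_finite]
  let f := ((AddMonoidHom.snd F G).comp e.toAddMonoidHom).comp (AddCommGroup.torsion A).subtype
  refine ⟨AddEquiv.ofBijective f ⟨fun x y h => ?_, fun g => ?_⟩⟩
  · exact Subtype.ext (e.injective
      (Prod.ext (((mem_iff _).1 x.2).trans ((mem_iff _).1 y.2).symm) h))
  · exact ⟨⟨e.symm (0, g), (mem_iff _).2 (by simp)⟩, by simp [f]⟩

end CanonicalGroup

end LatinBitrade

open LatinBitrade in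
theorem exists_spherical_bitrade_canonical_group_primes_and_composites_general
    (p k n : ℕ) (hp : 2 ≤ p) (hk : 1 ≤ k) (a : Fin k → ℕ) (ha : ∀ i, 2 ≤ a i)
    (hn : n ≤ 1 + 2 * ∑ i, (a i - 1)) :
    ∃ T : SphericalLatinBitrade,
      Nonempty (CanonicalGroup T ≃+
        ((Fin n → ZMod p) × ((i : Fin k) → ZMod (p * a i)))) := by
  obtain ⟨k, rfl⟩ := Nat.exists_eq_add_of_le' hk
  have : NeZero p := ⟨by omega⟩
  have : ∀ i, NeZero (a i) := fun i => ⟨by have := ha i; omega⟩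
  obtain ⟨W, B, φ, hWB, hdisj, hφ, -⟩ := isRealizable_prod_pi hp ha hn
  obtain ⟨e⟩ := (hWB.isUniversal_generatorLabels hdisj).nonempty_addEquiv hφ
  exact ⟨hWB.toSphericalLatinBitrade hdisj, nonempty_torsion_addEquiv_of_prod <|
    e.trans <| AddEquiv.prodAssoc.trans <| (AddEquiv.refl _).prodCongr AddEquiv.prodComm⟩

/-- Let `p` be a prime, `k ≥ 1`, `a_1, …, a_k ≥ 2` and `n ≤ 1 + 2·∑ (a_i − 1)`.  Then
there is a spherical latin bitrade whose canonical group is isomorphic to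
`(ℤ/p)^n ⊕ ℤ/(p·a_1) ⊕ ⋯ ⊕ ℤ/(p·a_k)`. -/
theorem exists_spherical_bitrade_canonical_group_primes_and_composites
    (p k n : ℕ) (hp : p.Prime) (hk : 1 ≤ k) (a : Fin k → ℕ) (ha : ∀ i, 2 ≤ a i)
    (hn : n ≤ 1 + 2 * ∑ i, (a i - 1)) :
    ∃ T : SphericalLatinBitrade,
      Nonempty (CanonicalGroup T ≃+
        ((Fin n → ZMod p) × ((i : Fin k) → ZMod (p * a i)))) :=
  exists_spherical_bitrade_canonical_group_primes_and_composites_general p k n hp.two_le hk a ha hn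
end

section
/- Let a, b, c ≥ 1 be integers. Then there exists a spherical latin bitrade whose canonical group is isomorphic to Z_{ab+bc+ac+1} ⊕ Z_{ab+bc+ac+1}. -/
/-!
The vertices, faces and edges of a map on the sphere serve as rows, columns and symbols: the flags
of one orientation give the triples of `W`, those of the other orientation give `B`, and Euler's
formula is the condition `|R| + |C| + |S| = |W| + 2`.

The map used here is a self-dual modification of `K₄`: the three edges at one vertex, the apex, are
subdivided into paths of `a`, `b` and `c` edges (the legs), and the edge opposite to each of them is
replaced by as many parallel edges. A homomorphism from `A_W` to an abelian group amounts to labels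
of the vertices and the faces such that the two corners at an edge have the same sum. Along a leg
the faces on either side do not change, so the labels increase by a constant slope; let `β` be the
three slopes of the vertex labels and `γ` those of the face labels, the faces being indexed by
duality. The balance at the legs and at the edges opposite to them says that `β = D γ` and `γ = D β`
for an operator `D` (`cyclicDiff`) built from the lengths of the legs. Moreover `∑ β = 0`, and
`D² = -(ab + bc + ac)` on triples of sum zero, so a solution is given by the two labels at the
apices, which are free, and two slopes killed by `n = ab + bc + ac + 1`. Hence
`A_W ≅ ℤ² × (ℤ/n)²`.
-/

section Torsion

variable {G F H : Type*} [AddCommGroup G] [AddCommGroup F] [AddCommGroup H]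

theorem nonempty_torsion_addEquiv_of_addEquiv_prod [IsAddTorsionFree F] (hH : IsAddTorsion H)
    (e : G ≃+ F × H) : Nonempty (AddCommGroup.torsion G ≃+ H) := by
  have torsion_prod : AddCommGroup.torsion (F × H) = (⊥ : AddSubgroup F).prod ⊤ := by
    rw [AddCommGroup.torsion_sum, AddCommGroup.isAddTorsionFree_iff_torsion_eq_bot.1 ‹_›,
      AddCommGroup.torsion_eq_top_iff.2 hH]
  exact ⟨(e.addSubgroupMap _).trans <|
    (AddEquiv.addSubgroupCongr (e.map_torsion.trans torsion_prod)).trans <|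
    (AddSubgroup.prodEquiv _ _).trans <| AddEquiv.uniqueProd.trans AddSubgroup.topEquiv⟩

end Torsion

section IntZModProd

variable {A : Type*} [AddCommGroup A] {n : ℕ}

/-- The homomorphism `ℤ² × (ℤ/n)² → A` sending the standard generators to `x`, `y`, `u` and `v`,
where `n` kills `u` and `v`. -/
def intZModProdLift (x y u v : A) (hu : n • u = 0) (hv : n • v = 0) :
    (ℤ × ℤ) × (ZMod n × ZMod n) →+ A :=
  ((zmultiplesHom A x).coprod (zmultiplesHom A y)).coprod
    ((ZMod.lift n ⟨zmultiplesHom A u, by simpa using hu⟩).coprod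
      (ZMod.lift n ⟨zmultiplesHom A v, by simpa using hv⟩))

theorem intZModProdLift_intCast (x y u v : A) (hu : n • u = 0) (hv : n • v = 0) (p q k l : ℤ) :
    intZModProdLift x y u v hu hv ((p, q), (k, l)) = p • x + q • y + (k • u + l • v) := by
  simp [intZModProdLift]

end IntZModProd

section TradeCond

variable {R C S : Type} {W B P W' B' : Finset (R × C × S)} {r r' : R} {c c' : C} {s s' : S}

namespace IsPartialLatinSquare

theorem row_unique (hP : IsPartialLatinSquare P) (h : (r, c, s) ∈ P) (h' : (r', c, s) ∈ P) :
    r = r' := by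
  by_contra hne
  exact (hP.1 _ h _ h' (by simp [hne])).2.2 ⟨rfl, rfl⟩

theorem col_unique (hP : IsPartialLatinSquare P) (h : (r, c, s) ∈ P) (h' : (r, c', s) ∈ P) :
    c = c' := by
  by_contra hne
  exact (hP.1 _ h _ h' (by simp [hne])).2.1 ⟨rfl, rfl⟩

theorem sym_unique (hP : IsPartialLatinSquare P) (h : (r, c, s) ∈ P) (h' : (r, c, s') ∈ P) :
    s = s' := by
  by_contra hne
  exact (hP.1 _ h _ h' (by simp [hne])).1 ⟨rfl, rfl⟩

theorem tradeCond_of_disjoint (hB : IsPartialLatinSquare B) (hWB : Disjoint W B)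
    (hrow : ∀ r c s, (r, c, s) ∈ W → ∃ r', (r', c, s) ∈ B)
    (hcol : ∀ r c s, (r, c, s) ∈ W → ∃ c', (r, c', s) ∈ B)
    (hsym : ∀ r c s, (r, c, s) ∈ W → ∃ s', (r, c, s') ∈ B) : TradeCond W B := by
  rintro ⟨r, c, s⟩ hW
  have not_mem_B : (r, c, s) ∉ B := Finset.disjoint_left.1 hWB hW
  obtain ⟨r', hr'⟩ := hrow r c s hW
  obtain ⟨c', hc'⟩ := hcol r c s hW
  obtain ⟨s', hs'⟩ := hsym r c s hW
  refine ⟨⟨r', ⟨?_, hr'⟩, fun _ h => hB.row_unique h.2 hr'⟩,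
    ⟨c', ⟨?_, hc'⟩, fun _ h => hB.col_unique h.2 hc'⟩,
    ⟨s', ⟨?_, hs'⟩, fun _ h => hB.sym_unique h.2 hs'⟩⟩ <;>
  · rintro rfl
    exact not_mem_B ‹_›

end IsPartialLatinSquare

namespace TradeCond

theorem mem_of_row (h : TradeCond W' B') (hB : IsPartialLatinSquare B) (hB' : B' ⊆ B)
    (hW' : (r, c, s) ∈ W') (hmem : (r', c, s) ∈ B) : (r', c, s) ∈ B' := by
  obtain ⟨⟨x, ⟨-, hx⟩, -⟩, -, -⟩ := h _ hW'
  rwa [hB.row_unique hmem (hB' hx)]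

theorem mem_of_col (h : TradeCond W' B') (hB : IsPartialLatinSquare B) (hB' : B' ⊆ B)
    (hW' : (r, c, s) ∈ W') (hmem : (r, c', s) ∈ B) : (r, c', s) ∈ B' := by
  obtain ⟨-, ⟨x, ⟨-, hx⟩, -⟩, -⟩ := h _ hW'
  rwa [hB.col_unique hmem (hB' hx)]

theorem mem_of_sym (h : TradeCond W' B') (hB : IsPartialLatinSquare B) (hB' : B' ⊆ B)
    (hW' : (r, c, s) ∈ W') (hmem : (r, c, s') ∈ B) : (r, c, s') ∈ B' := by
  obtain ⟨-, -, ⟨x, ⟨-, hx⟩, -⟩⟩ := h _ hW'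
  rwa [hB.sym_unique hmem (hB' hx)]

end TradeCond

end TradeCond

namespace SphericalLatinBitrade

variable (T : SphericalLatinBitrade)

/-- The class in `A_W` of the generator attached to a row, a column or a symbol. -/
def gen (x : T.R ⊕ T.C ⊕ T.S) : groupAW T :=
  QuotientAddGroup.mk' (bitradeRelations T) (FreeAbelianGroup.of x)

theorem gen_add_gen_add_gen {r : T.R} {c : T.C} {s : T.S} (h : (r, c, s) ∈ T.W) :
    T.gen (.inl r) + T.gen (.inr (.inl c)) + T.gen (.inr (.inr s)) = 0 := by
  simp only [gen, ← map_add]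
  exact (QuotientAddGroup.eq_zero_iff _).2 (AddSubgroup.subset_closure ⟨(r, c, s), h, rfl⟩)

variable {T} {A : Type*} [AddCommGroup A]

/-- The homomorphism `A_W → A` induced by labels in `A` satisfying the relations of `A_W`. -/
def lift (f : T.R ⊕ T.C ⊕ T.S → A)
    (hf : ∀ t ∈ T.W, f (.inl t.1) + f (.inr (.inl t.2.1)) + f (.inr (.inr t.2.2)) = 0) :
    groupAW T →+ A :=
  QuotientAddGroup.lift (bitradeRelations T) (FreeAbelianGroup.lift f) <| by
    rw [bitradeRelations, AddSubgroup.closure_le]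
    rintro _ ⟨t, ht, rfl⟩
    simpa using hf t ht

theorem lift_gen (f : T.R ⊕ T.C ⊕ T.S → A)
    (hf : ∀ t ∈ T.W, f (.inl t.1) + f (.inr (.inl t.2.1)) + f (.inr (.inr t.2.2)) = 0)
    (x : T.R ⊕ T.C ⊕ T.S) : lift f hf (T.gen x) = f x :=
  FreeAbelianGroup.lift_apply_of f x

theorem hom_ext {f g : groupAW T →+ A} (hrow : ∀ r, f (T.gen (.inl r)) = g (T.gen (.inl r)))
    (hcol : ∀ c, f (T.gen (.inr (.inl c))) = g (T.gen (.inr (.inl c)))) : f = g := by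
  refine QuotientAddGroup.addMonoidHom_ext _ (FreeAbelianGroup.lift_ext _ _ ?_)
  rintro (r | c | s)
  · exact hrow r
  · exact hcol c
  · obtain ⟨⟨r, c, s⟩, h, rfl⟩ := T.W_pls.2.2.2 s
    have gen_sym := (neg_eq_of_add_eq_zero_right (T.gen_add_gen_add_gen h)).symm
    change f (T.gen (.inr (.inr s))) = g (T.gen (.inr (.inr s)))
    rw [gen_sym, map_neg, map_neg, map_add, map_add, hrow, hcol]

end SphericalLatinBitrade

/-! ### The bitrade of a map on the sphere -/

/-- The two orientations `(e, false)` and `(e, true)` of each edge `e` of a graph. -/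
abbrev Dart (E : Type) : Type := E × Bool

namespace Dart

variable {E : Type}

/-- The other orientation of the same edge. -/
def rev (d : Dart E) : Dart E := (d.1, !d.2)

@[simp]
theorem rev_rev (d : Dart E) : d.rev.rev = d := by
  simp [rev]

theorem rev_surjective : Function.Surjective (rev (E := E)) :=
  Function.Involutive.surjective rev_rev

theorem eq_or_eq_rev_of_fst_eq {d d' : Dart E} (h : d'.1 = d.1) : d' = d ∨ d' = d.rev := by
  obtain ⟨e, b⟩ := d
  obtain ⟨e', b'⟩ := d'
  obtain rfl : e' = e := h
  cases b <;> cases b' <;> simp [rev]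

end Dart

section Rotation

variable {V F E : Type} (vert : Dart E → V) (face : Dart E → F)

/-- The dart `d'` comes right after `d` in the counterclockwise rotation around their common
origin. As `vert` gives the origin of a dart and `face` the face on its left, the face on the left
of `d` has to be the one on the right of `d'`. -/
def IsNext (d d' : Dart E) : Prop :=
  vert d' = vert d ∧ face d'.rev = face d

theorem isNext_comp_rev {vert : Dart E → V} {face : Dart E → F} {d d' : Dart E} :
    IsNext vert (face ∘ Dart.rev) d d' ↔ IsNext vert face d' d := by
  simp [IsNext, eq_comm]

/-- Some dart of `e'` comes right after some dart of `e` in the rotation around a vertex. -/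
def CornerAdj (e e' : E) : Prop :=
  ∃ b b', IsNext vert face (e, b) (e', b')

end Rotation

/-- A cellular embedding in the sphere of a connected graph without loops and bridges, such that a
vertex and a face meet in at most one corner. A dart `d` has an origin `vert d` and a face `face d`
on its left; it stands for the corner of `face d` that follows `d` in the counterclockwise rotation
around `vert d`. -/
structure SphereMap (V F E : Type) [Fintype V] [Fintype F] [Fintype E] where
  vert : Dart E → V
  face : Dart E → F
  vert_rev_ne (d : Dart E) : vert d.rev ≠ vert d
  face_rev_ne (d : Dart E) : face d.rev ≠ face d
  vert_surjective : Function.Surjective vert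
  face_surjective : Function.Surjective face
  corner_inj {d d' : Dart E} : vert d = vert d' → face d = face d' → d = d'
  exists_isNext (d : Dart E) : ∃ d', IsNext vert face d d'
  eqvGen_cornerAdj (e e' : E) : Relation.EqvGen (CornerAdj vert face) e e'
  euler : Fintype.card V + Fintype.card F = Fintype.card E + 2

namespace SphereMap

variable {V F E : Type} [Fintype V] [Fintype F] [Fintype E] (M : SphereMap V F E)

theorem exists_surjective_isNext :
    ∃ next : Dart E → Dart E, Function.Surjective next ∧
      ∀ d, IsNext M.vert M.face d (next d) := by
  choose next hnext using M.exists_isNext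
  have next_injective : Function.Injective next := fun d d' h =>
    M.corner_inj ((hnext d).1.symm.trans (h ▸ (hnext d').1))
      ((hnext d).2.symm.trans (h ▸ (hnext d').2))
  exact ⟨next, Finite.surjective_of_injective next_injective, hnext⟩

theorem corner_rev_inj {d d' : Dart E} (hvert : M.vert d = M.vert d')
    (hface : M.face d.rev = M.face d'.rev) : d = d' := by
  obtain ⟨next, next_surjective, hnext⟩ := M.exists_surjective_isNext
  obtain ⟨c, rfl⟩ := next_surjective d
  obtain ⟨c', rfl⟩ := next_surjective d'
  have c_eq : c = c' := M.corner_inj ((hnext c).1.symm.trans (hvert.trans (hnext c').1))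
    ((hnext c).2.symm.trans (hface.trans (hnext c').2))
  rw [c_eq]

/-- The image of a map under an orientation-reversing homeomorphism of the sphere. -/
def mirror : SphereMap V F E where
  vert := M.vert
  face := M.face ∘ Dart.rev
  vert_rev_ne := M.vert_rev_ne
  face_rev_ne d := M.face_rev_ne d.rev
  vert_surjective := M.vert_surjective
  face_surjective := M.face_surjective.comp Dart.rev_surjective
  corner_inj := M.corner_rev_inj
  exists_isNext d := by
    obtain ⟨next, next_surjective, hnext⟩ := M.exists_surjective_isNext
    obtain ⟨c, rfl⟩ := next_surjective d
    exact ⟨c, isNext_comp_rev.2 (hnext c)⟩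
  eqvGen_cornerAdj := by
    refine fun e e' => Relation.EqvGen.eqvGen_le ?_ e e' (M.eqvGen_cornerAdj e e')
    rintro _ _ ⟨b, b', h⟩
    exact .symm _ _ (.rel _ _ ⟨b', b, isNext_comp_rev.2 h⟩)
  euler := M.euler

theorem mirror_mirror : M.mirror.mirror = M := by
  simp [mirror, Function.comp_assoc, show Dart.rev (E := E) ∘ Dart.rev = id from
    funext Dart.rev_rev]

/-- The vertex, the face and the edge of a dart; here a dart stands for one of the flags of the map
that have a given orientation. -/
def corner (d : Dart E) : V × F × E := (M.vert d, M.face d, d.1)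

/-- The triples of the flags of one orientation, which are one half of the bitrade of a map. The
other half is that of the mirror image. -/
def trade : Finset (V × F × E) :=
  Finset.univ.map ⟨M.corner, fun _ _ h => M.corner_inj (congrArg (·.1) h) (congrArg (·.2.1) h)⟩

theorem mem_trade {t : V × F × E} : t ∈ M.trade ↔ ∃ d, M.corner d = t := by
  simp only [trade, Finset.mem_map, Finset.mem_univ, true_and]
  rfl

theorem corner_mem_trade (d : Dart E) : M.corner d ∈ M.trade :=
  M.mem_trade.2 ⟨d, rfl⟩

theorem card_trade : M.trade.card = 2 * Fintype.card E := by
  simp [trade, mul_comm]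

theorem isPartialLatinSquare_trade : IsPartialLatinSquare M.trade := by
  refine ⟨?_, fun v => ?_, fun f => ?_, fun e => ⟨_, M.corner_mem_trade (e, false), rfl⟩⟩
  · simp only [mem_trade]
    rintro _ ⟨d, rfl⟩ _ ⟨d', rfl⟩ hne
    have d_ne : d ≠ d' := fun h => hne (h ▸ rfl)
    refine ⟨fun h => d_ne (M.corner_inj h.1 h.2), fun ⟨hvert, hedge⟩ => ?_,
      fun ⟨hface, hedge⟩ => ?_⟩
    · obtain rfl := (Dart.eq_or_eq_rev_of_fst_eq hedge).resolve_left d_ne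
      exact M.vert_rev_ne d' hvert
    · obtain rfl := (Dart.eq_or_eq_rev_of_fst_eq hedge).resolve_left d_ne
      exact M.face_rev_ne d' hface
  · obtain ⟨d, rfl⟩ := M.vert_surjective v
    exact ⟨_, M.corner_mem_trade d, rfl⟩
  · obtain ⟨d, rfl⟩ := M.face_surjective f
    exact ⟨_, M.corner_mem_trade d, rfl⟩

theorem disjoint_trade_mirror : Disjoint M.trade M.mirror.trade := by
  rw [Finset.disjoint_left]
  simp only [mem_trade]
  rintro _ ⟨d, rfl⟩ ⟨d', h⟩
  have hvert : M.vert d' = M.vert d := congrArg (·.1) h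
  have hface : M.face d'.rev = M.face d := congrArg (·.2.1) h
  rcases Dart.eq_or_eq_rev_of_fst_eq (congrArg (·.2.2) h : d'.1 = d.1) with rfl | rfl
  · exact M.face_rev_ne _ hface
  · exact M.vert_rev_ne _ hvert

theorem mirror_corner_rev (d : Dart E) : M.mirror.corner d.rev = (M.vert d.rev, M.face d, d.1) := by
  simp [corner, mirror, Dart.rev]

theorem mirror_corner_of_isNext {d d' : Dart E} (h : IsNext M.vert M.face d d') :
    M.mirror.corner d' = (M.vert d, M.face d, d'.1) :=
  Prod.ext h.1 (Prod.ext h.2 rfl)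

theorem tradeCond_trade_mirror : TradeCond M.trade M.mirror.trade := by
  refine M.mirror.isPartialLatinSquare_trade.tradeCond_of_disjoint M.disjoint_trade_mirror
    (fun v f e h => ?_) (fun v f e h => ?_) (fun v f e h => ?_) <;>
  obtain ⟨d, hd⟩ := M.mem_trade.1 h <;> cases hd
  · exact ⟨_, M.mirror_corner_rev d ▸ M.mirror.corner_mem_trade d.rev⟩
  · exact ⟨_, M.mirror.corner_mem_trade d⟩
  · obtain ⟨d', hd'⟩ := M.exists_isNext d
    exact ⟨_, M.mirror_corner_of_isNext hd' ▸ M.mirror.corner_mem_trade d'⟩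

section Connected

variable {M} {W B : Finset (V × F × E)}

theorem mirror_corner_mem_of_corner_mem (hB : B ⊆ M.mirror.trade) (hWB : TradeCond W B)
    {d : Dart E} (hd : M.corner d ∈ W) : M.mirror.corner d ∈ B :=
  hWB.mem_of_col M.mirror.isPartialLatinSquare_trade hB hd (M.mirror.corner_mem_trade d)

theorem corner_mem_of_mirror_corner_mem (hW : W ⊆ M.trade) (hBW : TradeCond B W)
    {d : Dart E} (hd : M.mirror.corner d ∈ B) : M.corner d ∈ W :=
  hBW.mem_of_col M.isPartialLatinSquare_trade hW hd (M.corner_mem_trade d)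

theorem corner_mem_of_fst_eq (hW : W ⊆ M.trade) (hB : B ⊆ M.mirror.trade)
    (hWB : TradeCond W B) (hBW : TradeCond B W) {d d' : Dart E} (h : d'.1 = d.1)
    (hd : M.corner d ∈ W) : M.corner d' ∈ W := by
  rcases Dart.eq_or_eq_rev_of_fst_eq h with rfl | rfl
  · exact hd
  · exact hBW.mem_of_row M.isPartialLatinSquare_trade hW
      (mirror_corner_mem_of_corner_mem hB hWB hd) (M.corner_mem_trade d.rev)

theorem corner_mem_iff_of_isNext (hW : W ⊆ M.trade) (hB : B ⊆ M.mirror.trade)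
    (hWB : TradeCond W B) (hBW : TradeCond B W) {d d' : Dart E} (h : IsNext M.vert M.face d d') :
    M.corner d ∈ W ↔ M.corner d' ∈ W := by
  have mirror_corner_mem := M.mirror_corner_of_isNext h ▸ M.mirror.corner_mem_trade d'
  refine ⟨fun hd => corner_mem_of_mirror_corner_mem hW hBW ?_, fun hd' => ?_⟩
  · rw [M.mirror_corner_of_isNext h]
    exact hWB.mem_of_sym M.mirror.isPartialLatinSquare_trade hB hd mirror_corner_mem
  · have mem_B := mirror_corner_mem_of_corner_mem hB hWB hd'
    rw [M.mirror_corner_of_isNext h] at mem_B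
    exact hBW.mem_of_sym M.isPartialLatinSquare_trade hW mem_B (M.corner_mem_trade d)

theorem eq_trade_of_tradeCond (hW : W ⊆ M.trade) (hB : B ⊆ M.mirror.trade)
    (hWB : TradeCond W B) (hBW : TradeCond B W) (hne : W.Nonempty) : W = M.trade := by
  refine hW.antisymm fun t ht => ?_
  obtain ⟨d', rfl⟩ := M.mem_trade.1 ht
  obtain ⟨t₀, ht₀⟩ := hne
  obtain ⟨d, rfl⟩ := M.mem_trade.1 (hW ht₀)
  have mem_iff_of_eqvGen {e e' : E} (h : Relation.EqvGen (CornerAdj M.vert M.face) e e') :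
      M.corner (e, false) ∈ W ↔ M.corner (e', false) ∈ W := by
    induction h with
    | rel _ _ h =>
      obtain ⟨b, b', h⟩ := h
      have move {e : E} {b b' : Bool} : M.corner (e, b) ∈ W → M.corner (e, b') ∈ W :=
        corner_mem_of_fst_eq hW hB hWB hBW rfl
      have step := corner_mem_iff_of_isNext hW hB hWB hBW h
      exact ⟨fun hd => move (step.1 (move hd)), fun hd => move (step.2 (move hd))⟩
    | refl => rfl
    | symm _ _ _ ih => exact ih.symm
    | trans _ _ _ _ _ ih ih' => exact ih.trans ih'
  exact corner_mem_of_fst_eq (d := (d'.1, false)) hW hB hWB hBW rfl <|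
    (mem_iff_of_eqvGen (M.eqvGen_cornerAdj d.1 d'.1)).1 <|
    corner_mem_of_fst_eq (d := d) hW hB hWB hBW rfl ht₀

end Connected

theorem trade_nonempty : M.trade.Nonempty := by
  have card_pos : 0 < Fintype.card V + Fintype.card F := by
    rw [M.euler]
    omega
  rcases Nat.add_pos_iff_pos_or_pos.1 card_pos with h | h
  · obtain ⟨v⟩ := Fintype.card_pos_iff.1 h
    obtain ⟨d, -⟩ := M.vert_surjective v
    exact ⟨_, M.corner_mem_trade d⟩
  · obtain ⟨f⟩ := Fintype.card_pos_iff.1 h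
    obtain ⟨d, -⟩ := M.face_surjective f
    exact ⟨_, M.corner_mem_trade d⟩

/-- The spherical latin bitrade of a map on the sphere, with the vertices as rows, the faces as
columns and the edges as symbols. -/
def bitrade : SphericalLatinBitrade where
  R := V
  C := F
  S := E
  instR := inferInstance
  instC := inferInstance
  instS := inferInstance
  W := M.trade
  B := M.mirror.trade
  W_nonempty := M.trade_nonempty
  B_nonempty := M.mirror.trade_nonempty
  W_pls := M.isPartialLatinSquare_trade
  B_pls := M.mirror.isPartialLatinSquare_trade
  tradeWB := M.tradeCond_trade_mirror
  tradeBW := by simpa only [mirror_mirror] using M.mirror.tradeCond_trade_mirror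
  connected := fun ⟨_, _, hW, hB, hne, _, hWB, hBW⟩ =>
    hW.ne (eq_trade_of_tradeCond hW.subset hB.subset hWB hBW hne)
  spherical := by
    have euler := M.euler
    rw [card_trade]
    omega

section Group

/-- The class of a vertex, as a row, in the group `A_W` of the bitrade of a map. -/
def vertClass (v : V) : groupAW M.bitrade := M.bitrade.gen (.inl v)

/-- The class of a face, as a column, in the group `A_W` of the bitrade of a map. -/
def faceClass (f : F) : groupAW M.bitrade := M.bitrade.gen (.inr (.inl f))

variable {A : Type*} [AddCommGroup A]

/-- Labels `x` of the vertices and `y` of the faces which extend to labels of the edges satisfying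
the relations of `A_W`: the two corners at an edge prescribe the same label of that edge. -/
def IsBalanced (x : V → A) (y : F → A) : Prop :=
  ∀ e, x (M.vert (e, false)) + y (M.face (e, false)) = x (M.vert (e, true)) + y (M.face (e, true))

theorem isBalanced_vertClass_faceClass : M.IsBalanced M.vertClass M.faceClass := fun e =>
  (eq_neg_of_add_eq_zero_left (M.bitrade.gen_add_gen_add_gen (M.corner_mem_trade (e, false)))).trans
    (eq_neg_of_add_eq_zero_left
      (M.bitrade.gen_add_gen_add_gen (M.corner_mem_trade (e, true)))).symm

variable {M}

/-- The homomorphism from `A_W` induced by balanced labels. -/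
def IsBalanced.lift {x : V → A} {y : F → A} (h : M.IsBalanced x y) : groupAW M.bitrade →+ A :=
  SphericalLatinBitrade.lift (T := M.bitrade)
    (Sum.elim x (Sum.elim y fun e => -(x (M.vert (e, false)) + y (M.face (e, false))))) <| by
    intro t ht
    obtain ⟨⟨e, b⟩, rfl⟩ := M.mem_trade.1 ht
    cases b
    · exact add_neg_cancel _
    · exact add_neg_eq_zero.2 (h e).symm

theorem IsBalanced.lift_vertClass {x : V → A} {y : F → A} (h : M.IsBalanced x y) (v : V) :
    h.lift (M.vertClass v) = x v :=
  SphericalLatinBitrade.lift_gen _ _ _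

theorem IsBalanced.lift_faceClass {x : V → A} {y : F → A} (h : M.IsBalanced x y) (f : F) :
    h.lift (M.faceClass f) = y f :=
  SphericalLatinBitrade.lift_gen _ _ _

theorem hom_ext_of_vertClass_of_faceClass {f g : groupAW M.bitrade →+ A}
    (hvert : ∀ v, f (M.vertClass v) = g (M.vertClass v))
    (hface : ∀ c, f (M.faceClass c) = g (M.faceClass c)) : f = g :=
  SphericalLatinBitrade.hom_ext hvert hface

end Group

end SphereMap

/-! ### Subdivisions of `K₄` -/

namespace SubdividedK4

/-- The edges of the three legs of a subdivided claw: the leg `i` is a path of `m i` edges, numbered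
from the common apex of the legs. -/
abbrev Leg (m : Fin 3 → ℕ) : Type := Σ i, Fin (m i)

/-- The vertices of a subdivided claw: the apex `none`, and the end `some y` farther from the apex
of each edge `y` of a leg. -/
abbrev Node (m : Fin 3 → ℕ) : Type := Option (Leg m)

/-- The edges of the subdivided `K₄`: the edges `Sum.inl y` of the legs, and a copy `Sum.inr (i, k)`
of the edge joining the tips of the legs `i + 1` and `i + 2` for each edge `(i, k)` of the
leg `i`. -/
abbrev Edge (m : Fin 3 → ℕ) : Type := Leg m ⊕ Leg m

variable {m : Fin 3 → ℕ}

/-- The node at distance `k` from the apex on the leg `i`. For `k > m i` it has the junk value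
`none`. -/
def node (i : Fin 3) : ℕ → Node m
  | 0 => none
  | k + 1 => if h : k < m i then some ⟨i, k, h⟩ else none

theorem node_succ {i : Fin 3} {k : ℕ} (h : k < m i) : (node i (k + 1) : Node m) = some ⟨i, k, h⟩ :=
  dif_pos h

theorem node_eq_node_iff {i j : Fin 3} {k l : ℕ} (hk : k ≤ m i) (hl : l ≤ m j) :
    (node i k : Node m) = node j l ↔ k = 0 ∧ l = 0 ∨ i = j ∧ k = l := by
  rcases k with _ | k <;> rcases l with _ | l
  · simp [node]
  · simp [node, Nat.lt_of_succ_le hl]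
  · simp [node, Nat.lt_of_succ_le hk]
  · rw [node_succ hk, node_succ hl, Option.some_inj, Sigma.mk.injEq]
    constructor
    · rintro ⟨rfl, h⟩
      simpa using h
    · rintro (h | ⟨rfl, h⟩)
      · simp at h
      · obtain rfl : k = l := by simpa using h
        simp

/-- The end of the leg `i` farther from the apex. -/
def tip (i : Fin 3) : Node m := node i (m i)

/-- The origin of a dart on a leg; the dart `(y, false)` points away from the apex. -/
def legEnd (d : Dart (Leg m)) : Node m := node d.1.1 (d.1.2 + d.2.toNat)

/-- The origin of a dart on an edge joining two tips. -/
def rimEnd (d : Dart (Leg m)) : Node m := tip (d.1.1 + bif d.2 then 1 else 2)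

/-- The origin of a dart of the subdivided `K₄`. -/
def vert : Dart (Edge m) → Node m
  | (.inl y, b) => legEnd (y, b)
  | (.inr y, b) => rimEnd (y, b)

/-- The face on the left of a dart of the subdivided `K₄`. This map is self-dual: its faces are
labelled by the nodes in such a way that duality exchanges `Sum.inl y` and `Sum.inr y`. -/
def face (d : Dart (Edge m)) : Node m := vert (d.1.swap, d.2)

theorem tip_inj (hm : ∀ i, 0 < m i) {i j : Fin 3} : (tip i : Node m) = tip j ↔ i = j := by
  rw [tip, tip, node_eq_node_iff le_rfl le_rfl]
  have := hm i
  constructor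
  · rintro (h | h)
    · omega
    · exact h.1
  · rintro rfl
    exact .inr ⟨rfl, rfl⟩

theorem height_le (d : Dart (Leg m)) : d.1.2 + d.2.toNat ≤ m d.1.1 := by
  have := d.1.2.isLt
  have := d.2.toNat_le
  omega

theorem legEnd_eq_tip_iff (hm : ∀ i, 0 < m i) {d : Dart (Leg m)} {j : Fin 3} :
    legEnd d = tip j ↔ d.1.1 = j ∧ d.1.2 + d.2.toNat = m j := by
  rw [legEnd, tip, node_eq_node_iff (height_le d) le_rfl]
  have := hm j
  omega

theorem legEnd_eq_tip (hm : ∀ i, 0 < m i) {d : Dart (Leg m)} {j : Fin 3} (h : legEnd d = tip j) :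
    d.1.1 = j ∧ d.2 = true := by
  obtain ⟨⟨i, k⟩, b⟩ := d
  obtain ⟨rfl, h⟩ := (legEnd_eq_tip_iff hm).1 h
  cases b
  · exact absurd h k.isLt.ne
  · exact ⟨rfl, rfl⟩

theorem legEnd_rimEnd_inj (hm : ∀ i, 0 < m i) {d d' : Dart (Leg m)} (hleg : legEnd d = legEnd d')
    (hrim : rimEnd d = rimEnd d') : d = d' := by
  obtain ⟨⟨i, k⟩, b⟩ := d
  obtain ⟨⟨j, l⟩, b'⟩ := d'
  replace hleg := (node_eq_node_iff (height_le _) (height_le _)).1 hleg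
  replace hrim : (i + bif b then 1 else 2) = j + bif b' then 1 else 2 := (tip_inj hm).1 hrim
  have bool_eq : b = b' := by
    rcases hleg with ⟨h, h'⟩ | ⟨rfl, -⟩
    · cases b <;> cases b' <;> simp_all
    · cases b <;> cases b' <;> simp_all
  subst bool_eq
  obtain rfl : i = j := add_right_cancel hrim
  obtain rfl : k = l := by
    ext
    simp only at hleg
    omega
  rfl

theorem legEnd_ne_rimEnd_of_rimEnd_eq_legEnd (hm : ∀ i, 0 < m i) {d d' : Dart (Leg m)}
    (h : rimEnd d = legEnd d') : legEnd d ≠ rimEnd d' := by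
  intro h'
  obtain ⟨hi, hb⟩ := legEnd_eq_tip hm h'
  obtain ⟨hi', hb'⟩ := legEnd_eq_tip hm h.symm
  rw [hb', hi', hb] at hi
  revert hi
  generalize d.1.1 = i
  revert i
  decide

theorem corner_inj (hm : ∀ i, 0 < m i) {d d' : Dart (Edge m)} (hvert : vert d = vert d')
    (hface : face d = face d') : d = d' := by
  obtain ⟨y | y, b⟩ := d <;> obtain ⟨z | z, b'⟩ := d'
  · cases legEnd_rimEnd_inj hm hvert hface
    rfl
  · exact absurd hvert (legEnd_ne_rimEnd_of_rimEnd_eq_legEnd hm hface)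
  · exact absurd hface (legEnd_ne_rimEnd_of_rimEnd_eq_legEnd hm hvert)
  · cases legEnd_rimEnd_inj hm hface hvert
    rfl

theorem vert_rev_ne (hm : ∀ i, 0 < m i) (d : Dart (Edge m)) : vert d.rev ≠ vert d := by
  obtain ⟨y | y, b⟩ := d
  · intro h
    replace h := (node_eq_node_iff (height_le _) (height_le _)).1 h
    cases b <;> simp at h
  · intro h
    replace h := (tip_inj hm).1 h
    cases b <;> simp at h

theorem vert_surjective (hm : ∀ i, 0 < m i) : Function.Surjective (vert (m := m)) := by
  rintro (_ | ⟨i, k⟩)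
  · exact ⟨(.inl ⟨0, 0, hm 0⟩, false), rfl⟩
  · exact ⟨(.inl ⟨i, k⟩, true), node_succ k.isLt⟩

theorem face_surjective (hm : ∀ i, 0 < m i) : Function.Surjective (face (m := m)) := by
  intro f
  obtain ⟨d, rfl⟩ := vert_surjective hm f
  exact ⟨(d.1.swap, d.2), by simp [face]⟩

theorem isNext_swap {d d' : Dart (Edge m)} (h : IsNext vert face d d') :
    IsNext vert face (d.1.swap, d.2) (d'.1.swap, !d'.2) := by
  refine ⟨h.2, ?_⟩
  simpa [face, Dart.rev] using h.1

theorem isNext_leg_outward {i : Fin 3} {k : ℕ} (h : k + 1 < m i) :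
    IsNext vert face (.inl ⟨i, k, by omega⟩, true) (.inl ⟨i, k + 1, h⟩, false) :=
  ⟨rfl, rfl⟩

theorem isNext_leg_inward {i : Fin 3} {k : ℕ} (h : k + 1 < m i) :
    IsNext vert face (.inl ⟨i, k + 1, h⟩, false) (.inl ⟨i, k, by omega⟩, true) :=
  ⟨rfl, rfl⟩

theorem isNext_apex (hm : ∀ i, 0 < m i) (i : Fin 3) :
    IsNext vert face (.inl ⟨i, 0, hm i⟩, false) (.inl ⟨i + 1, 0, hm (i + 1)⟩, false) :=
  ⟨rfl, congrArg tip (add_assoc i 1 1)⟩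

theorem isNext_tip {i : Fin 3} {k l : ℕ} (hk : k + 1 = m i) (hl : l + 1 = m (i + 1)) :
    IsNext (vert (m := m)) face (.inl ⟨i, k, by omega⟩, true)
      (.inr ⟨i + 1, l, by omega⟩, false) := by
  have add_one_add_two : i + 1 + 2 = i := by fin_cases i <;> rfl
  exact ⟨(congrArg tip add_one_add_two).trans (congrArg (node i) hk.symm),
    congrArg (node (i + 1)) hl⟩

theorem exists_isNext (hm : ∀ i, 0 < m i) (d : Dart (Edge m)) : ∃ d', IsNext vert face d d' := by
  have exists_isNext_inl (y : Leg m) (b : Bool) : ∃ d', IsNext vert face (.inl y, b) d' := by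
    obtain ⟨i, k, hk⟩ := y
    cases b
    · rcases k with _ | k
      · exact ⟨_, isNext_apex hm i⟩
      · exact ⟨_, isNext_leg_inward hk⟩
    · rcases Nat.lt_or_eq_of_le (Nat.succ_le_of_lt hk) with h | h
      · exact ⟨_, isNext_leg_outward h⟩
      · exact ⟨_, isNext_tip h (Nat.sub_add_cancel (hm (i + 1)))⟩
  obtain ⟨y | y, b⟩ := d
  · exact exists_isNext_inl y b
  · obtain ⟨d', h⟩ := exists_isNext_inl y b
    exact ⟨_, isNext_swap h⟩

/-- Two edges lie in the same component of the graph of consecutive edges around the vertices. -/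
def Linked : Edge m → Edge m → Prop :=
  Relation.EqvGen (CornerAdj vert face)

theorem linked_of_isNext {d d' : Dart (Edge m)} (h : IsNext vert face d d') : Linked d.1 d'.1 :=
  .rel _ _ ⟨d.2, d'.2, h⟩

theorem Linked.swap {e e' : Edge m} (h : Linked e e') : Linked e.swap e'.swap := by
  induction h with
  | rel _ _ h =>
    obtain ⟨b, b', h⟩ := h
    exact .rel _ _ ⟨b, !b', isNext_swap h⟩
  | refl => exact .refl _
  | symm _ _ _ ih => exact .symm _ _ ih
  | trans _ _ _ _ _ ih ih' => exact .trans _ _ _ ih ih'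

theorem linked_inl_apex (hm : ∀ i, 0 < m i) (y : Leg m) :
    Linked (.inl y) (.inl ⟨0, 0, hm 0⟩) := by
  have linked_leg (i : Fin 3) (k : ℕ) (hk : k < m i) :
      Linked (m := m) (.inl ⟨i, k, hk⟩) (.inl ⟨i, 0, hm i⟩) := by
    induction k with
    | zero => exact .refl _
    | succ k ih => exact .trans _ _ _ (linked_of_isNext (isNext_leg_inward hk)) (ih (by omega))
  have linked_apex : ∀ i, Linked (m := m) (.inl ⟨i, 0, hm i⟩) (.inl ⟨0, 0, hm 0⟩)
    | 0 => .refl _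
    | 1 => .symm _ _ (linked_of_isNext (isNext_apex hm 0))
    | 2 => linked_of_isNext (isNext_apex hm 2)
  exact .trans _ _ _ (linked_leg _ _ _) (linked_apex _)

theorem linked (hm : ∀ i, 0 < m i) (e e' : Edge m) : Linked e e' := by
  have linked_inr_apex (y : Leg m) : Linked (.inr y) (.inr ⟨0, 0, hm 0⟩) :=
    (linked_inl_apex hm y).swap
  have linked_inl_inr : Linked (m := m) (.inl ⟨0, 0, hm 0⟩) (.inr ⟨0, 0, hm 0⟩) :=
    .trans _ _ _ (.symm _ _ (linked_inl_apex hm _)) <|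
      .trans _ _ _ (linked_of_isNext <| isNext_tip (i := 0) (Nat.sub_add_cancel (hm _))
        (Nat.sub_add_cancel (hm _))) (linked_inr_apex _)
  have linked_base : ∀ e : Edge m, Linked e (.inr ⟨0, 0, hm 0⟩)
    | .inl y => .trans _ _ _ (linked_inl_apex hm y) linked_inl_inr
    | .inr y => linked_inr_apex y
  exact .trans _ _ _ (linked_base e) (.symm _ _ (linked_base e'))

/-- The map on the sphere obtained from `K₄` by subdividing the three edges at the apex into paths
of `m 0`, `m 1` and `m 2` edges, and taking `m i` parallel copies of the edge opposite to the
`i`-th of them. -/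
def sphereMap (hm : ∀ i, 0 < m i) : SphereMap (Node m) (Node m) (Edge m) where
  vert := vert
  face := face
  vert_rev_ne := vert_rev_ne hm
  face_rev_ne d := vert_rev_ne hm (d.1.swap, d.2)
  vert_surjective := vert_surjective hm
  face_surjective := face_surjective hm
  corner_inj := corner_inj hm
  exists_isNext := exists_isNext hm
  eqvGen_cornerAdj := linked hm
  euler := by
    simp only [Fintype.card_option, Fintype.card_sum]
    omega

/-! ### Balanced labels -/

section Slopes

variable {A B : Type*} [AddCommGroup A] [AddCommGroup B]

/-- The differences of the labels of the two tips other than the `i`-th one. -/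
def tipDiff (x : Node m → A) (i : Fin 3) : A := x (tip (i + 2)) - x (tip (i + 1))

/-- The labels of the nodes which take the value `x₀` at the apex and increase by `β i` along each
edge of the leg `i`. -/
def affine (x₀ : A) (β : Fin 3 → A) : Node m → A
  | none => x₀
  | some y => x₀ + ((y.2 : ℕ) + 1) • β y.1

variable (m) in
/-- The tip differences of affine labels with slopes `β`. -/
def cyclicDiff (β : Fin 3 → A) (i : Fin 3) : A :=
  m (i + 2) • β (i + 2) - m (i + 1) • β (i + 1)

theorem comp_tipDiff (g : A →+ B) (x : Node m → A) : g ∘ tipDiff x = tipDiff (g ∘ x) :=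
  funext fun _ => map_sub g _ _

theorem comp_affine (g : A →+ B) (x₀ : A) (β : Fin 3 → A) :
    g ∘ affine (m := m) x₀ β = affine (g x₀) (g ∘ β) := by
  ext (_ | y)
  · rfl
  · simp [affine]

theorem comp_cyclicDiff (g : A →+ B) (β : Fin 3 → A) :
    g ∘ cyclicDiff m β = cyclicDiff m (g ∘ β) := by
  ext i
  simp [cyclicDiff]

theorem affine_node (x₀ : A) (β : Fin 3 → A) {i : Fin 3} {k : ℕ} (h : k ≤ m i) :
    affine (m := m) x₀ β (node i k) = x₀ + k • β i := by
  rcases k with _ | k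
  · simp [node, affine]
  · rw [node_succ h, affine]

theorem tipDiff_affine (x₀ : A) (β : Fin 3 → A) :
    tipDiff (affine (m := m) x₀ β) = cyclicDiff m β := by
  ext i
  simp only [tipDiff, tip, affine_node _ _ le_rfl, cyclicDiff, add_sub_add_left_eq_sub]

theorem eq_affine_iff {x : Node m → A} {β : Fin 3 → A} :
    x = affine (x none) β ↔ ∀ y, x (legEnd (y, true)) = x (legEnd (y, false)) + β y.1 := by
  constructor
  · intro h y
    rw [h, legEnd, legEnd, affine_node _ _ (height_le _), affine_node _ _ (height_le _)]
    simp [add_smul, add_assoc]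
  · intro h
    have apply_node (i : Fin 3) (k : ℕ) (hk : k ≤ m i) : x (node i k) = x none + k • β i := by
      induction k with
      | zero => simp [node]
      | succ k ih =>
        rw [succ_nsmul, ← add_assoc, ← ih (by omega)]
        exact h ⟨i, k, hk⟩
    ext (_ | ⟨i, k⟩)
    · rfl
    · rw [← node_succ k.isLt, apply_node i _ k.isLt, affine_node _ _ k.isLt]

theorem isBalanced_iff (hm : ∀ i, 0 < m i) {x y : Node m → A} :
    (sphereMap hm).IsBalanced x y ↔
      x = affine (x none) (tipDiff y) ∧ y = affine (y none) (tipDiff x) := by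
  have balance_iff (p q s t : A) : p + s = q + t ↔ q = p + (s - t) := by
    rw [← add_sub_assoc, eq_sub_iff_add_eq, eq_comm]
  rw [eq_affine_iff, eq_affine_iff, SphereMap.IsBalanced, Sum.forall]
  refine and_congr (forall_congr' fun z => balance_iff _ _ _ _) (forall_congr' fun z => ?_)
  rw [add_comm, add_comm (x _)]
  exact balance_iff _ _ _ _

theorem isBalanced_affine (hm : ∀ i, 0 < m i) (x₀ y₀ : A) {β : Fin 3 → A}
    (hβ : cyclicDiff m (cyclicDiff m β) = β) :
    (sphereMap hm).IsBalanced (affine x₀ β) (affine y₀ (cyclicDiff m β)) := by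
  rw [isBalanced_iff, tipDiff_affine, tipDiff_affine, hβ]
  exact ⟨rfl, rfl⟩

theorem sum_tipDiff (x : Node m → A) : ∑ i, tipDiff x i = 0 := by
  simp only [Fin.sum_univ_three, tipDiff, Fin.reduceAdd]
  abel

variable (m) in
theorem cyclicDiff_cyclicDiff {β : Fin 3 → A} (hβ : ∑ i, β i = 0) (i : Fin 3) :
    cyclicDiff m (cyclicDiff m β) i = -((m 0 * m 1 + m 1 * m 2 + m 0 * m 2) • β i) := by
  have hβ₂ : β 2 = -β 0 - β 1 := by
    rw [Fin.sum_univ_three] at hβ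
    rw [eq_sub_iff_add_eq, eq_neg_iff_add_eq_zero, ← hβ]
    abel
  fin_cases i <;> simp [cyclicDiff, hβ₂] <;> module

/-- The exponent of the canonical group of the subdivided `K₄`. -/
def torsionExponent (m : Fin 3 → ℕ) : ℕ := m 0 * m 1 + m 1 * m 2 + m 0 * m 2 + 1

instance : NeZero (torsionExponent m) := ⟨Nat.succ_ne_zero _⟩

theorem cyclicDiff_cyclicDiff_eq_self_iff {β : Fin 3 → A} (hβ : ∑ i, β i = 0) :
    cyclicDiff m (cyclicDiff m β) = β ↔ ∀ i, torsionExponent m • β i = 0 := by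
  simp only [funext_iff, cyclicDiff_cyclicDiff m hβ, torsionExponent, neg_eq_iff_add_eq_zero,
    succ_nsmul]

end Slopes

section GenericLabels

/-- Three elements of sum zero, the first two of which are the standard generators of `(ℤ/n)²`. -/
def genericSlope (n : ℕ) : Fin 3 → (ℤ × ℤ) × (ZMod n × ZMod n) :=
  ![(0, 1, 0), (0, 0, 1), (0, -1, -1)]

theorem sum_genericSlope (n : ℕ) : ∑ i, genericSlope n i = 0 := by
  simp [Fin.sum_univ_three, genericSlope]

variable (m) in
theorem cyclicDiff_cyclicDiff_genericSlope :
    cyclicDiff m (cyclicDiff m (genericSlope (torsionExponent m))) =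
      genericSlope (torsionExponent m) := by
  have nsmul_slope (i : Fin 3) : torsionExponent m • genericSlope (torsionExponent m) i = 0 := by
    fin_cases i <;> ext <;> simp [genericSlope]
  exact (cyclicDiff_cyclicDiff_eq_self_iff (sum_genericSlope (torsionExponent m))).2 nsmul_slope

variable (m) in
/-- The vertex labels of the universal pair of balanced labels. -/
def genericVert : Node m → (ℤ × ℤ) × (ZMod (torsionExponent m) × ZMod (torsionExponent m)) :=
  affine ((1, 0), 0) (genericSlope _)

variable (m) in
/-- The face labels of the universal pair of balanced labels. -/
def genericFace : Node m → (ℤ × ℤ) × (ZMod (torsionExponent m) × ZMod (torsionExponent m)) :=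
  affine ((0, 1), 0) (cyclicDiff m (genericSlope _))

theorem isBalanced_generic (hm : ∀ i, 0 < m i) :
    (sphereMap hm).IsBalanced (genericVert m) (genericFace m) :=
  isBalanced_affine hm _ _ (cyclicDiff_cyclicDiff_genericSlope m)

theorem tipDiff_genericFace : tipDiff (genericFace m) = genericSlope _ := by
  rw [genericFace, tipDiff_affine, cyclicDiff_cyclicDiff_genericSlope]

variable {A : Type*} [AddCommGroup A] {hm : ∀ i, 0 < m i} {x y : Node m → A}

theorem hom_ext_of_generic
    {f g : (ℤ × ℤ) × (ZMod (torsionExponent m) × ZMod (torsionExponent m)) →+ A}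
    (hvert : f ∘ genericVert m = g ∘ genericVert m)
    (hface : f ∘ genericFace m = g ∘ genericFace m) : f = g := by
  have vert_apex : f ((1, 0), 0) = g ((1, 0), 0) := congrFun hvert none
  have face_apex : f ((0, 1), 0) = g ((0, 1), 0) := congrFun hface none
  have slope (i : Fin 3) : f (genericSlope _ i) = g (genericSlope _ i) := by
    rw [← tipDiff_genericFace]
    refine congrFun (?_ : f ∘ _ = g ∘ _) i
    rw [comp_tipDiff, comp_tipDiff, hface]
  have slope_zero : f (0, (1, 0)) = g (0, (1, 0)) := slope 0
  have slope_one : f (0, (0, 1)) = g (0, (0, 1)) := slope 1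
  ext1 ⟨⟨p, q⟩, k, l⟩
  obtain ⟨k, rfl⟩ := ZMod.intCast_surjective k
  obtain ⟨l, rfl⟩ := ZMod.intCast_surjective l
  have eq_combination : (((p, q), (k, l)) :
      (ℤ × ℤ) × (ZMod (torsionExponent m) × ZMod (torsionExponent m))) =
      p • ((1, 0), 0) + q • ((0, 1), 0) + k • (0, (1, 0)) + l • (0, (0, 1)) := by
    simp
  simp only [eq_combination, map_add, map_zsmul, vert_apex, face_apex, slope_zero, slope_one]

theorem eq_affine_cyclicDiff_tipDiff (h : (sphereMap hm).IsBalanced x y) :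
    y = affine (y none) (cyclicDiff m (tipDiff y)) := by
  obtain ⟨vert_eq, face_eq⟩ := (isBalanced_iff hm).1 h
  rwa [vert_eq, tipDiff_affine] at face_eq

theorem torsionExponent_nsmul_tipDiff (h : (sphereMap hm).IsBalanced x y) (i : Fin 3) :
    torsionExponent m • tipDiff y i = 0 := by
  refine (cyclicDiff_cyclicDiff_eq_self_iff (sum_tipDiff _)).1 ?_ i
  conv_rhs => rw [eq_affine_cyclicDiff_tipDiff h, tipDiff_affine]

/-- The homomorphism which carries the universal pair of balanced labels to a given pair. -/
def specialize (h : (sphereMap hm).IsBalanced x y) :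
    (ℤ × ℤ) × (ZMod (torsionExponent m) × ZMod (torsionExponent m)) →+ A :=
  intZModProdLift (x none) (y none) (tipDiff y 0) (tipDiff y 1)
    (torsionExponent_nsmul_tipDiff h 0) (torsionExponent_nsmul_tipDiff h 1)

theorem specialize_intCast (h : (sphereMap hm).IsBalanced x y) (p q k l : ℤ) :
    specialize h ((p, q), (k, l)) =
      p • x none + q • y none + (k • tipDiff y 0 + l • tipDiff y 1) :=
  intZModProdLift_intCast _ _ _ _ _ _ p q k l

theorem specialize_comp_genericSlope (h : (sphereMap hm).IsBalanced x y) :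
    specialize h ∘ genericSlope _ = tipDiff y := by
  have tipDiff_two : tipDiff y 2 = -tipDiff y 0 - tipDiff y 1 := by
    have sum_eq := sum_tipDiff y
    rw [Fin.sum_univ_three] at sum_eq
    rw [← neg_add', neg_eq_of_add_eq_zero_right sum_eq]
  funext i
  fin_cases i
  · simpa [genericSlope, Prod.mk_zero_zero] using specialize_intCast h 0 0 1 0
  · simpa [genericSlope, Prod.mk_zero_zero] using specialize_intCast h 0 0 0 1
  · simpa [genericSlope, Prod.mk_zero_zero, tipDiff_two, sub_eq_add_neg] using
      specialize_intCast h 0 0 (-1) (-1)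

theorem specialize_comp_genericVert (h : (sphereMap hm).IsBalanced x y) :
    specialize h ∘ genericVert m = x := by
  have apply_apex : specialize h ((1, 0), 0) = x none := by
    simpa [Prod.mk_zero_zero] using specialize_intCast h 1 0 0 0
  rw [genericVert, comp_affine, apply_apex, specialize_comp_genericSlope,
    ← ((isBalanced_iff hm).1 h).1]

theorem specialize_comp_genericFace (h : (sphereMap hm).IsBalanced x y) :
    specialize h ∘ genericFace m = y := by
  have apply_apex : specialize h ((0, 1), 0) = y none := by
    simpa [Prod.mk_zero_zero] using specialize_intCast h 0 1 0 0
  rw [genericFace, comp_affine, apply_apex, comp_cyclicDiff, specialize_comp_genericSlope,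
    ← eq_affine_cyclicDiff_tipDiff h]

end GenericLabels

section CanonicalGroup

variable (hm : ∀ i, 0 < m i)

theorem specialize_comp_lift :
    (specialize (sphereMap hm).isBalanced_vertClass_faceClass).comp (isBalanced_generic hm).lift =
      .id _ := by
  refine SphereMap.hom_ext_of_vertClass_of_faceClass (fun v => ?_) (fun f => ?_)
  · rw [AddMonoidHom.comp_apply, SphereMap.IsBalanced.lift_vertClass]
    exact congrFun (specialize_comp_genericVert _) v
  · rw [AddMonoidHom.comp_apply, SphereMap.IsBalanced.lift_faceClass]
    exact congrFun (specialize_comp_genericFace _) f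

theorem lift_comp_specialize :
    (isBalanced_generic hm).lift.comp (specialize (sphereMap hm).isBalanced_vertClass_faceClass) =
      .id _ := by
  refine hom_ext_of_generic ?_ ?_
  · rw [AddMonoidHom.coe_comp, Function.comp_assoc, specialize_comp_genericVert]
    exact funext (SphereMap.IsBalanced.lift_vertClass _)
  · rw [AddMonoidHom.coe_comp, Function.comp_assoc, specialize_comp_genericFace]
    exact funext (SphereMap.IsBalanced.lift_faceClass _)

/-- The isomorphism of `A_W` with `ℤ² × (ℤ/n)²` given by the universal property of the generic
labels. -/
def groupAWEquiv : groupAW (sphereMap hm).bitrade ≃+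
    (ℤ × ℤ) × (ZMod (torsionExponent m) × ZMod (torsionExponent m)) :=
  AddMonoidHom.toAddEquiv _ _ (specialize_comp_lift hm) (lift_comp_specialize hm)

theorem nonempty_canonicalGroup_addEquiv :
    Nonempty (CanonicalGroup (sphereMap hm).bitrade ≃+
      ZMod (torsionExponent m) × ZMod (torsionExponent m)) :=
  nonempty_torsion_addEquiv_of_addEquiv_prod isAddTorsion_of_finite
    (groupAWEquiv hm)

end CanonicalGroup

end SubdividedK4

/-- For integers `a, b, c ≥ 1` there is a spherical latin bitrade whose canonical group
is isomorphic to `ℤ/(ab+bc+ac+1) ⊕ ℤ/(ab+bc+ac+1)`. -/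
theorem exists_spherical_bitrade_canonical_group_rank_two_square
    (a b c : ℕ) (ha : 1 ≤ a) (hb : 1 ≤ b) (hc : 1 ≤ c) :
    ∃ T : SphericalLatinBitrade,
      Nonempty (CanonicalGroup T ≃+
        (ZMod (a * b + b * c + a * c + 1) × ZMod (a * b + b * c + a * c + 1))) := by
  have leg_pos (i : Fin 3) : 0 < ![a, b, c] i := by
    fin_cases i
    exacts [ha, hb, hc]
  exact ⟨(SubdividedK4.sphereMap leg_pos).bitrade,
    SubdividedK4.nonempty_canonicalGroup_addEquiv leg_pos⟩
end

section
/- Let n, m ≥ 2 be integers with n ≠ m. Then there exists a spherical latin bitrade whose canonical group is isomorphic to Z_n ⊕ Z_m. -/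
/-!
An alternating dimap, a digraph on a surface whose faces have directed boundaries, gives a latin
bitrade: an arc from `r` to `r'` separating the faces `c` and `s` contributes `(r', c, s)` to `W`
and `(r, c, s)` to `B`. If the surface is a sphere, the bitrade is spherical.

The homomorphisms from `A_W` to an abelian group are the labellings of rows, columns and symbols
satisfying the relations `r + c + s = 0`, so `A_W` is found by exhibiting a universal labelling. For
`g ≥ 2` take as vertices a hub `q` and a chain `p₀, …, p_k`, with paths from `q` to `q` along the
chain in both directions and with `g - 1` digons joining each end of the chain to `q`. The relations
make the labels along the chain an arithmetic progression, of difference `d` say, and force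
`g (q - p₀) = 0` and `g (q - p_k) = 0`, each through the digons at one end of the chain. The
torsion of `A_W` is thus generated by `y = q - p₀` and `d` subject to `g y = 0` and `g k d = 0`,
which is `ℤ/g ⊕ ℤ/gk`. If `k = a b` with `a` and `b` coprime, then this is `ℤ/ga ⊕ ℤ/gb`, and
distinct `n` and `m` have this form with `k ≥ 2`. For `g = 1` a bitrade with two rows and canonical
group `ℤ/k` takes the place of the chain.
-/

/-! ### Latin bitrades from alternating dimaps -/

/-- An alternating dimap: a digraph drawn on a surface so that the boundary of each face is
directed. It is encoded by its set `E` of arcs, each having a source and a target in the vertex set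
`R` and separating a face in `C` from a face in `S`. No vertex repeats on the boundary of a face,
and no two arcs separate the same two faces. That the boundary of a face is a single cycle is not
required. -/
structure AlternatingDimap (E R C S : Type) where
  src : E → R
  tgt : E → R
  col : E → C
  sym : E → S
  src_ne_tgt : ∀ e, src e ≠ tgt e
  eq_of_col_sym : ∀ ⦃e e'⦄, col e = col e' → sym e = sym e' → e = e'
  eq_of_tgt_col : ∀ ⦃e e'⦄, tgt e = tgt e' → col e = col e' → e = e'
  eq_of_tgt_sym : ∀ ⦃e e'⦄, tgt e = tgt e' → sym e = sym e' → e = e'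
  exists_next_col : ∀ e, ∃ e', src e' = tgt e ∧ col e' = col e
  exists_next_sym : ∀ e, ∃ e', src e' = tgt e ∧ sym e' = sym e
  tgt_surjective : Function.Surjective tgt
  col_surjective : Function.Surjective col
  sym_surjective : Function.Surjective sym

namespace AlternatingDimap

variable {E R C S : Type} (D : AlternatingDimap E R C S)

/-- The arc `e'` follows `e` on the boundary of a face. -/
def Follows (e e' : E) : Prop :=
  D.src e' = D.tgt e ∧ (D.col e' = D.col e ∨ D.sym e' = D.sym e)

/-- Any two arcs are joined by a chain of arcs consecutive on the boundary of a face. For a vertex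
whose arcs form a single rotation this is connectedness of the underlying surface. -/
def Connected : Prop := ∀ e e', Relation.EqvGen D.Follows e e'

/-- The triple of `W` contributed by an arc. -/
def headTriple (e : E) : R × C × S := (D.tgt e, D.col e, D.sym e)

/-- The triple of `B` contributed by an arc. -/
def tailTriple (e : E) : R × C × S := (D.src e, D.col e, D.sym e)

theorem headTriple_injective : Function.Injective D.headTriple := fun _ _ h =>
  D.eq_of_tgt_col (congrArg Prod.fst h) (congrArg (·.2.1) h)

theorem ne_of_src_eq_tgt {e e' : E} (h : D.src e' = D.tgt e) : e' ≠ e := by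
  rintro rfl
  exact D.src_ne_tgt _ h

section Finite

variable [Finite E]

/- Injectivity of the successor map makes it a permutation because `E` is finite; this is what makes
the hypotheses on targets hold for sources as well. -/
theorem exists_perm_next_col : ∃ next : Equiv.Perm E, ∀ e,
    D.src (next e) = D.tgt e ∧ D.col (next e) = D.col e := by
  choose next hsrc hcol using D.exists_next_col
  have hinj : Function.Injective next := fun a b hab =>
    D.eq_of_tgt_col (by rw [← hsrc a, hab, hsrc b]) (by rw [← hcol a, hab, hcol b])
  exact ⟨.ofBijective next ⟨hinj, Finite.surjective_of_injective hinj⟩,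
    fun e => ⟨hsrc e, hcol e⟩⟩

theorem exists_perm_next_sym : ∃ next : Equiv.Perm E, ∀ e,
    D.src (next e) = D.tgt e ∧ D.sym (next e) = D.sym e := by
  choose next hsrc hsym using D.exists_next_sym
  have hinj : Function.Injective next := fun a b hab =>
    D.eq_of_tgt_sym (by rw [← hsrc a, hab, hsrc b]) (by rw [← hsym a, hab, hsym b])
  exact ⟨.ofBijective next ⟨hinj, Finite.surjective_of_injective hinj⟩,
    fun e => ⟨hsrc e, hsym e⟩⟩

theorem exists_prev_col (e : E) : ∃ e', D.tgt e' = D.src e ∧ D.col e' = D.col e := by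
  obtain ⟨next, hnext⟩ := D.exists_perm_next_col
  obtain ⟨a, rfl⟩ := next.surjective e
  exact ⟨a, (hnext a).1.symm, (hnext a).2.symm⟩

theorem exists_prev_sym (e : E) : ∃ e', D.tgt e' = D.src e ∧ D.sym e' = D.sym e := by
  obtain ⟨next, hnext⟩ := D.exists_perm_next_sym
  obtain ⟨a, rfl⟩ := next.surjective e
  exact ⟨a, (hnext a).1.symm, (hnext a).2.symm⟩

theorem eq_of_src_col ⦃e e' : E⦄ (hr : D.src e = D.src e') (hc : D.col e = D.col e') :
    e = e' := by
  obtain ⟨next, hnext⟩ := D.exists_perm_next_col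
  obtain ⟨a, rfl⟩ := next.surjective e
  obtain ⟨b, rfl⟩ := next.surjective e'
  rw [D.eq_of_tgt_col (e := a) (e' := b) (by rw [← (hnext a).1, hr, (hnext b).1])
    (by rw [← (hnext a).2, hc, (hnext b).2])]

theorem eq_of_src_sym ⦃e e' : E⦄ (hr : D.src e = D.src e') (hs : D.sym e = D.sym e') :
    e = e' := by
  obtain ⟨next, hnext⟩ := D.exists_perm_next_sym
  obtain ⟨a, rfl⟩ := next.surjective e
  obtain ⟨b, rfl⟩ := next.surjective e'
  rw [D.eq_of_tgt_sym (e := a) (e' := b) (by rw [← (hnext a).1, hr, (hnext b).1])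
    (by rw [← (hnext a).2, hs, (hnext b).2])]

/-- The dimap with all arcs reversed; it interchanges the two halves of the bitrade, so that each
property of one half transfers to the other. -/
def reverse : AlternatingDimap E R C S where
  src := D.tgt
  tgt := D.src
  col := D.col
  sym := D.sym
  src_ne_tgt e := (D.src_ne_tgt e).symm
  eq_of_col_sym := D.eq_of_col_sym
  eq_of_tgt_col := D.eq_of_src_col
  eq_of_tgt_sym := D.eq_of_src_sym
  exists_next_col := D.exists_prev_col
  exists_next_sym := D.exists_prev_sym
  tgt_surjective r := by
    obtain ⟨e, rfl⟩ := D.tgt_surjective r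
    exact (D.exists_next_col e).imp fun _ h => h.1
  col_surjective := D.col_surjective
  sym_surjective := D.sym_surjective

end Finite

section Bitrade

variable [Fintype E] [DecidableEq R] [DecidableEq C] [DecidableEq S]

/-- The partial latin square `W` of the bitrade of `D`. -/
def white : Finset (R × C × S) := Finset.univ.image D.headTriple

/-- The partial latin square `B` of the bitrade of `D`. -/
def black : Finset (R × C × S) := Finset.univ.image D.tailTriple

theorem mem_white {t : R × C × S} : t ∈ D.white ↔ ∃ e, D.headTriple e = t := by simp [white]

theorem mem_black {t : R × C × S} : t ∈ D.black ↔ ∃ e, D.tailTriple e = t := by simp [black]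

theorem headTriple_mem_white (e : E) : D.headTriple e ∈ D.white := D.mem_white.2 ⟨e, rfl⟩

theorem tailTriple_mem_black (e : E) : D.tailTriple e ∈ D.black := D.mem_black.2 ⟨e, rfl⟩

theorem card_white : D.white.card = Fintype.card E := by
  rw [white, Finset.card_image_of_injective _ D.headTriple_injective, Finset.card_univ]

theorem isPartialLatinSquare_white : IsPartialLatinSquare D.white := by
  refine ⟨fun t ht t' ht' hne => ?_, fun r => ?_, fun c => ?_, fun s => ?_⟩
  · obtain ⟨e, rfl⟩ := D.mem_white.1 ht
    obtain ⟨e', rfl⟩ := D.mem_white.1 ht'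
    have hne' : e ≠ e' := fun h => hne (congrArg D.headTriple h)
    exact ⟨fun h => hne' (D.eq_of_tgt_col h.1 h.2), fun h => hne' (D.eq_of_tgt_sym h.1 h.2),
      fun h => hne' (D.eq_of_col_sym h.1 h.2)⟩
  · exact (D.tgt_surjective r).elim fun e he => ⟨_, D.headTriple_mem_white e, he⟩
  · exact (D.col_surjective c).elim fun e he => ⟨_, D.headTriple_mem_white e, he⟩
  · exact (D.sym_surjective s).elim fun e he => ⟨_, D.headTriple_mem_white e, he⟩

theorem mk_col_sym_mem_black {r : R} {e : E} :
    (r, D.col e, D.sym e) ∈ D.black ↔ r = D.src e := by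
  refine ⟨fun h => ?_, fun h => h ▸ D.tailTriple_mem_black e⟩
  obtain ⟨e', he'⟩ := D.mem_black.1 h
  simp only [tailTriple, Prod.mk.injEq] at he'
  rw [← he'.1, D.eq_of_col_sym he'.2.1 he'.2.2]

theorem mk_src_sym_mem_black {c : C} {e : E} :
    (D.src e, c, D.sym e) ∈ D.black ↔ c = D.col e := by
  refine ⟨fun h => ?_, fun h => h ▸ D.tailTriple_mem_black e⟩
  obtain ⟨e', he'⟩ := D.mem_black.1 h
  simp only [tailTriple, Prod.mk.injEq] at he'
  rw [← he'.2.1, D.eq_of_src_sym he'.1 he'.2.2]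

theorem mk_src_col_mem_black {s : S} {e : E} :
    (D.src e, D.col e, s) ∈ D.black ↔ s = D.sym e := by
  refine ⟨fun h => ?_, fun h => h ▸ D.tailTriple_mem_black e⟩
  obtain ⟨e', he'⟩ := D.mem_black.1 h
  simp only [tailTriple, Prod.mk.injEq] at he'
  rw [← he'.2.2, D.eq_of_src_col he'.1 he'.2.1]

theorem tradeCond_white_black : TradeCond D.white D.black := by
  intro t ht
  obtain ⟨e, rfl⟩ := D.mem_white.1 ht
  obtain ⟨a, hasrc, hacol⟩ := D.exists_next_col e
  obtain ⟨b, hbsrc, hbsym⟩ := D.exists_next_sym e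
  refine ⟨⟨D.src e, ⟨D.src_ne_tgt e, D.tailTriple_mem_black e⟩,
      fun r hr => D.mk_col_sym_mem_black.1 hr.2⟩,
    ⟨D.col b, ⟨fun h => D.ne_of_src_eq_tgt hbsrc (D.eq_of_col_sym h hbsym), ?_⟩,
      fun c hc => D.mk_src_sym_mem_black.1 ?_⟩,
    ⟨D.sym a, ⟨fun h => D.ne_of_src_eq_tgt hasrc (D.eq_of_col_sym hacol h), ?_⟩,
      fun s hs => D.mk_src_col_mem_black.1 ?_⟩⟩
  · simpa only [headTriple, tailTriple, hbsrc, hbsym] using D.tailTriple_mem_black b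
  · simpa only [headTriple, ← hbsrc, ← hbsym] using hc.2
  · simpa only [headTriple, tailTriple, hasrc, hacol] using D.tailTriple_mem_black a
  · simpa only [headTriple, ← hasrc, ← hacol] using hs.2

variable {W B : Finset (R × C × S)}

theorem tailTriple_mem_of_headTriple_mem (hB : B ⊆ D.black) (h : TradeCond W B) {e : E}
    (he : D.headTriple e ∈ W) : D.tailTriple e ∈ B := by
  obtain ⟨r, ⟨-, hr⟩, -⟩ := (h _ he).1
  obtain rfl : r = D.src e := D.mk_col_sym_mem_black.1 (hB hr)
  exact hr

theorem tailTriple_mem_of_follows (hB : B ⊆ D.black) (h : TradeCond W B) {e e' : E}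
    (he : D.headTriple e ∈ W) (hf : D.Follows e e') : D.tailTriple e' ∈ B := by
  obtain ⟨-, ⟨c, ⟨-, hc⟩, -⟩, ⟨s, ⟨-, hs⟩, -⟩⟩ := h _ he
  obtain ⟨hsrc, hcol | hsym⟩ := hf
  · simp only [headTriple, ← hsrc, ← hcol] at hs
    obtain rfl : s = D.sym e' := D.mk_src_col_mem_black.1 (hB hs)
    exact hs
  · simp only [headTriple, ← hsrc, ← hsym] at hc
    obtain rfl : c = D.col e' := D.mk_src_sym_mem_black.1 (hB hc)
    exact hc

theorem headTriple_mem_iff_of_follows (hW : W ⊆ D.white) (hB : B ⊆ D.black)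
    (hWB : TradeCond W B) (hBW : TradeCond B W) {e e' : E} (hf : D.Follows e e') :
    D.headTriple e ∈ W ↔ D.headTriple e' ∈ W := by
  have hrev : D.reverse.Follows e' e := ⟨hf.1.symm, hf.2.imp Eq.symm Eq.symm⟩
  constructor <;> intro he
  · exact D.reverse.tailTriple_mem_of_headTriple_mem hW hBW
      (D.tailTriple_mem_of_follows hB hWB he hf)
  · exact D.reverse.tailTriple_mem_of_follows hW hBW
      (D.tailTriple_mem_of_headTriple_mem hB hWB he) hrev

theorem Connected.eq_white {D : AlternatingDimap E R C S} (hD : D.Connected)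
    (hW : W ⊆ D.white) (hB : B ⊆ D.black) (hne : W.Nonempty)
    (hWB : TradeCond W B) (hBW : TradeCond B W) : W = D.white := by
  have hiff (e e' : E) : D.headTriple e ∈ W ↔ D.headTriple e' ∈ W := by
    induction hD e e' with
    | rel _ _ hf => exact D.headTriple_mem_iff_of_follows hW hB hWB hBW hf
    | refl => rfl
    | symm _ _ _ ih => exact ih.symm
    | trans _ _ _ _ _ ih₁ ih₂ => exact ih₁.trans ih₂
  obtain ⟨t, ht⟩ := hne
  obtain ⟨e, rfl⟩ := D.mem_white.1 (hW ht)
  refine hW.antisymm fun t' ht' => ?_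
  obtain ⟨e', rfl⟩ := D.mem_white.1 ht'
  exact (hiff e e').1 ht

/-- The spherical latin bitrade of a connected alternating dimap satisfying Euler's formula. -/
def bitrade [Fintype R] [Fintype C] [Fintype S] [Nonempty E] (hD : D.Connected)
    (heuler : Fintype.card R + Fintype.card C + Fintype.card S = Fintype.card E + 2) :
    SphericalLatinBitrade where
  R := R
  C := C
  S := S
  instR := inferInstance
  instC := inferInstance
  instS := inferInstance
  W := D.white
  B := D.black
  W_nonempty := Finset.univ_nonempty.image _
  B_nonempty := Finset.univ_nonempty.image _
  W_pls := D.isPartialLatinSquare_white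
  B_pls := D.reverse.isPartialLatinSquare_white
  tradeWB := D.tradeCond_white_black
  tradeBW := D.reverse.tradeCond_white_black
  connected := by
    rintro ⟨W', B', hW, hB, hne, -, hWB, hBW⟩
    exact hW.ne (hD.eq_white hW.subset hB.subset hne hWB hBW)
  spherical := by rw [heuler, D.card_white]

end Bitrade

end AlternatingDimap

/-! ### Labellings -/

section Labelling

variable {R C S A : Type*} [AddCommGroup A]

/-- Labels of rows, columns and symbols in an abelian group satisfying the relations of `A_W`;
they correspond to the homomorphisms out of `A_W`. -/
def IsLabelling (W : Finset (R × C × S)) (r : R → A) (c : C → A) (s : S → A) : Prop :=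
  ∀ t ∈ W, r t.1 + c t.2.1 + s t.2.2 = 0

theorem AlternatingDimap.isLabelling_white_iff {E R C S : Type} [Fintype E] [DecidableEq R]
    [DecidableEq C] [DecidableEq S] (D : AlternatingDimap E R C S) {r : R → A} {c : C → A}
    {s : S → A} :
    IsLabelling D.white r c s ↔ ∀ e, r (D.tgt e) + c (D.col e) + s (D.sym e) = 0 := by
  simp [IsLabelling, white, headTriple]

end Labelling

namespace groupAW

variable {A : Type*} [AddCommGroup A] (T : SphericalLatinBitrade)

/-- The generator of `A_W` belonging to a row. -/
def row (x : T.R) : groupAW T := QuotientAddGroup.mk (.of (.inl x))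

/-- The generator of `A_W` belonging to a column. -/
def col (x : T.C) : groupAW T := QuotientAddGroup.mk (.of (.inr (.inl x)))

/-- The generator of `A_W` belonging to a symbol. -/
def sym (x : T.S) : groupAW T := QuotientAddGroup.mk (.of (.inr (.inr x)))

theorem isLabelling_row_col_sym : IsLabelling T.W (row T) (col T) (sym T) := fun t ht =>
  (QuotientAddGroup.eq_zero_iff _).2 (AddSubgroup.subset_closure ⟨t, ht, rfl⟩)

variable {T} {r : T.R → A} {c : T.C → A} {s : T.S → A}

/-- The homomorphism out of `A_W` given by a labelling. -/
def lift (h : IsLabelling T.W r c s) : groupAW T →+ A :=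
  QuotientAddGroup.lift _ (FreeAbelianGroup.lift (Sum.elim r (Sum.elim c s))) <| by
    rw [bitradeRelations, AddSubgroup.closure_le]
    rintro _ ⟨t, ht, rfl⟩
    simpa using h t ht

@[simp] theorem lift_row (h : IsLabelling T.W r c s) (x : T.R) : lift h (row T x) = r x :=
  FreeAbelianGroup.lift_apply_of ..

@[simp] theorem lift_col (h : IsLabelling T.W r c s) (x : T.C) : lift h (col T x) = c x :=
  FreeAbelianGroup.lift_apply_of ..

@[simp] theorem lift_sym (h : IsLabelling T.W r c s) (x : T.S) : lift h (sym T x) = s x :=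
  FreeAbelianGroup.lift_apply_of ..

theorem hom_ext {f f' : groupAW T →+ A} (hr : ∀ x, f (row T x) = f' (row T x))
    (hc : ∀ x, f (col T x) = f' (col T x)) (hs : ∀ x, f (sym T x) = f' (sym T x)) : f = f' :=
  QuotientAddGroup.addMonoidHom_ext _ <| FreeAbelianGroup.lift_ext _ _ fun
    | .inl x => hr x
    | .inr (.inl x) => hc x
    | .inr (.inr x) => hs x

end groupAW

section Torsion

variable {G F H : Type*} [AddCommGroup G] [AddCommGroup F] [AddCommGroup H]

open AddCommGroup in
theorem torsion_prod_eq_of_isAddTorsionFree [IsAddTorsionFree F] (hH : IsAddTorsion H) :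
    torsion (F × H) = (⊥ : AddSubgroup F).prod ⊤ := by
  rw [torsion_sum, isAddTorsionFree_iff_torsion_eq_bot.1 ‹_›, torsion_eq_top_iff.2 hH]

/-- The torsion subgroup of the product of a torsion-free group and a torsion group. -/
def torsionEquivOfEquivProd [IsAddTorsionFree F] (hH : IsAddTorsion H) (e : G ≃+ F × H) :
    AddCommGroup.torsion G ≃+ H :=
  (e.addSubgroupMap _).trans <|
    (AddEquiv.addSubgroupCongr (e.map_torsion.trans (torsion_prod_eq_of_isAddTorsionFree hH))).trans
    <| (AddSubgroup.prodEquiv _ _).trans <| AddEquiv.uniqueProd.trans AddSubgroup.topEquiv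

end Torsion

/-- A labelling in `U` through which every other labelling factors uniquely; equivalently, `U` is
`A_W` with its generators. -/
structure IsUniversalLabelling {R C S U : Type} [AddCommGroup U] (W : Finset (R × C × S))
    (r : R → U) (c : C → U) (s : S → U) : Prop where
  isLabelling : IsLabelling W r c s
  exists_hom {A : Type} [AddCommGroup A] {r' : R → A} {c' : C → A} {s' : S → A} :
    IsLabelling W r' c' s' →
      ∃ f : U →+ A, (∀ x, f (r x) = r' x) ∧ (∀ x, f (c x) = c' x) ∧ ∀ x, f (s x) = s' x
  hom_ext {A : Type} [AddCommGroup A] {f f' : U →+ A} : (∀ x, f (r x) = f' (r x)) →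
    (∀ x, f (c x) = f' (c x)) → (∀ x, f (s x) = f' (s x)) → f = f'

theorem IsUniversalLabelling.nonempty_canonicalGroup_equiv {T : SphericalLatinBitrade} {F H : Type}
    [AddCommGroup F] [AddCommGroup H] [IsAddTorsionFree F] (hH : IsAddTorsion H)
    {r : T.R → F × H} {c : T.C → F × H} {s : T.S → F × H}
    (hU : IsUniversalLabelling T.W r c s) : Nonempty (CanonicalGroup T ≃+ H) := by
  obtain ⟨f, hr, hc, hs⟩ := hU.exists_hom (groupAW.isLabelling_row_col_sym T)
  exact ⟨torsionEquivOfEquivProd hH <| (groupAW.lift hU.isLabelling).toAddEquiv f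
    (groupAW.hom_ext (by simp [hr]) (by simp [hc]) (by simp [hs]))
    (hU.hom_ext (by simp [hr]) (by simp [hc]) (by simp [hs]))⟩

/-! ### Homomorphisms on `ℤ/n` -/

section ZModHom

variable {A H : Type*} [AddCommGroup A] [AddCommGroup H]

/-- The homomorphism on `ℤ/n` sending `1` to an element killed by `n`. -/
def zmodHom (n : ℕ) {x : A} (hx : n • x = 0) : ZMod n →+ A :=
  ZMod.lift n ⟨zmultiplesHom A x, by simpa using hx⟩

@[simp] theorem zmodHom_one {n : ℕ} {x : A} (hx : n • x = 0) : zmodHom n hx 1 = x := by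
  simpa [zmodHom] using ZMod.lift_coe n ⟨zmultiplesHom A x, by simpa using hx⟩ 1

theorem exists_int_prod_hom (p q : A) (g : H →+ A) : ∃ f : (ℤ × ℤ) × H →+ A,
    f ((1, 0), 0) = p ∧ f ((0, 1), 0) = q ∧ ∀ x, f (0, x) = g x :=
  ⟨((zmultiplesHom A p).coprod (zmultiplesHom A q)).coprod g, by simp, by simp, by simp⟩

theorem exists_zmod_prod_hom_of_dvd {m n m' n' : ℕ} {α β γ δ : ℤ} (hα : (m' : ℤ) ∣ m * α)
    (hβ : (m' : ℤ) ∣ n * β) (hγ : (n' : ℤ) ∣ m * γ) (hδ : (n' : ℤ) ∣ n * δ) :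
    ∃ f : ZMod m × ZMod n →+ ZMod m' × ZMod n', ∀ i j : ℤ,
      f (i, j) = (((i * α + j * β : ℤ) : ZMod m'), ((i * γ + j * δ : ℤ) : ZMod n')) := by
  have hcast {k k' : ℕ} {z : ℤ} (hz : (k' : ℤ) ∣ k * z) : k • (z : ZMod k') = 0 := by
    rw [nsmul_eq_mul]
    exact_mod_cast (ZMod.intCast_zmod_eq_zero_iff_dvd _ _).2 hz
  refine ⟨(zmodHom m (x := ((α : ZMod m'), (γ : ZMod n'))) (Prod.ext (hcast hα) (hcast hγ))).coprod
    (zmodHom n (x := ((β : ZMod m'), (δ : ZMod n'))) (Prod.ext (hcast hβ) (hcast hδ))),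
    fun i j => ?_⟩
  rw [← zsmul_one i, ← zsmul_one j, AddMonoidHom.coprod_apply, map_zsmul, map_zsmul,
    zmodHom_one, zmodHom_one]
  simp

theorem nonempty_zmod_prod_mul_equiv (g : ℕ) {a b : ℕ} (hab : a.Coprime b) : Nonempty
    (ZMod g × ZMod (g * (a * b)) ≃+ ZMod (g * a) × ZMod (g * b)) := by
  obtain ⟨u, v, huv⟩ := Nat.isCoprime_iff_coprime.2 hab
  -- The matrices `(u a, -1; v b, 1)` and `(1, 1; -v b, u a)` are inverse to each other.
  obtain ⟨f, hf⟩ := exists_zmod_prod_hom_of_dvd (m := g) (n := g * (a * b)) (m' := g * a)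
    (n' := g * b) (α := u * a) (β := -1) (γ := v * b) (δ := 1)
    ⟨u, by push_cast; ring⟩ ⟨-b, by push_cast; ring⟩ ⟨v, by push_cast; ring⟩ ⟨a, by push_cast; ring⟩
  obtain ⟨f', hf'⟩ := exists_zmod_prod_hom_of_dvd (m := g * a) (n := g * b) (m' := g)
    (n' := g * (a * b)) (α := 1) (β := 1) (γ := -(v * b)) (δ := u * a)
    ⟨a, by push_cast; ring⟩ ⟨b, by push_cast; ring⟩ ⟨-v, by push_cast; ring⟩ ⟨u, by push_cast; ring⟩
  refine ⟨{ f with invFun := f', left_inv := ?_, right_inv := ?_ }⟩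
  · rintro ⟨x, y⟩
    obtain ⟨i, rfl⟩ := ZMod.intCast_surjective x
    obtain ⟨j, rfl⟩ := ZMod.intCast_surjective y
    change f' (f _) = _
    rw [hf, hf']
    congr 2
    · linear_combination i * huv
    · linear_combination j * huv
  · rintro ⟨x, y⟩
    obtain ⟨i, rfl⟩ := ZMod.intCast_surjective x
    obtain ⟨j, rfl⟩ := ZMod.intCast_surjective y
    change f (f' _) = _
    rw [hf', hf]
    congr 2
    · linear_combination i * huv
    · linear_combination j * huv

end ZModHom

/-! ### The bitrade with two rows -/

namespace TwoRow

variable {N : ℕ}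

/-- The symbol of an arc of the dimap with two vertices. The arc `(b, i)` leads from `b` to `!b` and
borders the column `i`. -/
def arcSym : Bool × ZMod N → ZMod N
  | (false, i) => i
  | (true, i) => i + 1

/-- The alternating dimap with two vertices joined by `N` arcs in each direction, alternating around
each vertex; all faces are digons. -/
def dimap (N : ℕ) [Fact (1 < N)] : AlternatingDimap (Bool × ZMod N) Bool (ZMod N) (ZMod N) where
  src e := e.1
  tgt e := !e.1
  col e := e.2
  sym := arcSym
  src_ne_tgt e := (Bool.not_ne_self e.1).symm
  eq_of_col_sym := by
    rintro ⟨_ | _, i⟩ ⟨_ | _, j⟩ rfl hs <;> simp_all [arcSym]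
  eq_of_tgt_col := by
    rintro ⟨b, i⟩ ⟨b', j⟩ ht hc
    exact Prod.ext (Bool.not_inj ht) hc
  eq_of_tgt_sym := by
    rintro ⟨_ | _, i⟩ ⟨_ | _, j⟩ ht hs <;> simp_all [arcSym]
  exists_next_col e := ⟨(!e.1, e.2), rfl, rfl⟩
  exists_next_sym
    | (false, i) => ⟨(true, i - 1), rfl, sub_add_cancel i 1⟩
    | (true, i) => ⟨(false, i + 1), rfl, rfl⟩
  tgt_surjective b := ⟨(!b, 0), Bool.not_not b⟩
  col_surjective i := ⟨(false, i), rfl⟩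
  sym_surjective i := ⟨(false, i), rfl⟩

theorem dimap_connected (N : ℕ) [Fact (1 < N)] : (dimap N).Connected := by
  have hcol (i : ZMod N) : Relation.EqvGen (dimap N).Follows (false, i) (true, i) :=
    .rel _ _ ⟨rfl, .inl rfl⟩
  have hfalse (k : ℕ) : Relation.EqvGen (dimap N).Follows (false, 0) (false, (k : ZMod N)) := by
    induction k with
    | zero => exact Nat.cast_zero (R := ZMod N) ▸ .refl _
    | succ k ih =>
      rw [Nat.cast_succ]
      exact .trans _ _ _ ih (.trans _ _ _ (hcol k) (.rel _ _ ⟨rfl, .inr rfl⟩))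
  have hall : ∀ e : Bool × ZMod N, Relation.EqvGen (dimap N).Follows (false, 0) e
    | (false, i) => ZMod.natCast_zmod_val i ▸ hfalse i.val
    | (true, i) => .trans _ _ _ (ZMod.natCast_zmod_val i ▸ hfalse i.val) (hcol i)
  exact fun e e' => .trans _ _ _ (.symm _ _ (hall e)) (hall e')

/-- The spherical latin bitrade with two rows and `N` columns. -/
def bitrade (N : ℕ) [Fact (1 < N)] : SphericalLatinBitrade :=
  (dimap N).bitrade (dimap_connected N) (by
    simp only [Fintype.card_prod, Fintype.card_bool, ZMod.card]
    ring)

section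

variable [Fact (1 < N)] {A : Type*} [AddCommGroup A] {r : Bool → A} {c s : ZMod N → A}

theorem isLabelling_iff : IsLabelling (dimap N).white r c s ↔
    ∀ i, r true + c i + s i = 0 ∧ r false + c i + s (i + 1) = 0 := by
  rw [AlternatingDimap.isLabelling_white_iff]
  exact ⟨fun hD i => ⟨hD (false, i), hD (true, i)⟩, fun hrcs e => match e with
    | (false, i) => (hrcs i).1
    | (true, i) => (hrcs i).2⟩

theorem sym_natCast (hrcs : IsLabelling (dimap N).white r c s) (k : ℕ) :
    s k = s 0 + k • (r true - r false) := by
  induction k with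
  | zero => simp
  | succ k ih =>
    obtain ⟨htrue, hfalse⟩ := isLabelling_iff.1 hrcs k
    rw [Nat.cast_succ]
    linear_combination (norm := module) hfalse - htrue + ih

theorem nsmul_row_sub_row_eq_zero (hrcs : IsLabelling (dimap N).white r c s) :
    N • (r true - r false) = 0 := by
  simpa using sym_natCast hrcs N

end

theorem isUniversalLabelling (N : ℕ) [Fact (1 < N)] :
    IsUniversalLabelling (U := (ℤ × ℤ) × ZMod N) (dimap N).white
      (fun b => ((1, 0), bif b then 1 else 0)) (fun i => ((-1, -1), -(i + 1)))
      (fun i => ((0, 1), i)) := by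
  refine ⟨isLabelling_iff.2 fun i => by simp, fun {A _ r c s} hrcs => ?_,
    fun {A _ f f'} hrow _ hsym => ?_⟩
  · obtain ⟨f, hp, hs, hf⟩ := exists_int_prod_hom (r false) (s 0)
      (zmodHom N (nsmul_row_sub_row_eq_zero hrcs))
    have hy : f (0, 1) = r true - r false := by simp [hf]
    have hrow (b : Bool) : f ((1, 0), bif b then 1 else 0) = r b := by
      cases b
      · exact hp
      · have hgen : ((1, 0), 1) = ((1, 0), 0) + ((0, 1) : (ℤ × ℤ) × ZMod N) := by simp
        rw [cond_true, hgen, map_add, hp, hy, add_sub_cancel]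
    have hsym (i : ZMod N) : f ((0, 1), i) = s i := by
      have hgen : ((0, 1), i) = ((0, 1), 0) + i.val • ((0, 1) : (ℤ × ℤ) × ZMod N) := by simp
      rw [hgen, map_add, map_nsmul, hs, hy, ← sym_natCast hrcs, ZMod.natCast_zmod_val]
    refine ⟨f, hrow, fun i => ?_, hsym⟩
    have hgen : ((-1, -1), -(i + 1)) = -(((1, 0), 1) + ((0, 1), i) : (ℤ × ℤ) × ZMod N) := by
      simp [add_comm]
    rw [hgen, map_neg, map_add, hsym, show f ((1, 0), 1) = r true from hrow true]
    linear_combination (norm := module) -(isLabelling_iff.1 hrcs i).1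
  · have hp : f ((1, 0), 0) = f' ((1, 0), 0) := hrow false
    have hs : f ((0, 1), 0) = f' ((0, 1), 0) := hsym 0
    have hy : f (0, 1) = f' (0, 1) := by
      have hgen : (0, 1) = ((1, 0), 1) - (((1, 0), 0) : (ℤ × ℤ) × ZMod N) := by simp
      rw [hgen, map_sub, map_sub, hp, show f ((1, 0), 1) = f' ((1, 0), 1) from hrow true]
    ext ⟨⟨i, j⟩, x⟩
    obtain ⟨m, rfl⟩ := ZMod.intCast_surjective x
    have hgen : ((i, j), (m : ZMod N)) = i • ((1, 0), 0) + j • ((0, 1), 0) + m • (0, 1) := by simp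
    simp only [hgen, map_add, map_zsmul, hp, hs, hy]

theorem nonempty_canonicalGroup_equiv (N : ℕ) [Fact (1 < N)] :
    Nonempty (CanonicalGroup (bitrade N) ≃+ ZMod N) :=
  IsUniversalLabelling.nonempty_canonicalGroup_equiv (T := bitrade N) isAddTorsion_of_finite
    (isUniversalLabelling N)

end TwoRow

/-! ### The necklace -/

namespace Necklace

variable {h l : ℕ}

/-- The arcs of the necklace. Its vertices are a hub (`none`) and a chain (`some i`, with `i` from
`0` to `l + 2`). A path leads from the hub to `l + 1`, down the chain to `0` and back to the hub,
and its mirror image leads from the hub to `1`, up the chain to `l + 2` and back; the arc `path b i`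
ends `i` steps before the end of the chain. Each end of the chain is joined to the hub by `h + 1`
digons, each consisting of two spokes. The index `b` is `true` for the mirror image. -/
inductive Arc (h l : ℕ)
  | enter (b : Bool)
  | path (b : Bool) (i : Fin (l + 1))
  | exit (b : Bool)
  | spokeOut (b : Bool) (j : Fin (h + 1))
  | spokeIn (b : Bool) (j : Fin (h + 1))

/-- The symmetry of the chain, acting on its vertices or on the gaps between them, that carries the
path with index `false` to the path with index `b`. -/
def mirror {n : ℕ} : Bool → Fin n → Fin n
  | false => id
  | true => Fin.rev

theorem val_mirror {n : ℕ} (b : Bool) (i : Fin n) :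
    (mirror b i : ℕ) = bif b then n - (i + 1) else i := by
  cases b <;> simp [mirror]

namespace Arc

/-- A description of the arcs by sums and products, by means of which they are counted. -/
def equivSum : Arc h l ≃ Bool × (Bool ⊕ Fin (l + 1) ⊕ Bool × Fin (h + 1)) where
  toFun
    | enter b => (b, .inl false)
    | exit b => (b, .inl true)
    | path b i => (b, .inr (.inl i))
    | spokeOut b j => (b, .inr (.inr (false, j)))
    | spokeIn b j => (b, .inr (.inr (true, j)))
  invFun
    | (b, .inl false) => enter b
    | (b, .inl true) => exit b
    | (b, .inr (.inl i)) => path b i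
    | (b, .inr (.inr (false, j))) => spokeOut b j
    | (b, .inr (.inr (true, j))) => spokeIn b j
  left_inv := by rintro (_ | _ | _ | _ | _) <;> rfl
  right_inv := by rintro ⟨_, (_ | _) | _ | ⟨_ | _, _⟩⟩ <;> rfl

instance : Fintype (Arc h l) := .ofEquiv _ equivSum.symm

instance : Nonempty (Arc h l) := ⟨.enter false⟩

theorem card : Fintype.card (Arc h l) = 2 * (2 + (l + 1 + 2 * (h + 1))) := by
  simp [Fintype.card_congr equivSum]

/-- The source of an arc of the necklace. -/
def src : Arc h l → Option (Fin (l + 3))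
  | enter _ => none
  | path b i => some (mirror b i.castSucc.succ)
  | exit b => some (mirror b 0)
  | spokeOut b _ => some (mirror b 0)
  | spokeIn _ _ => none

/-- The target of an arc of the necklace. -/
def tgt : Arc h l → Option (Fin (l + 3))
  | enter b => some (mirror b (Fin.last (l + 1)).castSucc)
  | path b i => some (mirror b i.castSucc.castSucc)
  | exit _ => none
  | spokeOut _ _ => none
  | spokeIn b _ => some (mirror b 0)

/-- The face in the role of a column: `.inl i` is the face between the vertices `i` and `i + 1` of
the chain, at either end of the chain a triangle with the hub, and `.inr (b, j)` is a digon of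
spokes. -/
def col : Arc h l → Fin (l + 2) ⊕ Bool × Fin (h + 1)
  | enter b => .inl (mirror b (Fin.last (l + 1)))
  | path b i => .inl (mirror b i.castSucc)
  | exit b => .inl (mirror b 0)
  | spokeOut b j => .inr (b, j)
  | spokeIn b j => .inr (b, j)

/-- The face in the role of a symbol: `(b, 0)` is the face bounded by a path up to the end of the
chain and by the first spoke there, and the faces `(b, j)` with `0 < j` are the digons between
successive pairs of spokes and, last, between a spoke and the arc `exit b`. -/
def sym : Arc h l → Bool × Fin (h + 2)
  | enter b => (b, 0)
  | path b _ => (b, 0)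
  | exit b => (b, Fin.last (h + 1))
  | spokeOut b j => (b, j.castSucc)
  | spokeIn b j => (b, j.succ)

theorem src_ne_tgt (e : Arc h l) : e.src ≠ e.tgt := by
  cases e <;> grind [src, tgt, val_mirror]

theorem eq_of_col_sym ⦃e e' : Arc h l⦄ (hc : e.col = e'.col) (hs : e.sym = e'.sym) : e = e' := by
  cases e <;> cases e' <;> grind [col, sym, val_mirror]

theorem eq_of_tgt_col ⦃e e' : Arc h l⦄ (ht : e.tgt = e'.tgt) (hc : e.col = e'.col) : e = e' := by
  cases e <;> cases e' <;> grind [tgt, col, val_mirror]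

theorem eq_of_tgt_sym ⦃e e' : Arc h l⦄ (ht : e.tgt = e'.tgt) (hs : e.sym = e'.sym) : e = e' := by
  cases e <;> cases e' <;> grind [tgt, sym, val_mirror, Fin.castSucc_inj, Fin.succ_inj]

theorem exists_next_col (e : Arc h l) : ∃ e' : Arc h l, e'.src = e.tgt ∧ e'.col = e.col := by
  rcases e with b | ⟨b, i⟩ | b | ⟨b, j⟩ | ⟨b, j⟩
  · exact ⟨path (!b) 0, by cases b <;> simp [src, tgt, col, mirror, Fin.ext_iff]⟩
  · cases i using Fin.cases with
    | zero => exact ⟨exit b, rfl, rfl⟩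
    | succ i => exact ⟨path (!b) i.rev.succ, by grind [src, tgt, col, val_mirror]⟩
  · exact ⟨enter !b, by cases b <;> simp [src, tgt, col, mirror]⟩
  · exact ⟨spokeIn b j, rfl, rfl⟩
  · exact ⟨spokeOut b j, rfl, rfl⟩

theorem exists_next_sym (e : Arc h l) : ∃ e' : Arc h l, e'.src = e.tgt ∧ e'.sym = e.sym := by
  rcases e with b | ⟨b, i⟩ | b | ⟨b, j⟩ | ⟨b, j⟩
  · exact ⟨path b (Fin.last l), rfl, rfl⟩
  · cases i using Fin.cases with
    | zero => exact ⟨spokeOut b 0, rfl, rfl⟩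
    | succ i => exact ⟨path b i.castSucc, rfl, rfl⟩
  · exact ⟨spokeIn b (Fin.last h), rfl, rfl⟩
  · cases j using Fin.cases with
    | zero => exact ⟨enter b, rfl, rfl⟩
    | succ j => exact ⟨spokeIn b j.castSucc, rfl, rfl⟩
  · cases j using Fin.lastCases with
    | last => exact ⟨exit b, rfl, rfl⟩
    | cast j => exact ⟨spokeOut b j.succ, rfl, rfl⟩

theorem tgt_surjective : Function.Surjective (tgt : Arc h l → _) := by
  rintro (_ | i)
  · exact ⟨exit false, rfl⟩
  · cases i using Fin.lastCases with
    | last => exact ⟨spokeIn true 0, by simp [tgt, mirror]⟩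
    | cast i =>
      cases i using Fin.lastCases with
      | last => exact ⟨enter false, rfl⟩
      | cast i => exact ⟨path false i, rfl⟩

theorem col_surjective : Function.Surjective (col : Arc h l → _) := by
  rintro (i | ⟨b, j⟩)
  · cases i using Fin.lastCases with
    | last => exact ⟨enter false, rfl⟩
    | cast i => exact ⟨path false i, rfl⟩
  · exact ⟨spokeOut b j, rfl⟩

theorem sym_surjective : Function.Surjective (sym : Arc h l → _) := by
  rintro ⟨b, j⟩
  cases j using Fin.cases with
  | zero => exact ⟨enter b, rfl⟩
  | succ j => exact ⟨spokeIn b j, rfl⟩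

end Arc

/-- The alternating dimap of the necklace. -/
def dimap (h l : ℕ) : AlternatingDimap (Arc h l) (Option (Fin (l + 3)))
    (Fin (l + 2) ⊕ Bool × Fin (h + 1)) (Bool × Fin (h + 2)) where
  src := Arc.src
  tgt := Arc.tgt
  col := Arc.col
  sym := Arc.sym
  src_ne_tgt := Arc.src_ne_tgt
  eq_of_col_sym := Arc.eq_of_col_sym
  eq_of_tgt_col := Arc.eq_of_tgt_col
  eq_of_tgt_sym := Arc.eq_of_tgt_sym
  exists_next_col := Arc.exists_next_col
  exists_next_sym := Arc.exists_next_sym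
  tgt_surjective := Arc.tgt_surjective
  col_surjective := Arc.col_surjective
  sym_surjective := Arc.sym_surjective

theorem eqvGen_exit_path (b : Bool) (i : Fin (l + 1)) :
    Relation.EqvGen (dimap h l).Follows (.exit b) (.path b i) := by
  induction i using Fin.induction with
  | zero => exact .symm _ _ (.rel _ _ ⟨rfl, .inl rfl⟩)
  | succ i ih => exact .trans _ _ _ ih (.symm _ _ (.rel _ _ ⟨rfl, .inr rfl⟩))

theorem eqvGen_exit_enter (b : Bool) :
    Relation.EqvGen (dimap h l).Follows (.exit b) (.enter b) :=
  .trans _ _ _ (eqvGen_exit_path b (Fin.last l)) (.symm _ _ (.rel _ _ ⟨rfl, .inr rfl⟩))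

theorem eqvGen_exit_spokeIn (b : Bool) (j : Fin (h + 1)) :
    Relation.EqvGen (dimap h l).Follows (.exit b) (.spokeIn b j) := by
  induction j using Fin.reverseInduction with
  | last => exact .rel _ _ ⟨rfl, .inr rfl⟩
  | cast j ih =>
    exact .trans _ _ _ ih <| .trans _ (.spokeOut b j.succ) _ (.rel _ _ ⟨rfl, .inl rfl⟩)
      (.rel _ _ ⟨rfl, .inr rfl⟩)

theorem eqvGen_exit_false_exit : ∀ b : Bool,
    Relation.EqvGen (dimap h l).Follows (.exit false) (.exit b)
  | false => .refl _
  | true =>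
    have hcol : (dimap h l).col (.enter true) = (dimap h l).col (.exit false) := by
      simp [dimap, Arc.col, mirror]
    .trans _ _ _ (.rel _ _ ⟨rfl, .inl hcol⟩) (.symm _ _ (eqvGen_exit_enter true))

theorem dimap_connected (h l : ℕ) : (dimap h l).Connected := by
  have hexit (e : Arc h l) : Relation.EqvGen (dimap h l).Follows (.exit false) e := by
    rcases e with b | ⟨b, i⟩ | b | ⟨b, j⟩ | ⟨b, j⟩
    · exact .trans _ _ _ (eqvGen_exit_false_exit b) (eqvGen_exit_enter b)
    · exact .trans _ _ _ (eqvGen_exit_false_exit b) (eqvGen_exit_path b i)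
    · exact eqvGen_exit_false_exit b
    · exact .trans _ _ _ (eqvGen_exit_false_exit b) <| .trans _ _ _ (eqvGen_exit_spokeIn b j)
        (.rel _ _ ⟨rfl, .inl rfl⟩)
    · exact .trans _ _ _ (eqvGen_exit_false_exit b) (eqvGen_exit_spokeIn b j)
  exact fun e e' => .trans _ _ _ (.symm _ _ (hexit e)) (hexit e')

/-- The spherical latin bitrade of the necklace. -/
def bitrade (h l : ℕ) : SphericalLatinBitrade :=
  (dimap h l).bitrade (dimap_connected h l) (by
    simp only [Arc.card, Fintype.card_option, Fintype.card_sum, Fintype.card_prod,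
      Fintype.card_bool, Fintype.card_fin]
    ring)

variable {A A' : Type*} [AddCommGroup A] [AddCommGroup A']
  {r : Option (Fin (l + 3)) → A} {c : Fin (l + 2) ⊕ Bool × Fin (h + 1) → A}
  {s : Bool × Fin (h + 2) → A}

theorem isLabelling_iff : IsLabelling (dimap h l).white r c s ↔
    (∀ b (i : Fin (l + 2)), r (some (mirror b i.castSucc)) + c (.inl (mirror b i)) + s (b, 0) = 0) ∧
    (∀ b, r none + c (.inl (mirror b 0)) + s (b, Fin.last (h + 1)) = 0) ∧
    (∀ b (j : Fin (h + 1)), r none + c (.inr (b, j)) + s (b, j.castSucc) = 0) ∧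
    ∀ b (j : Fin (h + 1)), r (some (mirror b 0)) + c (.inr (b, j)) + s (b, j.succ) = 0 := by
  rw [AlternatingDimap.isLabelling_white_iff]
  constructor
  · refine fun hD => ⟨fun b i => ?_, fun b => hD (.exit b), fun b j => hD (.spokeOut b j),
      fun b j => hD (.spokeIn b j)⟩
    cases i using Fin.lastCases with
    | last => exact hD (.enter b)
    | cast i => exact hD (.path b i)
  · rintro ⟨hpath, hexit, hout, hin⟩ (b | ⟨b, i⟩ | b | ⟨b, j⟩ | ⟨b, j⟩)
    exacts [hpath b _, hpath b _, hexit b, hout b j, hin b j]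

theorem row_some (hrcs : IsLabelling (dimap h l).white r c s) (i : Fin (l + 3)) :
    r (some i) = r (some 0) + (i : ℕ) • (s (false, 0) - s (true, 0)) := by
  obtain ⟨hpath, -⟩ := isLabelling_iff.1 hrcs
  induction i using Fin.induction with
  | zero => simp
  | succ i ih =>
    have hfalse : r (some i.castSucc) + c (.inl i) + s (false, 0) = 0 := hpath false i
    have htrue : r (some i.succ) + c (.inl i) + s (true, 0) = 0 := by
      simpa only [mirror, Fin.rev_castSucc, Fin.rev_rev] using hpath true i.rev
    rw [ih, Fin.val_castSucc] at hfalse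
    rw [Fin.val_succ]
    linear_combination (norm := module) htrue - hfalse

theorem sym_eq (hrcs : IsLabelling (dimap h l).white r c s) (b : Bool) (j : Fin (h + 2)) :
    s (b, j) = s (b, 0) + (j : ℕ) • (r none - r (some (mirror b 0))) := by
  obtain ⟨-, -, hout, hin⟩ := isLabelling_iff.1 hrcs
  induction j using Fin.induction with
  | zero => simp
  | succ j ih =>
    rw [Fin.val_castSucc] at ih
    rw [Fin.val_succ]
    linear_combination (norm := module) hin b j - hout b j + ih

theorem nsmul_row_sub_row_eq_zero (hrcs : IsLabelling (dimap h l).white r c s) (b : Bool) :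
    (h + 2) • (r none - r (some (mirror b 0))) = 0 := by
  obtain ⟨hpath, hexit, -⟩ := isLabelling_iff.1 hrcs
  have hlast := sym_eq hrcs b (Fin.last _)
  have hpath_zero := hpath b 0
  rw [Fin.val_last] at hlast
  rw [Fin.castSucc_zero] at hpath_zero
  linear_combination (norm := module) hexit b - hpath_zero - hlast

theorem mul_nsmul_sym_sub_sym_eq_zero (hrcs : IsLabelling (dimap h l).white r c s) :
    ((h + 2) * (l + 2)) • (s (false, 0) - s (true, 0)) = 0 := by
  have hfalse : (h + 2) • (r none - r (some 0)) = 0 := nsmul_row_sub_row_eq_zero hrcs false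
  have htrue := nsmul_row_sub_row_eq_zero hrcs true
  rw [mirror, Fin.rev_zero, row_some hrcs, Fin.val_last] at htrue
  linear_combination (norm := module) hfalse - htrue

/-- The labels of the rows in the general labelling of the necklace. Its parameters are the label
`p` of the row `some 0`, the label `t` of the symbol `(false, 0)`, the difference `y` of the labels
of the rows `none` and `some 0`, and the difference `d` of successive labels along the chain. -/
def rowLabel (l : ℕ) (p y d : A) : Option (Fin (l + 3)) → A
  | none => p + y
  | some i => p + (i : ℕ) • d

/-- The labels of the symbols in the general labelling of the necklace; see `rowLabel`. -/
def symLabel (h l : ℕ) (p t y d : A) : Bool × Fin (h + 2) → A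
  | (b, j) => (bif b then t - d else t) +
      (j : ℕ) • (rowLabel l p y d none - rowLabel l p y d (some (mirror b 0)))

theorem symLabel_zero (p t y d : A) (b : Bool) :
    symLabel h l p t y d (b, 0) = bif b then t - d else t := by
  simp [symLabel]

/-- The labels of the columns in the general labelling of the necklace; see `rowLabel`. -/
def colLabel (h l : ℕ) (p t y d : A) : Fin (l + 2) ⊕ Bool × Fin (h + 1) → A
  | .inl i => -(rowLabel l p y d (some i.castSucc) + t)
  | .inr (b, j) => -(rowLabel l p y d none + symLabel h l p t y d (b, j.castSucc))

theorem isLabelling_rowLabel_colLabel_symLabel {p t y d : A} (hy : (h + 2) • y = 0)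
    (hd : ((h + 2) * (l + 2)) • d = 0) :
    IsLabelling (dimap h l).white (rowLabel l p y d) (colLabel h l p t y d)
      (symLabel h l p t y d) := by
  have hfan (b : Bool) :
      (h + 2) • (rowLabel l p y d none - rowLabel l p y d (some (mirror b 0))) = 0 := by
    cases b
    · simpa [rowLabel, mirror] using hy
    · simp only [rowLabel, mirror, Fin.rev_zero, Fin.val_last, add_sub_add_left_eq_sub]
      rw [smul_sub, hy, ← mul_smul, hd, sub_zero]
  have hpath (b : Bool) (i : Fin (l + 2)) : rowLabel l p y d (some (mirror b i.castSucc)) +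
      colLabel h l p t y d (.inl (mirror b i)) + symLabel h l p t y d (b, 0) = 0 := by
    cases b
    · simp only [rowLabel, colLabel, symLabel, mirror, id_eq, Fin.val_zero, cond_false]
      module
    · simp only [rowLabel, colLabel, symLabel, mirror, Fin.rev_castSucc, Fin.val_succ,
        Fin.val_castSucc, Fin.val_zero, cond_true]
      module
  refine isLabelling_iff.2 ⟨hpath, fun b => ?_, fun b j => ?_, fun b j => ?_⟩
  · have hzero := hpath b 0
    simp only [symLabel, Fin.castSucc_zero, Fin.val_zero, Fin.val_last] at hzero ⊢
    linear_combination (norm := module) hzero + hfan b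
  · simp [colLabel]
  · simp only [colLabel, symLabel, Fin.val_castSucc, Fin.val_succ]
    module

theorem map_rowLabel (f : A →+ A') (p y d : A) (i : Option (Fin (l + 3))) :
    f (rowLabel l p y d i) = rowLabel l (f p) (f y) (f d) i := by
  cases i <;> simp [rowLabel]

theorem map_symLabel (f : A →+ A') (p t y d : A) (j : Bool × Fin (h + 2)) :
    f (symLabel h l p t y d j) = symLabel h l (f p) (f t) (f y) (f d) j := by
  obtain ⟨b, j⟩ := j
  cases b <;> simp [symLabel, map_rowLabel]

theorem map_colLabel (f : A →+ A') (p t y d : A) (i : Fin (l + 2) ⊕ Bool × Fin (h + 1)) :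
    f (colLabel h l p t y d i) = colLabel h l (f p) (f t) (f y) (f d) i := by
  obtain _ | ⟨_, _⟩ := i <;> simp [colLabel, map_rowLabel, map_symLabel]

theorem eq_rowLabel (hrcs : IsLabelling (dimap h l).white r c s) :
    r = rowLabel l (r (some 0)) (r none - r (some 0)) (s (false, 0) - s (true, 0)) := by
  funext i
  cases i with
  | none => simp [rowLabel]
  | some i => exact row_some hrcs i

theorem eq_symLabel (hrcs : IsLabelling (dimap h l).white r c s) :
    s = symLabel h l (r (some 0)) (s (false, 0)) (r none - r (some 0))
      (s (false, 0) - s (true, 0)) := by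
  funext ⟨b, j⟩
  rw [sym_eq hrcs, symLabel, ← eq_rowLabel hrcs]
  cases b <;> simp

theorem eq_colLabel (hrcs : IsLabelling (dimap h l).white r c s) :
    c = colLabel h l (r (some 0)) (s (false, 0)) (r none - r (some 0))
      (s (false, 0) - s (true, 0)) := by
  obtain ⟨hpath, -, hout, -⟩ := isLabelling_iff.1 hrcs
  funext i
  obtain i | ⟨b, j⟩ := i
  · rw [colLabel, ← eq_rowLabel hrcs]
    exact eq_neg_of_add_eq_zero_right (by rw [add_right_comm]; exact hpath false i)
  · rw [colLabel, ← eq_rowLabel hrcs, ← eq_symLabel hrcs]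
    exact eq_neg_of_add_eq_zero_right (by rw [add_right_comm]; exact hout b j)

theorem isUniversalLabelling (h l : ℕ) :
    IsUniversalLabelling (U := (ℤ × ℤ) × ZMod (h + 2) × ZMod ((h + 2) * (l + 2)))
      (dimap h l).white (rowLabel l ((1, 0), 0) (0, 1, 0) (0, 0, 1))
      (colLabel h l ((1, 0), 0) ((0, 1), 0) (0, 1, 0) (0, 0, 1))
      (symLabel h l ((1, 0), 0) ((0, 1), 0) (0, 1, 0) (0, 0, 1)) := by
  refine ⟨isLabelling_rowLabel_colLabel_symLabel (by simp) (by simp), fun {A _ r c s} hrcs => ?_,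
    fun {A _ f f'} hrow _ hsym => ?_⟩
  · obtain ⟨f, hp, hs, hf⟩ := exists_int_prod_hom (r (some 0)) (s (false, 0)) <|
      (zmodHom _ (nsmul_row_sub_row_eq_zero hrcs false)).coprod
        (zmodHom _ (mul_nsmul_sym_sub_sym_eq_zero hrcs))
    have hy : f (0, 1, 0) = r none - r (some 0) := by simp [hf, mirror]
    have hd : f (0, 0, 1) = s (false, 0) - s (true, 0) := by simp [hf]
    refine ⟨f, fun x => ?_, fun x => ?_, fun x => ?_⟩
    · rw [map_rowLabel, hp, hy, hd, ← eq_rowLabel hrcs]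
    · rw [map_colLabel, hp, hs, hy, hd, ← eq_colLabel hrcs]
    · rw [map_symLabel, hp, hs, hy, hd, ← eq_symLabel hrcs]
  · have hp : f ((1, 0), 0) = f' ((1, 0), 0) := by simpa [rowLabel] using hrow (some 0)
    have hs : f ((0, 1), 0) = f' ((0, 1), 0) := by simpa [symLabel_zero] using hsym (false, 0)
    have hy : f (0, 1, 0) = f' (0, 1, 0) := by
      have hnone := hrow none
      rwa [rowLabel, map_add, map_add, hp, add_right_inj] at hnone
    have hd : f (0, 0, 1) = f' (0, 0, 1) := by
      have htrue := hsym (true, 0)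
      rwa [symLabel_zero, cond_true, map_sub, map_sub, hs, sub_right_inj] at htrue
    ext ⟨⟨i, j⟩, x, z⟩
    obtain ⟨m, rfl⟩ := ZMod.intCast_surjective x
    obtain ⟨n, rfl⟩ := ZMod.intCast_surjective z
    have hgen : ((i, j), (m : ZMod (h + 2)), (n : ZMod ((h + 2) * (l + 2)))) =
        i • ((1, 0), 0) + j • ((0, 1), 0) + m • (0, 1, 0) + n • (0, 0, 1) := by simp
    simp only [hgen, map_add, map_zsmul, hp, hs, hy, hd]

theorem nonempty_canonicalGroup_equiv (h l : ℕ) : Nonempty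
    (CanonicalGroup (bitrade h l) ≃+ ZMod (h + 2) × ZMod ((h + 2) * (l + 2))) :=
  IsUniversalLabelling.nonempty_canonicalGroup_equiv (T := bitrade h l) isAddTorsion_of_finite
    (isUniversalLabelling h l)

end Necklace

/-! ### Products of two cyclic groups -/

theorem exists_canonicalGroup_equiv_zmod_prod_zmod_mul {g k : ℕ} (hg : 0 < g) (hk : 1 < k) :
    ∃ T : SphericalLatinBitrade, Nonempty (CanonicalGroup T ≃+ ZMod g × ZMod (g * k)) := by
  obtain rfl | hg' : g = 1 ∨ 1 < g := by lia
  · have : Fact (1 < k) := ⟨hk⟩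
    rw [one_mul]
    exact ⟨_, (TwoRow.nonempty_canonicalGroup_equiv k).map (·.trans AddEquiv.uniqueProd.symm)⟩
  · obtain ⟨h, rfl⟩ := Nat.exists_eq_add_of_le' hg'
    obtain ⟨l, rfl⟩ := Nat.exists_eq_add_of_le' hk
    exact ⟨_, Necklace.nonempty_canonicalGroup_equiv h l⟩

theorem exists_spherical_bitrade_canonical_group_rank_two_distinct_general
    (n m : ℕ) (hn : 0 < n) (hm : 0 < m) (hnm : n ≠ m) :
    ∃ T : SphericalLatinBitrade,
      Nonempty (CanonicalGroup T ≃+ (ZMod n × ZMod m)) := by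
  obtain ⟨g, a, b, hg, hab, rfl, rfl⟩ := Nat.exists_coprime' (Nat.gcd_pos_of_pos_left m hn)
  have hab_pos : 0 < a * b :=
    Nat.mul_pos (Nat.pos_of_mul_pos_right hn) (Nat.pos_of_mul_pos_right hm)
  have hab_ne : a * b ≠ 1 := fun h => hnm <| by
    rw [Nat.eq_one_of_mul_eq_one_right h, Nat.eq_one_of_mul_eq_one_left h]
  obtain ⟨T, ⟨e⟩⟩ := exists_canonicalGroup_equiv_zmod_prod_zmod_mul hg (by lia : 1 < a * b)
  obtain ⟨e'⟩ := nonempty_zmod_prod_mul_equiv g hab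
  rw [mul_comm a, mul_comm b]
  exact ⟨T, ⟨e.trans e'⟩⟩

/-- For integers `n, m ≥ 2` with `n ≠ m` there is a spherical latin bitrade whose
canonical group is isomorphic to `ℤ/n ⊕ ℤ/m`. -/
theorem exists_spherical_bitrade_canonical_group_rank_two_distinct
    (n m : ℕ) (hn : 2 ≤ n) (hm : 2 ≤ m) (hnm : n ≠ m) :
    ∃ T : SphericalLatinBitrade,
      Nonempty (CanonicalGroup T ≃+ (ZMod n × ZMod m)) := by
  exact exists_spherical_bitrade_canonical_group_rank_two_distinct_general n m (by lia) (by lia) hnm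
end
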